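/- In G(𝒜): if x ∈ G(𝒜) satisfies u_b(x,f₁) = e and u_b(x,f₂) = e, but x^{p₁} ≠ e and x^{p₂} ≠ e, then x = b. -/

import Mathlib

/-!
Common setup: an `L`-structure `𝒜` for a language whose symbols are enumerated
(`m`-th symbol, `m ≥ 1`, each a function or relation symbol of arity ≥ 1), and the
presented group `G(𝒜)` of Harrison-Trainor and Ho.
-/

/-- A first-order language with symbols enumerated by `ℕ` (the `m`-th symbol, for `m ≥ 1`,
is a function symbol if `isFunc m`, and a relation symbol otherwise, of arity `arity m ≥ 1`),
together with an interpretation on a domain `A`: `funcInterp m` interprets the `m`-th symbol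
when it is a function symbol, and `relInterp m` when it is a relation symbol. -/
structure IndexedStructure where
  A : Type
  arity : ℕ → ℕ
  arity_pos : ∀ m, 1 ≤ m → 1 ≤ arity m
  isFunc : ℕ → Prop
  funcInterp : ∀ m, (Fin (arity m) → A) → A
  relInterp : ∀ m, (Fin (arity m) → A) → Prop

/-- The generating set of `G(𝒜)`: one generator for each element of the domain `A`,
plus five further generators `b`, `c`, `d`, `f₁`, `f₂`. -/
inductive GenSym (A : Type) : Type
  | elt : A → GenSym A
  | b : GenSym A
  | c : GenSym A
  | d : GenSym A
  | f1 : GenSym A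
  | f2 : GenSym A

/-- `chainProd lo x y = x y^{(lo+1)²} x y^{(lo+2)²} ⋯ x y^{(lo+1000)²}`.
So `u_A = chainProd 0`, `u_b = chainProd 1000`, `u_c = chainProd 2000`,
`u_d = chainProd 3000`, and `v = chainProd 4000`. -/
def chainProd {G : Type*} [Group G] (lo : ℕ) (x y : G) : G :=
  ((List.range 1000).map fun k => x * y ^ ((lo + k + 1) ^ 2)).prod

/-- `wProd m xs y = x₁⋯xₙ y^{100m+1} x₁⋯xₙ y^{100m+2} ⋯ x₁⋯xₙ y^{100m+100}`,
i.e. the word `w_m(x₁,…,xₙ,y)`. -/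
def wProd {G : Type*} [Group G] (m : ℕ) {n : ℕ} (xs : Fin n → G) (y : G) : G :=
  ((List.range 100).map fun k => (List.ofFn xs).prod * y ^ (100 * m + k + 1)).prod

/-- The set of relators of the presentation of `G(𝒜)`. -/
def grpRels (S : IndexedStructure) (p₁ p₂ : ℕ) : Set (FreeGroup (GenSym S.A)) :=
  {FreeGroup.of GenSym.f1 ^ p₁, FreeGroup.of GenSym.f2 ^ p₂,
    chainProd 4000 (FreeGroup.of GenSym.f1) (FreeGroup.of GenSym.f2),
    chainProd 4000 (FreeGroup.of GenSym.f2) (FreeGroup.of GenSym.f1),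
    chainProd 1000 (FreeGroup.of GenSym.b) (FreeGroup.of GenSym.f1),
    chainProd 1000 (FreeGroup.of GenSym.b) (FreeGroup.of GenSym.f2),
    chainProd 2000 (FreeGroup.of GenSym.c) (FreeGroup.of GenSym.f1),
    chainProd 2000 (FreeGroup.of GenSym.c) (FreeGroup.of GenSym.f2),
    chainProd 3000 (FreeGroup.of GenSym.d) (FreeGroup.of GenSym.f1),
    chainProd 3000 (FreeGroup.of GenSym.d) (FreeGroup.of GenSym.f2)}
  ∪ {r | ∃ a : S.A,
      r = chainProd 0 (FreeGroup.of (GenSym.elt a)) (FreeGroup.of GenSym.c) ∨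
      r = chainProd 0 (FreeGroup.of (GenSym.elt a)) (FreeGroup.of GenSym.d)}
  ∪ {r | ∃ m, 1 ≤ m ∧ S.isFunc m ∧ ∃ as : Fin (S.arity m) → S.A,
      r = wProd m (fun i => FreeGroup.of (GenSym.elt (as i))) (FreeGroup.of GenSym.b) *
        (FreeGroup.of (GenSym.elt (S.funcInterp m as)))⁻¹}
  ∪ {r | ∃ m, 1 ≤ m ∧ ¬ S.isFunc m ∧ ∃ as : Fin (S.arity m) → S.A,
      S.relInterp m as ∧
      r = wProd m (fun i => FreeGroup.of (GenSym.elt (as i))) (FreeGroup.of GenSym.b)}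

/-- The group `G(𝒜)`, presented on the generators `GenSym A` with relators `grpRels`. -/
abbrev GA (S : IndexedStructure) (p₁ p₂ : ℕ) : Type :=
  PresentedGroup (grpRels S p₁ p₂)

/-- The image in `G(𝒜)` of a generator. -/
def gen (S : IndexedStructure) (p₁ p₂ : ℕ) (g : GenSym S.A) : GA S p₁ p₂ :=
  PresentedGroup.of g

/-! ## Part I: the tree metric on a free group -/

namespace SC

open FreeGroup

section lcp
variable {β : Type*}

open Classical in
/-- length of the longest common prefix -/
noncomputable def lcp : List β → List β → ℕ
  | a :: l, b :: l' => if a = b then lcp l l' + 1 else 0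
  | _, _ => 0

theorem lcp_ultra (x y z : List β) : min (lcp x y) (lcp y z) ≤ lcp x z := by
  induction x generalizing y z with
  | nil => simp [lcp]
  | cons a x ih =>
    cases y with
    | nil => simp [lcp]
    | cons b y =>
      cases z with
      | nil => simp [lcp]
      | cons c z =>
        have := ih y z
        simp only [lcp]
        split_ifs <;> simp_all

theorem lcp_spec (x y : List β) : ∃ l u v, x = l ++ u ∧ y = l ++ v ∧ l.length = lcp x y ∧
    ∀ a ∈ u.head?, ∀ b ∈ v.head?, a ≠ b := by
  induction x generalizing y with
  | nil => exact ⟨[], [], y, by simp [lcp]⟩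
  | cons a x ih =>
    cases y with
    | nil => exact ⟨[], a :: x, [], by simp [lcp]⟩
    | cons b y =>
      by_cases h : a = b
      · subst h
        obtain ⟨l, u, v, h1, h2, h3, h4⟩ := ih y
        refine ⟨a :: l, u, v, by simp [← h1], by simp [← h2], by simp [lcp, h3], h4⟩
      · exact ⟨[], a :: x, b :: y, by simp [lcp, h]⟩
end lcp

variable {α : Type*} [DecidableEq α]
set_option linter.unusedSectionVars false

/-- the tree metric -/
def dd (x y : FreeGroup α) : ℕ := (x⁻¹ * y).norm

theorem invRev_append (a b : List (α × Bool)) : invRev (a ++ b) = invRev b ++ invRev a := by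
  simp [invRev]

theorem norm_lcp (x y : FreeGroup α) :
    (x⁻¹ * y).norm + 2 * lcp x.toWord y.toWord = x.norm + y.norm := by
  obtain ⟨l, u, v, h1, h2, h3, h4⟩ := lcp_spec x.toWord y.toWord
  have hu : IsReduced u := (isReduced_toWord (x := x)).infix ⟨l, [], by simp [h1]⟩
  have hv : IsReduced v := (isReduced_toWord (x := y)).infix ⟨l, [], by simp [h2]⟩
  have key : IsReduced (invRev u ++ v) := by
    have hu' : IsReduced (invRev u) := by
      have : invRev u = (mk u)⁻¹.toWord := by
        rw [toWord_inv, toWord_mk, hu.reduce_eq]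
      rw [this]; exact isReduced_toWord
    refine List.isChain_append.2 ⟨hu', hv, ?_⟩
    intro a ha b hb hab
    have : (a.1, !a.2) ∈ u.head? := by
      cases u with
      | nil => simp [invRev] at ha
      | cons c u => simp [invRev] at ha; simp [← ha]
    have h5 := h4 _ this b hb
    by_contra h6
    apply h5
    ext
    · exact hab
    · simp; revert h6; cases a.2 <;> cases b.2 <;> simp
  have e : x⁻¹ * y = mk (invRev u ++ v) := by
    have hx : x = mk l * mk u := by rw [mul_mk, ← h1, mk_toWord]
    have hy : y = mk l * mk v := by rw [mul_mk, ← h2, mk_toWord]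
    rw [← mul_mk, ← inv_mk]
    conv_lhs => rw [hx, hy]
    group
  rw [← h3, e, FreeGroup.norm, toWord_mk, key.reduce_eq, FreeGroup.norm, FreeGroup.norm, h1, h2]
  simp only [List.length_append, invRev_length]
  omega

theorem dd_self (x : FreeGroup α) : dd x x = 0 := by simp [dd]
theorem dd_comm (x y : FreeGroup α) : dd x y = dd y x := by
  unfold dd; rw [← norm_inv_eq]; simp
theorem dd_eq_zero {x y : FreeGroup α} : dd x y = 0 ↔ x = y := by
  unfold dd; rw [FreeGroup.norm_eq_zero, inv_mul_eq_one]
theorem dd_mul_left (g x y : FreeGroup α) : dd (g * x) (g * y) = dd x y := by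
  unfold dd; congr 1; group
theorem dd_one_left (x : FreeGroup α) : dd 1 x = x.norm := by simp [dd]

theorem dd_lcp (w x y : FreeGroup α) :
    dd x y + 2 * lcp (w⁻¹ * x).toWord (w⁻¹ * y).toWord = dd w x + dd w y := by
  rw [← dd_mul_left w⁻¹ x y]; exact norm_lcp _ _

theorem four (x y z w : FreeGroup α) :
    dd x z + dd w y ≤ dd x y + dd w z ∨ dd x z + dd w y ≤ dd y z + dd w x := by
  have h1 := dd_lcp w x z
  have h2 := dd_lcp w x y
  have h3 := dd_lcp w y z
  have := lcp_ultra (w⁻¹ * x).toWord (w⁻¹ * y).toWord (w⁻¹ * z).toWord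
  rw [min_le_iff] at this
  omega

theorem dd_tri (x y z : FreeGroup α) : dd x z ≤ dd x y + dd y z := by
  have : x⁻¹ * z = (x⁻¹ * y) * (y⁻¹ * z) := by group
  unfold dd; rw [this]; exact norm_mul_le _ _

theorem dd_interp (x y : FreeGroup α) (k : ℕ) (hk : k ≤ dd x y) :
    ∃ m, dd x m = k ∧ dd m y + k = dd x y := by
  have hr := isReduced_toWord (x := x⁻¹ * y)
  set w := (x⁻¹ * y).toWord with hw
  have hm : mk (w.take k) * mk (w.drop k) = x⁻¹ * y := by
    rw [mul_mk, List.take_append_drop, hw, mk_toWord]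
  have h1 : (mk (w.take k)).norm = k := by
    rw [FreeGroup.norm, toWord_mk, (hr.infix (List.take_prefix _ _).isInfix).reduce_eq, List.length_take]
    exact min_eq_left hk
  have h2 : (mk (w.drop k)).norm = dd x y - k := by
    rw [FreeGroup.norm, toWord_mk, (hr.infix (List.drop_suffix _ _).isInfix).reduce_eq, List.length_drop]
    rfl
  refine ⟨x * mk (w.take k), by simp [dd, h1], ?_⟩
  have : (x * mk (w.take k))⁻¹ * y = mk (w.drop k) := by
    rw [mul_inv_rev, mul_assoc, ← hm]; group
  rw [dd, this, h2]; omega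

/-- `m` lies on the geodesic from `x` to `y` -/
def btw (x m y : FreeGroup α) : Prop := dd x m + dd m y = dd x y

theorem btw.symm {x m y : FreeGroup α} (h : btw x m y) : btw y m x := by
  unfold btw at *; rw [dd_comm y m, dd_comm m x, dd_comm y x]; omega
theorem btw_left (x y : FreeGroup α) : btw x x y := by simp [btw, dd_self]
theorem btw_right (x y : FreeGroup α) : btw x y y := by simp [btw, dd_self]
theorem btw_mul (g : FreeGroup α) {x m y : FreeGroup α} : btw (g * x) (g * m) (g * y) ↔ btw x m y := by
  simp [btw, dd_mul_left]

theorem btw_split {x m y : FreeGroup α} (h : btw x m y) (u : FreeGroup α) : btw x m u ∨ btw u m y := by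
  unfold btw at *
  have := four x m y u
  have := dd_tri x m u
  have := dd_tri u m y
  have := dd_tri x u y
  have := dd_comm m u
  have := dd_comm x u
  have := four x u y m
  omega

theorem btw_order {x y g u : FreeGroup α} (h1 : btw x y u) (h2 : btw x g u) (h : dd x y ≤ dd x g) :
    btw x y g ∧ btw y g u := by
  unfold btw at *
  have := four x y u g
  have := dd_tri x y g
  have := dd_tri y g u
  have := dd_comm g y
  have := dd_comm x g
  omega

theorem median (x y z : FreeGroup α) : ∃ m, btw x m y ∧ btw y m z ∧ btw x m z := by
  have h := dd_lcp x y z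
  have t1 := dd_tri x z y
  have t2 := dd_tri x y z
  obtain ⟨m, hm1, hm2⟩ := dd_interp x y (lcp (x⁻¹ * y).toWord (x⁻¹ * z).toWord)
    (by rw [dd_comm z y] at t1; omega)
  refine ⟨m, ?_⟩
  unfold btw
  have := four z x m y
  have := four x z y m
  have := dd_tri x m z
  have := dd_tri y m z
  simp only [dd_comm z, dd_comm y m, dd_comm y x, dd_comm m x] at *
  omega

/-- convex subsets -/
def Cvx (S : Set (FreeGroup α)) : Prop := ∀ x ∈ S, ∀ y ∈ S, ∀ m, btw x m y → m ∈ S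

/-- `g` is the gate of `x` on `S` -/
def IsGate (S : Set (FreeGroup α)) (x g : FreeGroup α) : Prop := g ∈ S ∧ ∀ w ∈ S, btw x g w

theorem isGate_of_near {S : Set (FreeGroup α)} (hS : Cvx S) {x g : FreeGroup α} (hg : g ∈ S)
    (h : ∀ w ∈ S, dd x g ≤ dd x w) : IsGate S x g := by
  refine ⟨hg, fun w hw => ?_⟩
  obtain ⟨m, h1, h2, h3⟩ := median x g w
  have hm := h m (hS _ hg _ hw _ h2)
  have : m = g := by rw [← dd_eq_zero]; unfold btw at h1; omega
  rwa [this] at h3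

theorem exists_gate {S : Set (FreeGroup α)} (hS : Cvx S) (hne : S.Nonempty) (x : FreeGroup α) :
    ∃ g, IsGate S x g := by
  classical
  have : ∃ n, ∃ g ∈ S, dd x g = n := by obtain ⟨g, hg⟩ := hne; exact ⟨_, g, hg, rfl⟩
  obtain ⟨g, hg, h⟩ := Nat.find_spec this
  exact ⟨g, isGate_of_near hS hg fun w hw => h ▸ Nat.find_min' this ⟨w, hw, rfl⟩⟩

theorem IsGate.unique {S : Set (FreeGroup α)} {x g g' : FreeGroup α} (h : IsGate S x g)
    (h' : IsGate S x g') : g = g' := by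
  have a := h.2 _ h'.1
  have b := h'.2 _ h.1
  unfold btw at a b
  rw [← dd_eq_zero]; have := dd_comm g g'; omega

theorem isGate_self {S : Set (FreeGroup α)} {x : FreeGroup α} (h : x ∈ S) : IsGate S x x :=
  ⟨h, fun _ _ => btw_left _ _⟩

theorem gate_gate {S : Set (FreeGroup α)} {x w g k : FreeGroup α} (h : IsGate S x g)
    (h' : IsGate S w k) (hne : g ≠ k) : dd x w = dd x g + dd g k + dd k w := by
  have a := h.2 _ h'.1
  have b := h'.2 _ h.1
  have c : dd g k ≠ 0 := fun h => hne (dd_eq_zero.1 h)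
  have := four x w k g
  have := four w x g k
  have := dd_tri x g w
  have := dd_tri g k w
  unfold btw at a b
  simp only [dd_comm k g, dd_comm w g, dd_comm w k, dd_comm g x, dd_comm k x, dd_comm w x] at *
  omega

theorem near_pair {W L : Set (FreeGroup α)} (hW : Cvx W) (hL : Cvx L) {z y : FreeGroup α}
    (hz : z ∈ W) (hy : y ∈ L) (hzy : z ≠ y) (h : ∀ w ∈ W, ∀ l ∈ L, dd z y ≤ dd w l)
    {w l : FreeGroup α} (hw : w ∈ W) (hl : l ∈ L) : dd w l = dd w z + dd z y + dd y l := by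
  have a := (isGate_of_near hW (x := y) hz
    (fun w hw => by rw [dd_comm y z, dd_comm y w]; exact h w hw y hy)).2 w hw
  have b := (isGate_of_near hL (x := z) hy (fun l hl => h z hz l hl)).2 l hl
  have c : dd z y ≠ 0 := fun h => hzy (dd_eq_zero.1 h)
  have := four y z w l
  have := dd_tri w z l
  have := four y l w z
  unfold btw at a b
  simp only [dd_comm l, dd_comm y z, dd_comm y w, dd_comm w z] at *
  omega

end SC

/-! ## Part II: windmills -/

namespace SC
open FreeGroup
variable {α : Type*} [DecidableEq α]
set_option linter.unusedSectionVars false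

/-- a line in the tree, with a translation `c` of length `n` -/
structure Line (α : Type*) where
  S : Set (FreeGroup α)
  c : FreeGroup α
  n : ℕ

/-- translate of a line -/
def Line.tr (g : FreeGroup α) (l : Line α) : Line α :=
  ⟨{x | g⁻¹ * x ∈ l.S}, g * l.c * g⁻¹, l.n⟩

/-- a translation invariant system of lines with small cancellation constant `1/20` -/
structure LineSys (LL : Set (Line α)) : Prop where
  conv : ∀ l ∈ LL, Cvx l.S
  ne : ∀ l ∈ LL, l.S.Nonempty
  npos : ∀ l ∈ LL, 0 < l.n
  act : ∀ l ∈ LL, ∀ y ∈ l.S, ∀ k : ℤ, l.c ^ k * y ∈ l.S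
  len : ∀ l ∈ LL, ∀ y ∈ l.S, ∀ k : ℤ, dd y (l.c ^ k * y) = k.natAbs * l.n
  small : ∀ l ∈ LL, ∀ l' ∈ LL, ∀ x ∈ l.S, ∀ y ∈ l.S, x ∈ l'.S → y ∈ l'.S →
    l.n ≤ 20 * dd x y → l.S = l'.S ∧ l.n = l'.n ∧ (l'.c = l.c ∨ l'.c = l.c⁻¹)
  trans : ∀ l ∈ LL, ∀ g, l.tr g ∈ LL
  edge : ∀ x : FreeGroup α, ∀ a, ∃ l ∈ LL, x ∈ l.S ∧ x * of a ∈ l.S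

/-- the conclusion of Greendlinger's lemma for `h` -/
def Gr (LL : Set (Line α)) (h : FreeGroup α) : Prop :=
  ∃ l ∈ LL, ∃ e ∈ l.S, ∃ e' ∈ l.S, dd 1 e + dd e e' + dd e' h = dd 1 h ∧ 17 * l.n ≤ 20 * dd e e'

/-- windmills -/
structure Mill (LL : Set (Line α)) (W : Set (FreeGroup α)) (H : Subgroup (FreeGroup α)) : Prop where
  conv : Cvx W
  one : (1 : FreeGroup α) ∈ W
  inv : ∀ h ∈ H, ∀ x ∈ W, h * x ∈ W
  sm : ∀ l ∈ LL, (l.S ⊆ W ∧ l.c ∈ H) ∨ ∀ x ∈ l.S, ∀ y ∈ l.S, x ∈ W → y ∈ W → 20 * dd x y ≤ 2 * l.n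
  gr : ∀ h ∈ H, h ≠ 1 → Gr LL h

theorem mem_tr {g x : FreeGroup α} {l : Line α} : x ∈ (l.tr g).S ↔ g⁻¹ * x ∈ l.S := Iff.rfl
theorem mul_mem_tr {g x : FreeGroup α} {l : Line α} : g * x ∈ (l.tr g).S ↔ x ∈ l.S := by
  rw [mem_tr]; simp

section step
variable {LL : Set (Line α)} {W : Set (FreeGroup α)} {H : Subgroup (FreeGroup α)}

/-- lines which touch the windmill -/
def Meets (W : Set (FreeGroup α)) (l : Line α) : Prop := ∃ x ∈ l.S, x ∈ W

/-- the shadow of a line -/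
def Sh (W : Set (FreeGroup α)) (l : Line α) (x : FreeGroup α) : Prop :=
  ∃ y, IsGate l.S x y ∧ ∀ u ∈ l.S, u ∈ W → l.n < 20 * dd y u

/-- new lines -/
structure New (LL : Set (Line α)) (W : Set (FreeGroup α)) (l : Line α) : Prop where
  mem : l ∈ LL
  meets : Meets W l
  sm : ∀ x ∈ l.S, ∀ y ∈ l.S, x ∈ W → y ∈ W → 20 * dd x y ≤ 2 * l.n

theorem IsGate.tr {l : Line α} {x y : FreeGroup α} (h : IsGate l.S x y) (g : FreeGroup α) :
    IsGate (l.tr g).S (g * x) (g * y) := by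
  refine ⟨mul_mem_tr.2 h.1, fun w hw => ?_⟩
  have := h.2 _ (mem_tr.1 hw)
  rw [← btw_mul g] at this
  simpa using this

theorem Sh.tr {l : Line α} {x : FreeGroup α} (h : Sh W l x) (hM : Mill LL W H) {g : FreeGroup α}
    (hg : g ∈ H) : Sh W (l.tr g) (g * x) := by
  obtain ⟨y, hy, h⟩ := h
  refine ⟨g * y, hy.tr g, fun u hu hw => ?_⟩
  have := h _ hu (hM.inv _ (H.inv_mem hg) _ hw)
  rw [← dd_mul_left g] at this
  simpa [Line.tr] using this

theorem tr_inv (l : Line α) (g : FreeGroup α) : (l.tr g).tr g⁻¹ = l := by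
  cases l; simp [Line.tr]; group

theorem New.tr (hL : LineSys LL) {l : Line α} (h : New LL W l) (hM : Mill LL W H) {g : FreeGroup α}
    (hg : g ∈ H) : New LL W (l.tr g) := by
  refine ⟨hL.trans _ h.mem _, ?_, ?_⟩
  · obtain ⟨x, hx, hw⟩ := h.meets
    exact ⟨g * x, mul_mem_tr.2 hx, hM.inv _ hg _ hw⟩
  · intro x hx y hy hxw hyw
    have := h.sm _ hx _ hy (hM.inv _ (H.inv_mem hg) _ hxw) (hM.inv _ (H.inv_mem hg) _ hyw)
    rwa [dd_mul_left] at this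

/-- the gate on `W` of a point in the shadow lies on the line -/
theorem sh_gate (hL : LineSys LL) (hM : Mill LL W H) {l : Line α} (hl : l ∈ LL) (hm : Meets W l)
    {x y g : FreeGroup α} (hy : IsGate l.S x y) (h : ∀ u ∈ l.S, u ∈ W → l.n < 20 * dd y u)
    (hg : IsGate W x g) : g ∈ l.S ∧ btw x y g := by
  obtain ⟨u, hu, huw⟩ := hm
  have h1 := hy.2 u hu
  have h2 := hg.2 u huw
  rcases le_total (dd x y) (dd x g) with h3 | h3
  · have := btw_order h1 h2 h3
    exact ⟨hL.conv l hl _ hy.1 _ hu _ this.2, this.1⟩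
  · have := btw_order h2 h1 h3
    have hw := hM.conv _ hg.1 _ huw _ this.2
    have := h y hy.1 hw
    rw [dd_self] at this; omega

theorem disj (hL : LineSys LL) (hM : Mill LL W H) {l l' : Line α} (hl : l ∈ LL) (hm : Meets W l)
    (hl' : l' ∈ LL) (hm' : Meets W l') {x : FreeGroup α} (h : Sh W l x) (h' : Sh W l' x) :
    l.S = l'.S ∧ l.n = l'.n ∧ (l'.c = l.c ∨ l'.c = l.c⁻¹) := by
  obtain ⟨y, hy, h⟩ := h
  obtain ⟨y', hy', h'⟩ := h'
  obtain ⟨g, hg⟩ := exists_gate hM.conv ⟨_, hM.one⟩ x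
  obtain ⟨hgl, hb⟩ := sh_gate hL hM hl hm hy h hg
  obtain ⟨hgl', hb'⟩ := sh_gate hL hM hl' hm' hy' h' hg
  rcases le_total (dd x y) (dd x y') with h3 | h3
  · have := (btw_order hb hb' h3).2
    obtain ⟨a, b, c⟩ := hL.small l' hl' l hl y' hy'.1 g hgl'
      (hL.conv l hl _ hy.1 _ hgl _ this) hgl (h' g hgl' hg.1).le
    refine ⟨a.symm, b.symm, ?_⟩
    rcases c with c | c <;> simp [c]
  · have := (btw_order hb' hb h3).2
    exact hL.small l hl l' hl' y hy.1 g hgl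
      (hL.conv l' hl' _ hy'.1 _ hgl' _ this) hgl' (h g hgl hg.1).le

theorem not_sh_of_mem (hM : Mill LL W H) {l : Line α} (hm : Meets W l)
    {x : FreeGroup α} (hx : x ∈ W) : ¬ Sh W l x := by
  rintro ⟨y, hy, h⟩
  obtain ⟨u, hu, huw⟩ := hm
  have hw := hM.conv _ hx _ huw _ (hy.2 u hu)
  have := h y hy.1 hw
  rw [dd_self] at this; omega

theorem sh_line (hL : LineSys LL) (hM : Mill LL W H) {l l' : Line α} (hl : l ∈ LL) (hm : Meets W l)
    (hl' : l' ∈ LL) (hm' : Meets W l') {x : FreeGroup α} (h : Sh W l x) (h' : x ∈ l'.S) :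
    l.S = l'.S := by
  obtain ⟨y, hy, h⟩ := h
  obtain ⟨u, hu, huw⟩ := hm'
  obtain ⟨g, hg⟩ := exists_gate hM.conv ⟨_, hM.one⟩ x
  obtain ⟨hgl, hb⟩ := sh_gate hL hM hl hm hy h hg
  have hg' : g ∈ l'.S := hL.conv l' hl' _ h' _ hu _ (hg.2 u huw)
  exact (hL.small l hl l' hl' y hy.1 g hgl (hL.conv l' hl' _ h' _ hg' _ hb) hg' (h g hgl hg.1).le).1

theorem gate_c (hL : LineSys LL) {l : Line α} (hl : l ∈ LL) {q e : FreeGroup α} (he : IsGate l.S q e)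
    (k : ℤ) : IsGate l.S (l.c ^ k * q) (l.c ^ k * e) := by
  refine ⟨hL.act l hl _ he.1 k, fun w hw => ?_⟩
  have := he.2 _ (hL.act l hl _ hw (-k))
  rw [← btw_mul (l.c ^ k)] at this
  simpa using this

/-- quantitative version of the main estimate -/
theorem step_est (hL : LineSys LL) {l : Line α} (h : New LL W l) {k : ℤ}
    (hk : k ≠ 0) {q : FreeGroup α} (hq : ¬ Sh W l q) :
    ∃ e, IsGate l.S q e ∧ IsGate l.S (l.c ^ k * q) (l.c ^ k * e) ∧
      ∀ u ∈ l.S, u ∈ W → 20 * dd e u ≤ 3 * l.n ∧ 17 * l.n ≤ 20 * dd (l.c ^ k * e) u := by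
  obtain ⟨e, he⟩ := exists_gate (hL.conv l h.mem) (hL.ne l h.mem) q
  refine ⟨e, he, gate_c hL h.mem he k, fun u hu huw => ?_⟩
  have : ∃ v ∈ l.S, v ∈ W ∧ 20 * dd e v ≤ l.n := by
    by_contra hc
    push Not at hc
    exact hq ⟨e, he, hc⟩
  obtain ⟨v, hv, hvw, h1⟩ := this
  have h2 := h.sm v hv u hu hvw huw
  have h3 := hL.len l h.mem e he.1 k
  have h4 : l.n ≤ k.natAbs * l.n := Nat.le_mul_of_pos_left _ (by omega)
  have := dd_tri e v u
  have := dd_tri e u (l.c ^ k * e)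
  have := dd_comm u (l.c ^ k * e)
  omega

theorem step_sh (hL : LineSys LL) {l : Line α} (h : New LL W l) {k : ℤ}
    (hk : k ≠ 0) {q : FreeGroup α} (hq : ¬ Sh W l q) : Sh W l (l.c ^ k * q) := by
  obtain ⟨e, -, he', h2⟩ := step_est hL h hk hq
  refine ⟨_, he', fun u hu huw => ?_⟩
  have := h2 u hu huw
  have := hL.npos l h.mem
  omega

/-- points obtained from `B` by leaping outwards -/
inductive Good (LL : Set (Line α)) (W B : Set (FreeGroup α)) : FreeGroup α → Prop
  | base {p} : p ∈ B → Good LL W B p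
  | step {l : Line α} {k : ℤ} {q} : New LL W l → k ≠ 0 → Good LL W B q → ¬ Sh W l q →
      Good LL W B (l.c ^ k * q)

theorem Sh_congr {l l' : Line α} (h1 : l.S = l'.S) (h2 : l.n = l'.n) {x : FreeGroup α} :
    Sh W l x ↔ Sh W l' x := by unfold Sh; rw [h1, h2]

theorem good_c (hL : LineSys LL) (hM : Mill LL W H) {B : Set (FreeGroup α)}
    (hB : ∀ l, New LL W l → ∀ p ∈ B, Sh W l p → ∀ j : ℤ, l.c ^ j * p ∈ B)
    {p : FreeGroup α} (hp : Good LL W B p) {l : Line α} (hl : New LL W l) (j : ℤ) :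
    Good LL W B (l.c ^ j * p) := by
  by_cases hs : Sh W l p
  · cases hp with
    | base h => exact .base (hB l hl _ h hs j)
    | @step l' k q hl' hk hq hq' =>
      obtain ⟨h1, h2, h3⟩ := disj hL hM hl'.mem hl'.meets hl.mem hl.meets (step_sh hL hl' hk hq') hs
      have : ∃ i : ℤ, l.c ^ j * (l'.c ^ k * q) = l'.c ^ i * q := by
        rcases h3 with h3 | h3
        · exact ⟨j + k, by rw [h3, zpow_add, mul_assoc]⟩
        · exact ⟨-j + k, by rw [h3, zpow_add, mul_assoc, inv_zpow, zpow_neg]⟩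
      obtain ⟨i, hi⟩ := this
      rw [hi]
      by_cases h0 : i = 0
      · simpa [h0] using hq
      · exact .step hl' h0 hq hq'
  · by_cases h0 : j = 0
    · simpa [h0] using hp
    · exact .step hl h0 hp hs

theorem good_H (hL : LineSys LL) (hM : Mill LL W H) {B : Set (FreeGroup α)}
    (hB : ∀ h ∈ H, ∀ p ∈ B, h * p ∈ B)
    {p : FreeGroup α} (hp : Good LL W B p) {h : FreeGroup α} (hh : h ∈ H) :
    Good LL W B (h * p) := by
  induction hp with
  | base hp => exact .base (hB h hh _ hp)
  | @step l k q hl hk hq hq' ih =>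
    have : h * (l.c ^ k * q) = (l.tr h).c ^ k * (h * q) := by
      simp only [Line.tr, conj_zpow]; group
    rw [this]
    refine .step (hl.tr hL hM hh) hk ih fun hs => hq' ?_
    have := hs.tr hM (H.inv_mem hh)
    rw [tr_inv] at this
    simpa using this

/-- the enlarged group -/
def H' (LL : Set (Line α)) (W : Set (FreeGroup α)) (H : Subgroup (FreeGroup α)) :
    Subgroup (FreeGroup α) :=
  Subgroup.closure ((H : Set (FreeGroup α)) ∪ {g | ∃ l ∈ LL, Meets W l ∧ l.c = g})

/-- the windmill together with the lines touching it -/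
def Y (LL : Set (Line α)) (W : Set (FreeGroup α)) : Set (FreeGroup α) :=
  {x | x ∈ W ∨ ∃ l ∈ LL, Meets W l ∧ x ∈ l.S}

/-- the enlarged windmill -/
def W' (LL : Set (Line α)) (W : Set (FreeGroup α)) (H : Subgroup (FreeGroup α)) :
    Set (FreeGroup α) :=
  {x | ∃ h ∈ H' LL W H, ∃ y ∈ Y LL W, x = h * y}

theorem good_H' (hL : LineSys LL) (hM : Mill LL W H) {B : Set (FreeGroup α)}
    (hB1 : ∀ l, New LL W l → ∀ p ∈ B, Sh W l p → ∀ j : ℤ, l.c ^ j * p ∈ B)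
    (hB2 : ∀ h ∈ H, ∀ p ∈ B, h * p ∈ B)
    {h : FreeGroup α} (hh : h ∈ H' LL W H) :
    ∀ p, Good LL W B p → Good LL W B (h * p) ∧ Good LL W B (h⁻¹ * p) := by
  unfold H' at hh
  induction hh using Subgroup.closure_induction with
  | mem x hx =>
    intro p hp
    have key : x ∈ H → Good LL W B (x * p) ∧ Good LL W B (x⁻¹ * p) := fun hx =>
      ⟨good_H hL hM hB2 hp hx, good_H hL hM hB2 hp (H.inv_mem hx)⟩
    rcases hx with hx | ⟨l, hl, hm, rfl⟩
    · exact key hx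
    · rcases hM.sm l hl with h | h
      · exact key h.2
      · have hn : New LL W l := ⟨hl, hm, h⟩
        constructor
        · simpa using good_c hL hM hB1 hp hn 1
        · simpa using good_c hL hM hB1 hp hn (-1)
  | one => intro p hp; simpa using hp
  | mul x y _ _ hx hy =>
    intro p hp
    refine ⟨?_, ?_⟩
    · rw [mul_assoc]; exact (hx _ (hy _ hp).1).1
    · rw [mul_inv_rev, mul_assoc]; exact (hy _ (hx _ hp).2).2
  | inv x _ hx => intro p hp; simpa using (hx p hp).symm

theorem subset_W' : W ⊆ W' LL W H := fun x hx => ⟨1, one_mem _, x, .inl hx, by simp⟩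
theorem Y_subset_W' : Y LL W ⊆ W' LL W H := fun x hx => ⟨1, one_mem _, x, hx, by simp⟩
theorem W'_inv {h x : FreeGroup α} (hh : h ∈ H' LL W H) (hx : x ∈ W' LL W H) : h * x ∈ W' LL W H := by
  obtain ⟨g, hg, y, hy, rfl⟩ := hx
  exact ⟨h * g, mul_mem hh hg, y, hy, by rw [mul_assoc]⟩
theorem H_le_H' : H ≤ H' LL W H := fun _ h => Subgroup.subset_closure (.inl h)
theorem c_mem_H' {l : Line α} (hl : l ∈ LL) (hm : Meets W l) : l.c ∈ H' LL W H :=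
  Subgroup.subset_closure (.inr ⟨l, hl, hm, rfl⟩)

/-- the geodesic from `x` to `y` is contained in `V` -/
def Seg (V : Set (FreeGroup α)) (x y : FreeGroup α) : Prop := ∀ m, btw x m y → m ∈ V

theorem Seg.symm {V : Set (FreeGroup α)} {x y : FreeGroup α} (h : Seg V x y) : Seg V y x :=
  fun m hm => h m hm.symm
theorem Seg.trans {V : Set (FreeGroup α)} {x y z : FreeGroup α} (h : Seg V x y) (h' : Seg V y z) :
    Seg V x z := fun m hm => (btw_split hm y).elim (h m) (h' m)
theorem Seg.mul {h x y : FreeGroup α} (hh : h ∈ H' LL W H) (hs : Seg (W' LL W H) x y) :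
    Seg (W' LL W H) (h * x) (h * y) := by
  intro m hm
  have : btw x (h⁻¹ * m) y := by rw [← btw_mul h]; simpa using hm
  simpa using W'_inv hh (hs _ this)

theorem W'_conv (hL : LineSys LL) (hM : Mill LL W H) : Cvx (W' LL W H) := by
  have hW : ∀ x ∈ W, ∀ y ∈ W, Seg (W' LL W H) x y := fun x hx y hy m hm =>
    subset_W' (hM.conv x hx y hy m hm)
  have hS : ∀ l ∈ LL, Meets W l → ∀ x ∈ l.S, ∀ y ∈ l.S, Seg (W' LL W H) x y :=
    fun l hl hm x hx y hy m h => Y_subset_W' (.inr ⟨l, hl, hm, hL.conv l hl x hx y hy m h⟩)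
  have hQ : ∀ h ∈ H' LL W H, Seg (W' LL W H) 1 h := by
    intro h hh
    have hh0 := hh
    unfold H' at hh
    induction hh using Subgroup.closure_induction with
    | mem x hx =>
      rcases hx with hx | ⟨l, hl, hm, rfl⟩
      · exact hW _ hM.one _ (by simpa using hM.inv x hx 1 hM.one)
      · have hm0 := hm
        obtain ⟨u, hu, huw⟩ := hm
        have h1 := hW _ hM.one _ huw
        have h2 := hS l hl hm0 u hu (l.c * u) (by simpa using hL.act l hl u hu 1)
        have h3 := (h1.symm).mul (c_mem_H' (H := H) hl hm0)
        rw [mul_one] at h3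
        exact (h1.trans h2).trans h3
    | one => exact hW _ hM.one _ hM.one
    | mul x y hx' hy' hx hy =>
      have h3 := (hy hy').mul (h := x) hx'
      rw [mul_one] at h3
      exact (hx hx').trans h3
    | inv x hx' hx =>
      have h3 := ((hx hx').mul (h := x⁻¹) (inv_mem hx'))
      rw [mul_one, inv_mul_cancel] at h3
      exact h3.symm
  have hY : ∀ x ∈ Y LL W, Seg (W' LL W H) 1 x := by
    rintro x (hx | ⟨l, hl, hm, hx⟩)
    · exact hW _ hM.one _ hx
    · have hm0 := hm
      obtain ⟨u, hu, huw⟩ := hm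
      exact (hW _ hM.one _ huw).trans (hS l hl hm0 u hu x hx)
  have hA : ∀ x ∈ W' LL W H, Seg (W' LL W H) 1 x := by
    rintro x ⟨h, hh, y, hy, rfl⟩
    have h3 := (hY y hy).mul hh
    rw [mul_one] at h3
    exact (hQ h hh).trans h3
  intro x hx y hy
  exact (hA x hx).symm.trans (hA y hy)

theorem mill_sm (hL : LineSys LL) (hM : Mill LL W H) (l : Line α) (hl : l ∈ LL) :
    (l.S ⊆ W' LL W H ∧ l.c ∈ H' LL W H) ∨
      ∀ x ∈ l.S, ∀ y ∈ l.S, x ∈ W' LL W H → y ∈ W' LL W H → 20 * dd x y ≤ 2 * l.n := by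
  by_cases hmeet : ∃ h ∈ H' LL W H, Meets W (l.tr h)
  · left
    obtain ⟨h, hh, hm⟩ := hmeet
    have h1 : (l.tr h).S ⊆ W' LL W H := fun x hx => Y_subset_W' (.inr ⟨_, hL.trans l hl h, hm, hx⟩)
    have h2 := c_mem_H' (H := H) (hL.trans l hl h) hm
    refine ⟨fun x hx => ?_, ?_⟩
    · have := W'_inv (inv_mem hh) (h1 (mul_mem_tr.2 hx))
      simpa using this
    · have := mul_mem (mul_mem (inv_mem hh) h2) hh
      simp only [Line.tr] at this
      convert this using 1; group
  · right
    push Not at hmeet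
    -- choose the translate minimising the distance to `W`
    have hex : ∃ n, ∃ h ∈ H' LL W H, ∃ w ∈ W, ∃ y ∈ (l.tr h).S, dd w y = n := by
      obtain ⟨y, hy⟩ := hL.ne l hl
      exact ⟨_, 1, one_mem _, 1, hM.one, y, by simpa [mem_tr] using hy, rfl⟩
    classical
    obtain ⟨h, hh, z, hz, y, hy, hd⟩ := Nat.find_spec hex
    have hmin : ∀ g ∈ H' LL W H, ∀ w ∈ W, ∀ l' ∈ (l.tr h).S, dd z y ≤ dd (g * w) l' := by
      intro g hg w hw l' hl'
      rw [hd]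
      refine Nat.find_min' hex ⟨g⁻¹ * h, mul_mem (inv_mem hg) hh, w, hw, g⁻¹ * l', ?_, ?_⟩
      · rw [mem_tr] at hl' ⊢; convert hl' using 1; group
      · rw [← dd_mul_left g]; simp
    set L := l.tr h with hLdef
    have hLL : L ∈ LL := hL.trans l hl h
    have hnm : ¬ Meets W L := hmeet h hh
    have hnp : 0 < L.n := hL.npos L hLL
    have hzy : z ≠ y := by rintro rfl; exact hnm ⟨z, hy, hz⟩
    have hpair : ∀ w ∈ W, ∀ l' ∈ L.S, dd w l' = dd w z + dd z y + dd y l' := fun w hw l' hl' =>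
      near_pair hM.conv (hL.conv L hLL) hz hy hzy
        (fun w hw l' hl' => by simpa using hmin 1 (one_mem _) w hw l' hl') hw hl'
    have key : ∀ p ∈ L.S, Good LL W (Y LL W) p → 20 * dd y p < L.n := by
      intro p hp hg
      cases hg with
      | base hb =>
        rcases hb with hb | ⟨l2, hl2, hm2, hp2⟩
        · exact absurd ⟨p, hp, hb⟩ hnm
        · by_contra hc
          push Not at hc
          have hm20 := hm2
          obtain ⟨u, hu, huw⟩ := hm2
          have hy2 : y ∈ l2.S := by
            refine hL.conv l2 hl2 u hu p hp2 y ?_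
            have h1 := hpair u huw p hp
            have h2 := hpair u huw y hy
            rw [dd_self] at h2
            unfold btw; omega
          have := (hL.small L hLL l2 hl2 y hy p hp hy2 hp2 hc).1
          exact hnm ⟨u, by rw [this]; exact hu, huw⟩
      | @step l1 k q hn hk hq hq' =>
        exfalso
        obtain ⟨e, he, he', hest⟩ := step_est hL hn hk hq'
        set e' := l1.c ^ k * e with he'def
        set p := l1.c ^ k * q with hpdef
        have hn1 := hL.npos l1 hn.mem
        have hzg : IsGate W p z := by
          refine ⟨hz, fun w hw => ?_⟩
          have h1 := hpair w hw p hp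
          have h2 := hpair z hz p hp
          rw [dd_self] at h2
          refine btw.symm ?_
          unfold btw; omega
        obtain ⟨hzl, hb⟩ := sh_gate hL hM hn.mem hn.meets he' (fun u hu huw => by
          have := (hest u hu huw).2; omega) hzg
        have hpz : btw p y z := by
          refine btw.symm ?_
          have h2 := hpair z hz p hp
          rw [dd_self] at h2
          unfold btw; omega
        obtain ⟨hq1, hq2⟩ := hest z hzl hz
        have hck : l1.c ^ k ∈ H' LL W H := zpow_mem (c_mem_H' hn.mem hn.meets) k
        have hm := hmin _ hck z hz y hy
        have h5 : dd (l1.c ^ k * z) e' = dd e z := by rw [he'def, dd_mul_left, dd_comm]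
        have h6 := dd_tri (l1.c ^ k * z) e' y
        rcases le_total (dd p e') (dd p y) with h3 | h3
        · obtain ⟨a, b⟩ := btw_order hb hpz h3
          have he'L : e' ∈ L.S := hL.conv L hLL _ hp _ hy _ a
          have hyl1 : y ∈ l1.S := hL.conv l1 hn.mem _ he'.1 _ hzl _ b
          have : 20 * dd e' y < l1.n := by
            by_contra hc
            push Not at hc
            have := (hL.small l1 hn.mem L hLL e' he'.1 y hyl1 he'L hy hc).1
            obtain ⟨u, hu, huw⟩ := hn.meets
            exact hnm ⟨u, by rw [← this]; exact hu, huw⟩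
          unfold btw at b
          have := dd_comm y z
          omega
        · obtain ⟨a, b⟩ := btw_order hpz hb h3
          unfold btw at b
          have := dd_comm y z
          have := dd_comm y e'
          omega
    have hgood : ∀ p ∈ W' LL W H, Good LL W (Y LL W) p := by
      rintro p ⟨g, hg, y, hy, rfl⟩
      refine (good_H' hL hM ?_ ?_ hg y (.base hy)).1
      · rintro l1 hn p (hp | ⟨l2, hl2, hm2, hp2⟩) hs j
        · exact absurd hs (not_sh_of_mem hM hn.meets hp)
        · have := sh_line hL hM hn.mem hn.meets hl2 hm2 hs hp2
          exact .inr ⟨l1, hn.mem, hn.meets, hL.act l1 hn.mem _ (this ▸ hp2) j⟩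
      · rintro g hg p (hp | ⟨l2, hl2, ⟨u, hu, huw⟩, hp2⟩)
        · exact .inl (hM.inv g hg p hp)
        · exact .inr ⟨l2.tr g, hL.trans _ hl2 _, ⟨g * u, mul_mem_tr.2 hu, hM.inv g hg u huw⟩,
            mul_mem_tr.2 hp2⟩
    intro x hx x' hx' hxW hxW'
    have h1 := key (h * x) (mul_mem_tr.2 hx) (hgood _ (W'_inv hh hxW))
    have h2 := key (h * x') (mul_mem_tr.2 hx') (hgood _ (W'_inv hh hxW'))
    have h3 := dd_tri (h * x) y (h * x')
    rw [dd_mul_left] at h3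
    rw [dd_comm y] at h1
    have : L.n = l.n := rfl
    omega

theorem mill_step (hL : LineSys LL) (hM : Mill LL W H) : Mill LL (W' LL W H) (H' LL W H) where
  conv := W'_conv hL hM
  one := subset_W' hM.one
  inv := fun _ hh _ hx => W'_inv hh hx
  sm := mill_sm hL hM
  gr := by
    intro h hh h1
    have hHW : ∀ x ∈ H, x ∈ W := fun x hx => by simpa using hM.inv x hx 1 hM.one
    have hg : Good LL W (H : Set (FreeGroup α)) (h * 1) := by
      refine (good_H' hL hM ?_ ?_ hh 1 (.base (one_mem H))).1
      · intro l hn p hp hs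
        exact absurd hs (not_sh_of_mem hM hn.meets (hHW p hp))
      · intro g hg p hp
        exact H.mul_mem hg hp
    rw [mul_one] at hg
    cases hg with
    | base hb => exact hM.gr h hb h1
    | @step l k q hn hk hq hq' =>
      obtain ⟨e, he, he', hest⟩ := step_est hL hn hk hq'
      obtain ⟨i, hi⟩ := exists_gate (hL.conv l hn.mem) (hL.ne l hn.mem) 1
      obtain ⟨u, hu, huw⟩ := hn.meets
      have hiW : i ∈ W := hM.conv _ hM.one _ huw _ (hi.2 u hu)
      have h3 := (hest i hi.1 hiW).2
      have := hL.npos l hn.mem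
      have hne : i ≠ l.c ^ k * e := by
        rintro h; rw [← h, dd_self] at h3; omega
      refine ⟨l, hn.mem, i, hi.1, _, he'.1, (gate_gate hi he' hne).symm, ?_⟩
      rw [dd_comm i]; exact h3

end step

/-- the iteration -/
noncomputable def mills (LL : Set (Line α)) : ℕ → Set (FreeGroup α) × Subgroup (FreeGroup α)
  | 0 => ({1}, ⊥)
  | k + 1 => (W' LL (mills LL k).1 (mills LL k).2, H' LL (mills LL k).1 (mills LL k).2)

theorem mills_mill {LL : Set (Line α)} (hL : LineSys LL) (k : ℕ) :
    Mill LL (mills LL k).1 (mills LL k).2 := by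
  induction k with
  | zero =>
    refine ⟨?_, rfl, ?_, fun l hl => .inr ?_, ?_⟩
    · rintro x rfl y rfl m hm
      unfold btw at hm
      rw [dd_self] at hm
      have : dd 1 m = 0 := by omega
      exact (dd_eq_zero.1 this).symm
    · rintro h hh x hx
      have : h = 1 := hh
      simpa [this] using hx
    · rintro x - y - rfl rfl
      rw [dd_self]; omega
    · intro h hh h1; exact absurd hh h1
  | succ k ih => exact mill_step hL ih

theorem greendlinger {LL : Set (Line α)} (hL : LineSys LL) {h : FreeGroup α}
    (hh : h ∈ Subgroup.closure {g | ∃ l ∈ LL, l.c = g}) (h1 : h ≠ 1) : Gr LL h := by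
  have hcov0 : ∀ g x : FreeGroup α, (∃ k, x ∈ (mills LL k).1) → ∃ k, x * g ∈ (mills LL k).1 := by
    intro g
    induction g using FreeGroup.induction_on with
    | C1 => intro x hx; simpa using hx
    | of a =>
      rintro x ⟨k, hk⟩
      obtain ⟨l, hl, h1, h2⟩ := hL.edge x a
      exact ⟨k + 1, Y_subset_W' (.inr ⟨l, hl, ⟨x, h1, hk⟩, h2⟩)⟩
    | inv_of a _ =>
      rintro x ⟨k, hk⟩
      obtain ⟨l, hl, h1, h2⟩ := hL.edge (x * (of a)⁻¹) a
      rw [inv_mul_cancel_right] at h2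
      exact ⟨k + 1, Y_subset_W' (.inr ⟨l, hl, ⟨x, h2, hk⟩, h1⟩)⟩
    | mul g g' h h' => intro x hx; rw [← mul_assoc]; exact h' _ (h _ hx)
  have hcov : ∀ x : FreeGroup α, ∃ k, x ∈ (mills LL k).1 := fun x => by
    simpa using hcov0 x 1 ⟨0, rfl⟩
  have hmono : Monotone fun k => (mills LL k).2 := monotone_nat_of_le_succ fun k => H_le_H'
  have hle : Subgroup.closure {g | ∃ l ∈ LL, l.c = g} ≤ ⨆ k, (mills LL k).2 := by
    rw [Subgroup.closure_le]
    rintro _ ⟨l, hl, rfl⟩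
    obtain ⟨x, hx⟩ := hL.ne l hl
    obtain ⟨k, hk⟩ := hcov x
    exact Subgroup.mem_iSup_of_mem (k + 1) (c_mem_H' hl ⟨x, hx, hk⟩)
  obtain ⟨k, hk⟩ := (Subgroup.mem_iSup_of_directed (hmono.directed_le)).1 (hle hh)
  exact (mills_mill hL k).gr h hk h1

end SC

/-! ## Part III: lines from periodic labels, Greendlinger's lemma -/

namespace SC
open FreeGroup
variable {α : Type*} [DecidableEq α]
set_option linter.unusedSectionVars false

/-- inverse letter -/
def ibar (a : α × Bool) : α × Bool := (a.1, !a.2)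
theorem ibar_ibar (a : α × Bool) : ibar (ibar a) = a := by simp [ibar]
theorem ibar_inj {a b : α × Bool} (h : ibar a = ibar b) : a = b := by
  rw [← ibar_ibar a, h, ibar_ibar]
theorem mk_ibar (a : α × Bool) : mk [ibar a] = (mk [a])⁻¹ := by
  rw [inv_mk]; simp [invRev, ibar]

/-- the word of length `m` starting at position `t` -/
def seg (σ : ℤ → α × Bool) (t : ℤ) (m : ℕ) : List (α × Bool) :=
  (List.range m).map fun i : ℕ => σ (t + i)

theorem seg_length (σ : ℤ → α × Bool) (t : ℤ) (m : ℕ) : (seg σ t m).length = m := by simp [seg]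
theorem seg_getElem (σ : ℤ → α × Bool) (t : ℤ) (m i : ℕ) (h : i < (seg σ t m).length) :
    (seg σ t m)[i] = σ (t + i) := by simp [seg]
theorem seg_add (σ : ℤ → α × Bool) (t : ℤ) (m k : ℕ) :
    seg σ t (m + k) = seg σ t m ++ seg σ (t + m) k := by
  simp [seg, List.range_add, Function.comp_def, add_assoc]
theorem seg_one (σ : ℤ → α × Bool) (t : ℤ) : seg σ t 1 = [σ t] := by simp [seg]

/-- reduced labels -/
def Red (σ : ℤ → α × Bool) : Prop := ∀ t, σ (t + 1) ≠ ibar (σ t)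

theorem seg_red {σ : ℤ → α × Bool} (h : Red σ) (t : ℤ) (m : ℕ) : IsReduced (seg σ t m) := by
  refine List.isChain_iff_getElem.2 fun i hi he => ?_
  rw [seg_getElem, seg_getElem] at *
  have := h (t + i)
  by_contra hc
  apply this
  ext
  · simp [ibar, he, add_assoc]
  · simp [ibar, add_assoc] at *
    revert hc
    cases (σ (t + i)).2 <;> cases (σ (t + (i + 1))).2 <;> simp

/-- the path in the tree with label `σ` -/
def pre (σ : ℤ → α × Bool) : ℤ → FreeGroup α
  | Int.ofNat k => mk (seg σ 0 k)
  | Int.negSucc k => (mk (seg σ (Int.negSucc k) (k + 1)))⁻¹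

theorem pre_zero (σ : ℤ → α × Bool) : pre σ 0 = 1 := by
  change mk (seg σ 0 0) = 1
  simp [seg, one_eq_mk]

theorem pre_succ (σ : ℤ → α × Bool) (t : ℤ) : pre σ (t + 1) = pre σ t * mk [σ t] := by
  cases t with
  | ofNat k =>
    change mk (seg σ 0 (k + 1)) = mk (seg σ 0 k) * _
    rw [seg_add, seg_one, mul_mk]; simp
  | negSucc k =>
    have h : pre σ (Int.negSucc k + 1) = (mk (seg σ (Int.negSucc k + 1) k))⁻¹ := by
      cases k with
      | zero => change mk (seg σ 0 0) = _; simp [seg]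
      | succ k => rfl
    rw [h]
    change _ = (mk (seg σ (Int.negSucc k) (k + 1)))⁻¹ * _
    rw [add_comm k 1, seg_add, seg_one, ← mul_mk, mul_inv_rev, mul_assoc, inv_mul_cancel, mul_one]
    rfl

theorem eq_pre {σ : ℤ → α × Bool} {P : ℤ → FreeGroup α} (h0 : P 0 = 1)
    (h : ∀ t, P (t + 1) = P t * mk [σ t]) (t : ℤ) : P t = pre σ t := by
  induction t using Int.induction_on with
  | zero => rw [h0, pre_zero]
  | succ i ih => rw [h, pre_succ, ih]
  | pred i ih =>
    have h1 := h (-i - 1)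
    have h2 := pre_succ σ (-i - 1)
    rw [sub_add_cancel] at h1 h2
    rw [h1, h2] at ih
    exact mul_right_cancel ih

theorem pre_shift (σ : ℤ → α × Bool) (s t : ℤ) :
    pre (fun i => σ (s + i)) t = (pre σ s)⁻¹ * pre σ (s + t) := by
  refine (eq_pre (σ := fun i => σ (s + i)) (P := fun t => (pre σ s)⁻¹ * pre σ (s + t)) ?_ ?_ t).symm
  · simp
  · intro t; rw [← add_assoc, pre_succ, mul_assoc]

theorem pre_rev (σ : ℤ → α × Bool) (t : ℤ) :
    pre (fun i => ibar (σ (-1 - i))) t = pre σ (-t) := by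
  refine (eq_pre (σ := fun i => ibar (σ (-1 - i))) (P := fun t => pre σ (-t)) ?_ ?_ t).symm
  · simp [pre_zero]
  · intro t
    have := pre_succ σ (-(t + 1))
    rw [show -(t + 1) + 1 = -t by ring] at this
    rw [this, mk_ibar, show -1 - t = -(t + 1) by ring, mul_inv_cancel_right]

theorem pre_add_nat (σ : ℤ → α × Bool) (t : ℤ) (m : ℕ) :
    pre σ (t + m) = pre σ t * mk (seg σ t m) := by
  induction m with
  | zero => simp [seg, ← one_eq_mk]
  | succ m ih =>
    rw [seg_add, ← mul_mk, ← mul_assoc, ← ih, seg_one, ← pre_succ]; push_cast; rw [add_assoc]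

theorem dd_pre_nat {σ : ℤ → α × Bool} (h : Red σ) (t : ℤ) (m : ℕ) :
    dd (pre σ t) (pre σ (t + m)) = m := by
  rw [pre_add_nat, dd, inv_mul_cancel_left, FreeGroup.norm, toWord_mk, (seg_red h t m).reduce_eq,
    seg_length]

theorem dd_pre {σ : ℤ → α × Bool} (h : Red σ) (t s : ℤ) :
    dd (pre σ t) (pre σ s) = (s - t).natAbs := by
  rcases le_total t s with hts | hts
  · obtain ⟨m, rfl⟩ := Int.le.dest hts
    rw [dd_pre_nat h]; simp
  · obtain ⟨m, rfl⟩ := Int.le.dest hts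
    rw [dd_comm, dd_pre_nat h]; simp

/-- symmetrised small cancellation systems of labels -/
structure LabSys (R : (ℤ → α × Bool) → ℕ → Prop) : Prop where
  npos : ∀ σ n, R σ n → 0 < n
  per : ∀ σ n, R σ n → ∀ t, σ (n + t) = σ t
  red : ∀ σ n, R σ n → Red σ
  shift : ∀ σ n, R σ n → ∀ s, R (fun i => σ (s + i)) n
  rev : ∀ σ n, R σ n → R (fun i => ibar (σ (-1 - i))) n
  small : ∀ σ n, R σ n → ∀ σ' n', R σ' n' → ∀ m : ℕ, n ≤ 20 * m →
    (∀ i : ℕ, i < m → σ i = σ' i) → σ = σ' ∧ n = n'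
  occ : ∀ a, ∃ σ n, R σ n ∧ σ 0 = (a, true)

/-- the line through `g` with label `σ` -/
def ln (g : FreeGroup α) (σ : ℤ → α × Bool) (n : ℕ) : Line α :=
  ⟨{x | ∃ t, x = g * pre σ t}, g * pre σ n * g⁻¹, n⟩

/-- all lines with labels in `R` -/
def lines (R : (ℤ → α × Bool) → ℕ → Prop) : Set (Line α) :=
  {l | ∃ g σ n, R σ n ∧ l = ln g σ n}

variable {R : (ℤ → α × Bool) → ℕ → Prop}

theorem pre_n_add {σ : ℤ → α × Bool} {n : ℕ} (h : ∀ t, σ (n + t) = σ t) (t : ℤ) :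
    pre σ (n + t) = pre σ n * pre σ t := by
  have := pre_shift σ n t
  rw [show (fun i => σ (n + i)) = σ from funext h] at this
  rw [this]; group

theorem pre_n_zpow {σ : ℤ → α × Bool} {n : ℕ} (h : ∀ t, σ (n + t) = σ t) (k t : ℤ) :
    pre σ n ^ k * pre σ t = pre σ (k * n + t) := by
  induction k using Int.induction_on with
  | zero => simp
  | succ k ih =>
    rw [zpow_add_one, (Commute.zpow_self _ _).eq, mul_assoc, ih, ← pre_n_add h]; congr 1; ring
  | pred k ih =>
    rw [zpow_sub_one, (Commute.refl _).inv_right.zpow_left _ |>.eq, mul_assoc, ih, inv_mul_eq_iff_eq_mul,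
      ← pre_n_add h]
    congr 1; ring

theorem ln_shift (g : FreeGroup α) {σ : ℤ → α × Bool} {n : ℕ} (h : ∀ t, σ (n + t) = σ t) (s : ℤ) :
    ln (g * pre σ s) (fun i => σ (s + i)) n = ln g σ n := by
  unfold ln
  congr 1
  · ext x; constructor
    · rintro ⟨t, rfl⟩; exact ⟨s + t, by rw [pre_shift]; group⟩
    · rintro ⟨t, rfl⟩; exact ⟨t - s, by rw [pre_shift]; simp [mul_assoc]⟩
  · rw [pre_shift, add_comm, pre_n_add h]; group

theorem ln_rev (g : FreeGroup α) {σ : ℤ → α × Bool} {n : ℕ} (h : ∀ t, σ (n + t) = σ t) :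
    (ln g (fun i => ibar (σ (-1 - i))) n).S = (ln g σ n).S ∧
    (ln g (fun i => ibar (σ (-1 - i))) n).c = (ln g σ n).c⁻¹ := by
  unfold ln
  constructor
  · ext x; constructor
    · rintro ⟨t, rfl⟩; exact ⟨-t, by rw [pre_rev]⟩
    · rintro ⟨t, rfl⟩; exact ⟨-t, by rw [pre_rev]; simp⟩
  · simp only
    rw [pre_rev]
    have := pre_n_add h (-n)
    rw [add_neg_cancel, pre_zero] at this
    rw [mul_inv_rev, mul_inv_rev, inv_inv, mul_assoc]
    congr 2
    exact (inv_eq_of_mul_eq_one_right this.symm).symm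

/-- normal form of a line through two given points -/
theorem ln_norm (hR : LabSys R) {g : FreeGroup α} {σ : ℤ → α × Bool} {n : ℕ} (h : R σ n)
    {x y : FreeGroup α} (hx : x ∈ (ln g σ n).S) (hy : y ∈ (ln g σ n).S) :
    ∃ σ', R σ' n ∧ (ln x σ' n).S = (ln g σ n).S ∧
      ((ln x σ' n).c = (ln g σ n).c ∨ (ln x σ' n).c = (ln g σ n).c⁻¹) ∧
      y = x * pre σ' (dd x y) := by
  obtain ⟨t, rfl⟩ := hx
  obtain ⟨s, rfl⟩ := hy
  have hd : dd (g * pre σ t) (g * pre σ s) = (s - t).natAbs := by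
    rw [dd_mul_left, dd_pre (hR.red _ _ h)]
  have h1 := ln_shift g (hR.per _ _ h) t
  have hs := hR.shift _ _ h t
  rw [hd]
  rcases le_total t s with hts | hts
  · refine ⟨_, hs, by rw [h1], .inl (by rw [h1]), ?_⟩
    rw [pre_shift, Int.natAbs_of_nonneg (by omega)]; simp [mul_assoc]
  · have h2 := ln_rev (g * pre σ t) (hR.per _ _ hs)
    rw [h1] at h2
    refine ⟨_, hR.rev _ _ hs, h2.1, .inr h2.2, ?_⟩
    rw [pre_rev (σ := fun i => σ (t + i)), pre_shift]
    have : (((s - t).natAbs : ℕ) : ℤ) = t - s := by omega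
    rw [this]; simp [mul_assoc]

theorem btw_unique {x m m' y : FreeGroup α} (h : btw x m y) (h' : btw x m' y)
    (e : dd x m = dd x m') : m = m' := by
  have := (btw_order h h' e.le).1
  unfold btw at this
  exact dd_eq_zero.1 (by omega)

theorem toWord_pre {σ : ℤ → α × Bool} (h : Red σ) (m : ℕ) : (pre σ m).toWord = seg σ 0 m := by
  have := pre_add_nat σ 0 m
  rw [pre_zero, one_mul, zero_add] at this
  rw [this, toWord_mk, (seg_red h 0 m).reduce_eq]

theorem lines_sys (hR : LabSys R) : LineSys (lines R) where
  conv := by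
    rintro l ⟨g, σ, n, h, rfl⟩ x hx y hy m hm
    obtain ⟨σ', h', e1, e2, e3⟩ := ln_norm hR h hx hy
    rw [← e1]
    refine ⟨(dd x m : ℕ), btw_unique hm ?_ ?_⟩
    · have hle : dd x m ≤ dd x y := by unfold btw at hm; omega
      unfold btw
      conv_lhs => arg 2; rw [e3]
      have h0 : dd x (x * pre σ' (dd x m : ℕ)) = dd x m := by
        have := dd_pre (hR.red _ _ h') 0 (dd x m : ℕ)
        rw [pre_zero] at this
        rw [← dd_mul_left x⁻¹]; simpa using this
      rw [h0, dd_mul_left, dd_pre (hR.red _ _ h')]; omega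
    · have := dd_pre (hR.red _ _ h') 0 (dd x m : ℕ)
      rw [pre_zero] at this
      rw [← dd_mul_left x⁻¹ x (x * _)]; simpa using this.symm
  ne := by rintro l ⟨g, σ, n, h, rfl⟩; exact ⟨g, 0, by simp [pre_zero]⟩
  npos := by rintro l ⟨g, σ, n, h, rfl⟩; exact hR.npos _ _ h
  act := by
    rintro l ⟨g, σ, n, h, rfl⟩ y ⟨t, rfl⟩ k
    refine ⟨k * n + t, ?_⟩
    rw [← pre_n_zpow (hR.per _ _ h)]; simp only [ln, conj_zpow]; group
  len := by
    rintro l ⟨g, σ, n, h, rfl⟩ y ⟨t, rfl⟩ k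
    have : (ln g σ n).c ^ k * (g * pre σ t) = g * pre σ (k * n + t) := by
      rw [← pre_n_zpow (hR.per _ _ h)]; simp only [ln, conj_zpow]; group
    rw [this, dd_mul_left, dd_pre (hR.red _ _ h)]
    simp [ln, Int.natAbs_mul]
  small := by
    rintro l ⟨g, σ, n, h, rfl⟩ l' ⟨g', τ, n', h', rfl⟩ x hx y hy hx' hy' hd
    obtain ⟨σ1, k1, e1, e2, e3⟩ := ln_norm hR h hx hy
    obtain ⟨τ1, k1', e1', e2', e3'⟩ := ln_norm hR h' hx' hy'
    have : seg σ1 0 (dd x y) = seg τ1 0 (dd x y) := by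
      rw [← toWord_pre (hR.red _ _ k1), ← toWord_pre (hR.red _ _ k1')]
      congr 1
      have := e3.symm.trans e3'
      exact mul_left_cancel this
    obtain ⟨rfl, rfl⟩ := hR.small _ _ k1 _ _ k1' (dd x y) hd fun i hi => by
      have h3 := seg_getElem σ1 0 (dd x y) i (by rwa [seg_length])
      have h4 := seg_getElem τ1 0 (dd x y) i (by rwa [seg_length])
      simp only [zero_add] at h3 h4
      rw [← h3, ← h4]; simp only [this]
    refine ⟨by rw [← e1, ← e1'], rfl, ?_⟩
    rcases e2 with e2 | e2 <;> rcases e2' with e2' | e2' <;> rw [e2] at e2' <;> simp [e2'] 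
    · left; rw [← inv_inj, e2']
  trans := by
    rintro l ⟨g, σ, n, h, rfl⟩ k
    refine ⟨k * g, σ, n, h, ?_⟩
    unfold ln Line.tr
    congr 1
    · ext x; constructor
      · rintro ⟨t, ht⟩; exact ⟨t, by rw [mul_assoc, ← ht]; simp⟩
      · rintro ⟨t, rfl⟩; exact ⟨t, by group⟩
    · simp only; group
  edge := by
    intro x a
    obtain ⟨σ, n, h, h0⟩ := hR.occ a
    refine ⟨_, ⟨x, σ, n, h, rfl⟩, ⟨0, by simp [pre_zero]⟩, ⟨1, ?_⟩⟩
    have := pre_succ σ 0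
    rw [zero_add] at this
    rw [this, pre_zero, h0]; simp; rfl

/-- Greendlinger's lemma -/
theorem green (hR : LabSys R) {h : FreeGroup α}
    (hh : h ∈ Subgroup.closure {x | ∃ g σ n, R σ n ∧ x = g * pre σ n * g⁻¹}) (h1 : h ≠ 1) :
    ∃ σ n, R σ n ∧ ∃ m, 17 * n ≤ 20 * m ∧ seg σ 0 m <:+: h.toWord := by
  have hh' : h ∈ Subgroup.closure {g | ∃ l ∈ lines R, l.c = g} := by
    refine Subgroup.closure_mono ?_ hh
    rintro x ⟨g, σ, n, h, rfl⟩
    exact ⟨_, ⟨g, σ, n, h, rfl⟩, rfl⟩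
  obtain ⟨l, ⟨g, σ, n, hr, rfl⟩, e, he, e', he', hd, hn⟩ := greendlinger (lines_sys hR) hh' h1
  obtain ⟨σ', h', -, -, e3⟩ := ln_norm hR hr he he'
  refine ⟨σ', n, h', dd e e', hn, ?_⟩
  have hw : e.toWord ++ (e⁻¹ * e').toWord ++ (e'⁻¹ * h).toWord = h.toWord := by
    have h2 : h = mk (e.toWord ++ (e⁻¹ * e').toWord ++ (e'⁻¹ * h).toWord) := by
      rw [← mul_mk, ← mul_mk, mk_toWord, mk_toWord, mk_toWord]; group
    have h3 : h.toWord = reduce (e.toWord ++ (e⁻¹ * e').toWord ++ (e'⁻¹ * h).toWord) := by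
      conv_lhs => rw [h2]
      rw [toWord_mk]
    rw [h3]
    have h5 := reduce.red (L := e.toWord ++ (e⁻¹ * e').toWord ++ (e'⁻¹ * h).toWord)
    have h6 : (reduce (e.toWord ++ (e⁻¹ * e').toWord ++ (e'⁻¹ * h).toWord)).length =
        (e.toWord ++ (e⁻¹ * e').toWord ++ (e'⁻¹ * h).toWord).length := by
      rw [← h3]
      simp only [dd, inv_one, one_mul, FreeGroup.norm] at hd
      simp only [List.length_append]; omega
    exact (h5.sublist.eq_of_length h6).symm
  refine ⟨e.toWord, (e'⁻¹ * h).toWord, ?_⟩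
  rw [← hw]
  congr 2
  rw [← toWord_pre (hR.red _ _ h')]
  congr 1
  conv_rhs => rw [e3]
  simp

end SC

/-! ## Part IV a: labels made of blocks -/

namespace SC

section blocks
variable {β : Type*}

/-- starting position of the `k`-th block -/
def pos (B : ℤ → List β) : ℤ → ℤ
  | Int.ofNat k => ∑ i ∈ Finset.range k, ((B i).length : ℤ)
  | Int.negSucc k => -∑ i ∈ Finset.range (k + 1), ((B (-1 - i)).length : ℤ)

theorem pos_zero (B : ℤ → List β) : pos B 0 = 0 := by
  change ∑ i ∈ Finset.range 0, _ = _; simp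

theorem pos_succ (B : ℤ → List β) (k : ℤ) : pos B (k + 1) = pos B k + (B k).length := by
  cases k with
  | ofNat k =>
    change ∑ i ∈ Finset.range (k + 1), ((B i).length : ℤ) = _
    rw [Finset.sum_range_succ]; rfl
  | negSucc k =>
    have h : pos B (Int.negSucc k + 1) = -∑ i ∈ Finset.range k, ((B (-1 - i)).length : ℤ) := by
      cases k with
      | zero => change pos B 0 = _; simp [pos_zero]
      | succ k => rfl
    rw [h]
    change _ = -∑ i ∈ Finset.range (k + 1), ((B (-1 - i)).length : ℤ) + _
    rw [Finset.sum_range_succ, Int.negSucc_eq, show -((k : ℤ) + 1) = -1 - k by ring]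
    ring

theorem cover {S : ℤ → ℤ} (h : ∀ k, S k < S (k + 1)) (t : ℤ) : ∃ k, S k ≤ t ∧ t < S (k + 1) := by
  have hm : StrictMono S := strictMono_int_of_lt_succ h
  have hadd : ∀ j : ℕ, S 0 + j ≤ S j ∧ S (-j) ≤ S 0 - j := by
    intro j
    induction j with
    | zero => simp
    | succ j ih =>
      have h1 := h j
      have h2 := h (-(j + 1 : ℕ))
      rw [show -((j + 1 : ℕ) : ℤ) + 1 = -j by push_cast; ring] at h2
      push_cast at *
      omega
  have hb : ∃ b : ℤ, ∀ z : ℤ, S z ≤ t → z ≤ b := by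
    refine ⟨(t - S 0).natAbs, fun z hz => ?_⟩
    by_contra hc
    push Not at hc
    have := (hadd (t - S 0).natAbs).1
    have := hm hc
    omega
  have hi : ∃ z : ℤ, S z ≤ t := ⟨-((t - S 0).natAbs : ℕ), by have := (hadd (t - S 0).natAbs).2; omega⟩
  obtain ⟨k, hk, hk'⟩ := Int.exists_greatest_of_bdd hb hi
  refine ⟨k, hk, ?_⟩
  by_contra hc
  push Not at hc
  have := hk' _ hc
  omega

theorem cover_unique {S : ℤ → ℤ} (h : ∀ k, S k < S (k + 1)) {t k j : ℤ} (h1 : S k ≤ t)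
    (h2 : t < S (k + 1)) (h3 : S j ≤ t) (h4 : t < S (j + 1)) : k = j := by
  have hm : StrictMono S := strictMono_int_of_lt_succ h
  have a := hm.lt_iff_lt.1 (h1.trans_lt h4)
  have b := hm.lt_iff_lt.1 (h3.trans_lt h2)
  omega

theorem pos_lt {B : ℤ → List β} (hB : ∀ k, B k ≠ []) (k : ℤ) : pos B k < pos B (k + 1) := by
  rw [pos_succ]; have := List.length_pos_iff.2 (hB k); omega

theorem exists_lab [Nonempty β] (B : ℤ → List β) : ∃ σ : ℤ → β, (∀ k, B k ≠ []) →
    ∀ k (i : ℕ) (h : i < (B k).length), σ (pos B k + i) = (B k)[i] := by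
  by_cases hB : ∀ k, B k ≠ []
  · have hlt := pos_lt hB
    choose K hK1 hK2 using cover hlt
    have hb : ∀ t, (t - pos B (K t)).toNat < (B (K t)).length := fun t => by
      have := hK1 t; have := hK2 t; rw [pos_succ] at this; omega
    refine ⟨fun t => (B (K t))[(t - pos B (K t)).toNat]'(hb t), fun _ k i h => ?_⟩
    have e : K (pos B k + i) = k :=
      cover_unique hlt (hK1 _) (hK2 _) (by omega) (by rw [pos_succ]; omega)
    simp only [e]
    congr 1
    omega
  · exact ⟨fun _ => Classical.arbitrary β, fun h => absurd h hB⟩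

/-- the label with blocks `B` -/
noncomputable def lab [Nonempty β] (B : ℤ → List β) : ℤ → β := Classical.choose (exists_lab B)

theorem lab_spec [Nonempty β] {B : ℤ → List β} (hB : ∀ k, B k ≠ []) (k : ℤ) (i : ℕ)
    (h : i < (B k).length) : lab B (pos B k + i) = (B k)[i] :=
  Classical.choose_spec (exists_lab B) hB k i h

theorem pos_per {B : ℤ → List β} {M : ℤ} (hM : ∀ k, B (M + k) = B k) (k : ℤ) :
    pos B (M + k) = pos B M + pos B k := by
  induction k using Int.induction_on with
  | zero => simp [pos_zero]
  | succ k ih => rw [← add_assoc, pos_succ, ih, pos_succ, hM]; ring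
  | pred k ih =>
    have h1 := pos_succ B (M + (-k - 1))
    have h2 := pos_succ B (-k - 1)
    rw [show M + (-(k : ℤ) - 1) + 1 = M + -k by ring, hM] at h1
    rw [sub_add_cancel] at h2
    omega

theorem pos_per_mul {B : ℤ → List β} {M : ℤ} (hM : ∀ k, B (M + k) = B k) (q k : ℤ) :
    pos B (q * M + k) = q * pos B M + pos B k := by
  induction q using Int.induction_on with
  | zero => simp
  | succ q ih =>
    rw [show ((q : ℤ) + 1) * M + k = M + (q * M + k) by ring, pos_per hM, ih]; ring
  | pred q ih =>
    have := pos_per hM ((-(q : ℤ) - 1) * M + k)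
    rw [show M + ((-(q : ℤ) - 1) * M + k) = -q * M + k by ring, ih] at this
    linarith

theorem lab_per [Nonempty β] {B : ℤ → List β} (hB : ∀ k, B k ≠ []) {M : ℤ}
    (hM : ∀ k, B (M + k) = B k) (t : ℤ) : lab B (pos B M + t) = lab B t := by
  obtain ⟨k, h1, h2⟩ := cover (pos_lt hB) t
  rw [pos_succ] at h2
  obtain ⟨i, hi⟩ := Int.eq_ofNat_of_zero_le (a := t - pos B k) (by omega)
  have ht : t = pos B k + i := by omega
  have hi' : i < (B k).length := by omega
  have h3 := lab_spec hB (M + k) i (by rw [hM]; exact hi')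
  rw [pos_per hM] at h3
  rw [ht, lab_spec hB k i hi', ← add_assoc, h3]
  simp only [hM]

/-- labels with blocks `Z k ++ y ^ E k` -/
structure Tail (σ : ℤ → β) (S : ℤ → ℤ) (Z : ℤ → List β) (E : ℤ → ℕ) (y : β) : Prop where
  step : ∀ k, S (k + 1) = S k + (Z k).length + E k
  z : ∀ k (i : ℕ) (h : i < (Z k).length), σ (S k + i) = (Z k)[i]
  e : ∀ k (i : ℕ), i < E k → σ (S k + (Z k).length + i) = y
  ny : ∀ k, y ∉ Z k
  epos : ∀ k, 0 < E k

theorem tail_lab [Nonempty β] {Z : ℤ → List β} {E : ℤ → ℕ} {y : β} (hy : ∀ k, y ∉ Z k)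
    (hE : ∀ k, 0 < E k) : Tail (lab fun k => Z k ++ List.replicate (E k) y)
      (pos fun k => Z k ++ List.replicate (E k) y) Z E y := by
  have hB : ∀ k, Z k ++ List.replicate (E k) y ≠ [] := fun k => by
    have := hE k
    intro h
    have := congrArg List.length h
    simp at this
    omega
  refine ⟨fun k => ?_, fun k i h => ?_, fun k i h => ?_, hy, hE⟩
  · rw [pos_succ]; simp; ring
  · rw [lab_spec hB k i (by simp; omega)]
    rw [List.getElem_append_left h]
  · have := lab_spec hB k ((Z k).length + i) (by simp; omega)
    rw [List.getElem_append_right (by omega)] at this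
    rw [add_assoc, ← Nat.cast_add, this]; simp

variable {σ σ' : ℤ → β} {S S' : ℤ → ℤ} {Z Z' : ℤ → List β} {E E' : ℤ → ℕ} {y : β}

theorem Tail.lt (h : Tail σ S Z E y) (k : ℤ) : S k < S (k + 1) := by
  have := h.epos k; rw [h.step]; omega

/-- classification of positions -/
theorem Tail.cases (h : Tail σ S Z E y) (t : ℤ) :
    ∃ k, S k ≤ t ∧ t < S (k + 1) ∧ ((σ t = y ∧ S k + (Z k).length ≤ t) ∨
      (σ t ≠ y ∧ σ t ∈ Z k ∧ t < S k + (Z k).length ∧ ∃ i : ℕ, ∃ hi : i < (Z k).length, t = S k + i ∧ σ t = (Z k)[i])) := by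
  obtain ⟨k, h1, h2⟩ := cover h.lt t
  refine ⟨k, h1, h2, ?_⟩
  obtain ⟨i, hi⟩ := Int.eq_ofNat_of_zero_le (a := t - S k) (by omega)
  have ht : t = S k + i := by omega
  by_cases hl : i < (Z k).length
  · right
    have := h.z k i hl
    rw [ht, this]
    refine ⟨fun he => h.ny k (he ▸ List.getElem_mem hl), List.getElem_mem hl, by omega, i, hl, rfl, rfl⟩
  · left
    have := h.e k (i - (Z k).length) (by rw [h.step] at h2; omega)
    refine ⟨?_, by omega⟩
    rw [← this, ht]; congr 1; omega

theorem Tail.head_ne (h : Tail σ S Z E y) {k : ℤ} (hk : Z k ≠ []) : σ (S k) ≠ y := by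
  have hl := List.length_pos_iff.2 hk
  have := h.z k 0 hl
  simp only [Nat.cast_zero, add_zero] at this
  rw [this]
  exact fun he => h.ny k (he ▸ List.getElem_mem hl)

theorem Tail.prev (h : Tail σ S Z E y) (k : ℤ) : σ (S k - 1) = y := by
  have h1 := h.e (k - 1) (E (k - 1) - 1) (by have := h.epos (k - 1); omega)
  have h2 := h.step (k - 1)
  have h3 := h.epos (k - 1)
  rw [sub_add_cancel] at h2
  rw [← h1]; congr 1; omega

theorem align (h : Tail σ S Z E y) (h' : Tail σ' S' Z' E' y) {k t' : ℤ}
    (hm : ∀ i : ℤ, -1 ≤ i → i ≤ (Z k).length + E k → σ (S k + i) = σ' (t' + i))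
    (hk : Z k ≠ []) (hk1 : Z (k + 1) ≠ []) :
    ∃ k', t' = S' k' ∧ Z' k' = Z k ∧ (E k = E' k' ∨
      (Z' (k' + 1) = [] ∧ (Z' (k' + 2) ≠ [] → E k = E' k' + E' (k' + 1)))) := by
  have hl := List.length_pos_iff.2 hk
  have h0 := hm 0 (by omega) (by omega)
  have hm1 := hm (-1) (by omega) (by omega)
  rw [← sub_eq_add_neg, ← sub_eq_add_neg, h.prev] at hm1
  simp only [add_zero] at h0
  have hne := h.head_ne hk
  obtain ⟨k', g1, g2, g3⟩ := h'.cases t'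
  have ht : t' = S' k' := by
    rcases g3 with g3 | ⟨-, -, g3, -⟩
    · exact absurd (h0.trans g3.1) hne
    · by_contra hc
      obtain ⟨i, hi⟩ := Int.eq_ofNat_of_zero_le (a := t' - 1 - S' k') (by omega)
      have := h'.z k' i (by omega)
      rw [show S' k' + (i : ℤ) = t' - 1 by omega, ← hm1] at this
      exact h'.ny k' (this ▸ List.getElem_mem _)
  have hlen : (Z' k').length = (Z k).length := by
    apply le_antisymm
    · by_contra hc
      push Not at hc
      have e1 := h'.z k' (Z k).length hc
      have e2 := h.e k 0 (h.epos k)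
      have e3 := hm (Z k).length (by omega) (by omega)
      rw [← ht, ← e3] at e1
      simp only [Nat.cast_zero, add_zero] at e2
      rw [e2] at e1
      exact h'.ny k' (e1 ▸ List.getElem_mem _)
    · by_contra hc
      push Not at hc
      have e1 := h.z k (Z' k').length hc
      have e2 := h'.e k' 0 (h'.epos k')
      have e3 := hm (Z' k').length (by omega) (by omega)
      simp only [Nat.cast_zero, add_zero] at e2
      rw [← ht, ← e3, e1] at e2
      exact h.ny k (e2 ▸ List.getElem_mem _)
  have hZ : Z' k' = Z k := by
    refine List.ext_getElem hlen fun i h1 h2 => ?_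
    rw [← h'.z k' i h1, ← h.z k i h2, hm i (by omega) (by omega), ht]
  refine ⟨k', ht, hZ, ?_⟩
  have hend := h.head_ne hk1
  rw [h.step, add_assoc] at hend
  rw [hm _ (by omega) (by omega), ht] at hend
  have hle : E' k' ≤ E k := by
    by_contra hc
    push Not at hc
    have := h'.e k' (E k) hc
    rw [hlen, add_assoc] at this
    exact hend this
  rcases hle.eq_or_lt with he | hlt
  · exact .inl he.symm
  right
  have hy1 : σ' (S' (k' + 1)) = y := by
    have e1 := h.e k (E' k') hlt
    rw [add_assoc, hm _ (by omega) (by omega), ht] at e1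
    rw [h'.step, hlen, add_assoc]; exact e1
  have hZ1 : Z' (k' + 1) = [] := by
    by_contra hc
    exact h'.head_ne hc hy1
  refine ⟨hZ1, fun hZ2 => ?_⟩
  have s1 := h'.step k'
  have s2 := h'.step (k' + 1)
  rw [hZ1, List.length_nil, Nat.cast_zero, add_zero, add_assoc k' 1 1] at s2
  apply le_antisymm
  · by_contra hc
    push Not at hc
    have e1 := h.e k (E' k' + E' (k' + 1)) hc
    have e2 := h'.head_ne hZ2
    rw [add_assoc, hm _ (by omega) (by omega), ht] at e1
    apply e2
    rw [← e1]
    congr 1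
    change S' (k' + 2) = _ at s2
    push_cast; omega
  · by_contra hc
    push Not at hc
    have e1 := h'.e (k' + 1) (E k - E' k') (by omega)
    apply hend
    rw [← e1, hZ1]
    congr 1
    simp; omega

end blocks
end SC

/-! ## Part IV b: the lines of the presentation -/

namespace SC
open FreeGroup
set_option linter.unusedSectionVars false

noncomputable instance genDec (A : Type) : DecidableEq (GenSym A) := Classical.decEq _
instance genNe (A : Type) : Nonempty (GenSym A × Bool) := ⟨(GenSym.b, true)⟩

theorem per_int {β : Type*} {σ : ℤ → β} {n : ℤ} (h : ∀ t, σ (n + t) = σ t) (q t : ℤ) :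
    σ (q * n + t) = σ t := by
  induction q using Int.induction_on with
  | zero => simp
  | succ q ih => rw [← ih, ← h (q * n + t)]; congr 1; ring
  | pred q ih => rw [← ih, ← h ((-q - 1) * n + t)]; congr 1; ring

/-- the pairs occurring in the chain relators -/
inductive Chn {A : Type} : GenSym A → GenSym A → ℕ → Prop
  | ac (a : A) : Chn (.elt a) .c 0
  | ad (a : A) : Chn (.elt a) .d 0
  | b1 : Chn .b .f1 1000
  | b2 : Chn .b .f2 1000
  | c1 : Chn .c .f1 2000
  | c2 : Chn .c .f2 2000
  | d1 : Chn .d .f1 3000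
  | d2 : Chn .d .f2 3000
  | v1 : Chn .f1 .f2 4000
  | v2 : Chn .f2 .f1 4000

/-- exponents in chains -/
def chE (lo : ℕ) (k : ℤ) : ℕ := (lo + (k % 1000).toNat + 1) ^ 2

section chain
variable {A : Type} {x y : GenSym A} {lo : ℕ}

/-- blocks of chains -/
def chB (x y : GenSym A) (lo : ℕ) (k : ℤ) : List (GenSym A × Bool) :=
  [(x, true)] ++ List.replicate (chE lo k) (y, true)

/-- label of chains -/
noncomputable def chL (x y : GenSym A) (lo : ℕ) : ℤ → GenSym A × Bool := lab (chB x y lo)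

/-- length of chains -/
def chN (lo : ℕ) : ℕ := 1000 * lo ^ 2 + 1001000 * lo + 333834500

theorem Chn.ne (h : Chn x y lo) : x ≠ y := by cases h <;> simp
theorem Chn.lo_le (h : Chn x y lo) : lo ≤ 4000 := by cases h <;> simp

theorem chE_pos (lo : ℕ) (k : ℤ) : 0 < chE lo k := by unfold chE; positivity
theorem chE_le (lo : ℕ) (k : ℤ) : chE lo k ≤ (lo + 1000) ^ 2 := by
  unfold chE; apply Nat.pow_le_pow_left; omega
theorem chE_add (lo : ℕ) (q k : ℤ) : chE lo (q * 1000 + k) = chE lo k := by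
  unfold chE; congr 4; omega
theorem chE_inj {lo : ℕ} {k k' : ℤ} (h : chE lo k = chE lo k') : k % 1000 = k' % 1000 := by
  unfold chE at h
  have := Nat.pow_left_injective (n := 2) (by norm_num) h
  omega

theorem chB_per (k : ℤ) : chB x y lo (1000 + k) = chB x y lo k := by
  unfold chB; rw [show (1000 : ℤ) + k = 1 * 1000 + k by ring, chE_add]

theorem chPos_nat (j : ℕ) (hj : j ≤ 1000) :
    6 * pos (chB x y lo) j = 6 * j + 6 * j * lo ^ 2 + 6 * lo * j * (j + 1) + j * (j + 1) * (2 * j + 1) := by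
  induction j with
  | zero => simp [pos_zero]
  | succ j ih =>
    push_cast
    rw [pos_succ, mul_add, ih (by omega)]
    have : chE lo j = (lo + j + 1) ^ 2 := by
      unfold chE; congr 3
      rw [Int.emod_eq_of_lt (by omega) (by omega)]; simp
    simp only [chB, List.length_append, List.length_replicate, this, List.length_singleton]
    push_cast
    ring

theorem chPos : pos (chB x y lo) 1000 = chN lo := by
  have := chPos_nat (x := x) (y := y) (lo := lo) 1000 le_rfl
  unfold chN
  push_cast at this ⊢
  linarith

theorem chTail (h : x ≠ y) : Tail (chL x y lo) (pos (chB x y lo)) (fun _ => [(x, true)]) (chE lo)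
    (y, true) := by
  refine tail_lab (Z := fun _ => [(x, true)]) (E := chE lo) (y := (y, true)) (fun k hk => ?_) (chE_pos lo)
  simp at hk
  exact h hk.symm

theorem chB_ne (k : ℤ) : chB x y lo k ≠ [] := by simp [chB]

theorem chL_per (t : ℤ) : chL x y lo (chN lo + t) = chL x y lo t := by
  rw [← chPos (x := x) (y := y)]
  exact lab_per chB_ne chB_per t

theorem chL_cases (h : x ≠ y) (t : ℤ) : chL x y lo t = (x, true) ∨ chL x y lo t = (y, true) := by
  obtain ⟨k, -, -, h | h⟩ := (chTail (lo := lo) h).cases t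
  · exact .inr h.1
  · left; simpa using h.2.1

theorem chPos_mul (q k : ℤ) : pos (chB x y lo) (q * 1000 + k) = q * chN lo + pos (chB x y lo) k := by
  rw [← chPos (x := x) (y := y)]
  exact pos_per_mul chB_per q k

/-- a full block in a window -/
theorem chWin (h : x ≠ y) (s : ℤ) : ∃ k, s < pos (chB x y lo) k ∧
    pos (chB x y lo) k + 1 + chE lo k ≤ s + 2 * (lo + 1000) ^ 2 + 2 := by
  have T := chTail (lo := lo) h
  obtain ⟨k, h1, h2⟩ := cover T.lt s
  refine ⟨k + 1, by omega, ?_⟩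
  have := T.step k
  simp at this
  have h3 := chE_le lo k
  have h4 := chE_le lo (k + 1)
  push_cast [← @Nat.cast_le ℤ] at h3 h4
  linarith

/-- any long window contains both letters -/
theorem chMem (h : x ≠ y) (s : ℤ) : (∃ i : ℕ, (i : ℤ) ≤ 2 * (lo + 1000) ^ 2 + 2 ∧ chL x y lo (s + i) = (x, true)) ∧
    (∃ i : ℕ, (i : ℤ) ≤ 2 * (lo + 1000) ^ 2 + 2 ∧ chL x y lo (s + i) = (y, true)) := by
  have T := chTail (lo := lo) h
  obtain ⟨k, h1, h2⟩ := chWin (lo := lo) h s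
  constructor
  · refine ⟨(pos (chB x y lo) k - s).toNat, by omega, ?_⟩
    have := T.z k 0 (by simp)
    simp at this
    rw [← this]; congr 1; omega
  · refine ⟨(pos (chB x y lo) k + 1 - s).toNat, by have := chE_pos lo k; omega, ?_⟩
    have := T.e k 0 (chE_pos _ _)
    simp at this
    rw [← this]; congr 1; omega

theorem Chn.fn {lo' : ℕ} (h : Chn x y lo) (h' : Chn x y lo') : lo = lo' := by
  cases h <;> cases h' <;> rfl

theorem Chn.swap {lo' : ℕ} (h : Chn x y lo) (h' : Chn y x lo') : lo = 4000 ∧ lo' = 4000 := by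
  cases h <;> cases h' <;> simp

theorem chWin_le {m : ℕ} (hm : chN lo ≤ 100 * m) : 2 * ((lo : ℤ) + 1000) ^ 2 + 4 ≤ m := by
  unfold chN at hm
  zify at hm
  nlinarith

theorem ch_small {x' y' : GenSym A} {lo' : ℕ} (h : Chn x y lo) (h' : Chn x' y' lo') {s s' : ℤ} {m : ℕ}
    (hm : chN lo ≤ 100 * m) (hw : ∀ i : ℕ, i < m → chL x y lo (s + i) = chL x' y' lo' (s' + i)) :
    x = x' ∧ y = y' ∧ lo = lo' ∧ (chN lo : ℤ) ∣ s' - s := by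
  have T := chTail (lo := lo) h.ne
  have T' := chTail (lo := lo') h'.ne
  have hm2 := chWin_le hm
  obtain ⟨k, k1, k2⟩ := chWin (lo := lo) h.ne s
  obtain ⟨⟨i, hi, hx⟩, ⟨j, hj, hy⟩⟩ := chMem (lo := lo) h.ne s
  rw [hw _ (by omega)] at hx hy
  have hne := h.ne
  have key : x = x' ∧ y = y' := by
    rcases chL_cases (lo := lo') h'.ne (s' + i) with e | e <;> rcases chL_cases (lo := lo') h'.ne (s' + j) with e' | e' <;>
      rw [hx] at e <;> rw [hy] at e' <;> simp only [Prod.mk.injEq, and_true] at e e'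
    · exact absurd (e.trans e'.symm) hne
    · exact ⟨e, e'⟩
    · exfalso
      subst e e'
      obtain ⟨rfl, rfl⟩ := h.swap h'
      -- two consecutive letters
      have hE : 2 ≤ chE 4000 k := by
        unfold chE
        calc 2 ≤ 4000 ^ 2 := by norm_num
          _ ≤ _ := Nat.pow_le_pow_left (by omega) 2
      have hz := T.z k 0 (by simp)
      have e0 := T.e k 0 (by omega)
      have e1 := T.e k 1 (by omega)
      simp only [List.length_singleton] at e0 e1
      have w0 := hw (pos (chB x y 4000) k + 1 - s).toNat (by omega)
      have w1 := hw (pos (chB x y 4000) k + 2 - s).toNat (by omega)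
      rw [show s + ((pos (chB x y 4000) k + 1 - s).toNat : ℤ) = pos (chB x y 4000) k + (1 : ℕ) + (0 : ℕ) by push_cast; omega, e0,
        show s' + ((pos (chB x y 4000) k + 1 - s).toNat : ℤ) = s' - s + pos (chB x y 4000) k + 1 by omega] at w0
      rw [show s + ((pos (chB x y 4000) k + 2 - s).toNat : ℤ) = pos (chB x y 4000) k + (1 : ℕ) + (1 : ℕ) by push_cast; omega, e1,
        show s' + ((pos (chB x y 4000) k + 2 - s).toNat : ℤ) = s' - s + pos (chB x y 4000) k + 2 by omega] at w1
      obtain ⟨k', q1, q2, ⟨q3, -⟩ | ⟨-, -, q3, q4⟩⟩ := T'.cases (s' - s + pos (chB x y 4000) k + 1)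
      · rw [← w0] at q3; simp at q3; exact hne q3.symm
      · have := T'.e k' 0 (chE_pos _ _)
        simp at this q3
        rw [show pos (chB y x 4000) k' + 1 = s' - s + pos (chB x y 4000) k + 2 by omega, ← w1] at this
        simp at this; exact hne this.symm
    · exact absurd (e.trans e'.symm) hne
  obtain ⟨rfl, rfl⟩ := key
  obtain rfl := h.fn h'
  refine ⟨rfl, rfl, rfl, ?_⟩
  obtain ⟨k', e1, -, e2⟩ := align T T' (k := k) (t' := s' + (pos (chB x y lo) k - s)) (fun i h1 h2 => by
    have := hw (pos (chB x y lo) k + i - s).toNat (by simp at h2; omega)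
    rw [show s + ((pos (chB x y lo) k + i - s).toNat : ℤ) = pos (chB x y lo) k + i by omega] at this
    rw [this]; congr 1; omega) (by simp) (by simp)
  have e3 := chE_inj (e2.resolve_right (by simp))
  obtain ⟨q, hq⟩ : ∃ q, k' = q * 1000 + k := ⟨(k' - k) / 1000, by omega⟩
  rw [hq, chPos_mul] at e1
  exact ⟨q, by linarith⟩

end chain
end SC

namespace SC
open FreeGroup
set_option linter.unusedSectionVars false

section wlines
variable {S : IndexedStructure}

/-- argument word -/
def wX {m : ℕ} (as : Fin (S.arity m) → S.A) : List (GenSym S.A × Bool) :=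
  List.ofFn fun i => (GenSym.elt (as i), true)

open Classical in
/-- modified argument word -/
noncomputable def wY {m : ℕ} (as : Fin (S.arity m) → S.A) : List (GenSym S.A × Bool) :=
  if S.isFunc m then
    if (wX as).head? = some (GenSym.elt (S.funcInterp m as), true) then (wX as).tail
    else (GenSym.elt (S.funcInterp m as), false) :: wX as
  else wX as

/-- block heads -/
noncomputable def wZ {m : ℕ} (as : Fin (S.arity m) → S.A) (k : ℤ) : List (GenSym S.A × Bool) :=
  if k % 100 = 0 then wY as else wX as

/-- exponents -/
def wE (m : ℕ) (k : ℤ) : ℕ := 100 * m + 1 + (k % 100).toNat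

/-- blocks -/
noncomputable def wB {m : ℕ} (as : Fin (S.arity m) → S.A) (k : ℤ) : List (GenSym S.A × Bool) :=
  wZ as k ++ List.replicate (wE m k) (GenSym.b, true)

/-- label -/
noncomputable def wL {m : ℕ} (as : Fin (S.arity m) → S.A) : ℤ → GenSym S.A × Bool := lab (wB as)

/-- length -/
noncomputable def wN {m : ℕ} (as : Fin (S.arity m) → S.A) : ℕ :=
  (wY as).length + 99 * S.arity m + 10000 * m + 5050

variable {m : ℕ} {as : Fin (S.arity m) → S.A}

theorem wX_length : (wX as).length = S.arity m := by simp [wX]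
theorem wX_ne (hm : 1 ≤ m) : wX as ≠ [] := by
  intro h
  have := congrArg List.length h
  rw [wX_length] at this
  have := S.arity_pos m hm
  simp at *; omega
theorem mem_wX {c : GenSym S.A × Bool} (h : c ∈ wX as) : ∃ a, c = (GenSym.elt a, true) := by
  simp only [wX, List.mem_ofFn] at h
  obtain ⟨i, rfl⟩ := h
  exact ⟨_, rfl⟩

theorem wY_cases (as : Fin (S.arity m) → S.A) : wY as = wX as ∨ wY as = (wX as).tail ∨
    (wY as = (GenSym.elt (S.funcInterp m as), false) :: wX as ∧
      (wX as).head? ≠ some (GenSym.elt (S.funcInterp m as), true)) := by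
  unfold wY
  split_ifs with h1 h2
  · exact .inr (.inl rfl)
  · exact .inr (.inr ⟨rfl, h2⟩)
  · exact .inl rfl

theorem wY_length : (wY as).length ≤ S.arity m + 1 ∧ S.arity m ≤ (wY as).length + 1 := by
  rcases wY_cases as with h | h | ⟨h, -⟩ <;> rw [h] <;> simp [wX_length] <;> omega

theorem mem_wZ {c : GenSym S.A × Bool} {k : ℤ} (h : c ∈ wZ as k) : ∃ a e, c = (GenSym.elt a, e) := by
  have hX : ∀ c, c ∈ wX as → ∃ a e, c = (GenSym.elt a, e) := fun c hc => by
    obtain ⟨a, rfl⟩ := mem_wX hc; exact ⟨_, _, rfl⟩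
  unfold wZ at h
  split_ifs at h
  · rcases wY_cases as with h' | h' | ⟨h', -⟩ <;> rw [h'] at h
    · exact hX _ h
    · exact hX _ (List.mem_of_mem_tail h)
    · rcases List.mem_cons.1 h with rfl | h
      · exact ⟨_, _, rfl⟩
      · exact hX _ h
  · exact hX _ h

theorem wZ_per (k : ℤ) : wZ as (100 + k) = wZ as k := by
  unfold wZ; rw [show (100 + k) % 100 = k % 100 by omega]
theorem wE_per (k : ℤ) : wE m (100 + k) = wE m k := by
  unfold wE; rw [show (100 + k) % 100 = k % 100 by omega]
theorem wB_per (k : ℤ) : wB as (100 + k) = wB as k := by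
  unfold wB; rw [wZ_per, wE_per]
theorem wE_pos (k : ℤ) : 0 < wE m k := by unfold wE; omega
theorem wB_ne (k : ℤ) : wB as k ≠ [] := by
  have := wE_pos (m := m) k
  intro h
  have := congrArg List.length h
  simp [wB] at this
  omega

theorem wTail : Tail (wL as) (pos (wB as)) (wZ as) (wE m) (GenSym.b, true) := by
  refine tail_lab (Z := wZ as) (E := wE m) (y := (GenSym.b, true)) (fun k hk => ?_) wE_pos
  obtain ⟨a, e, h⟩ := mem_wZ hk
  simp at h

theorem wPos_nat (j : ℕ) (hj : j ≤ 99) :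
    2 * pos (wB as) (j + 1) = 2 * (wY as).length + 2 * j * S.arity m + 200 * (j + 1) * m + (j + 1) * (j + 2) := by
  induction j with
  | zero =>
    have := pos_succ (wB as) 0
    rw [pos_zero] at this
    simp [wB, wZ, wE] at this ⊢
    rw [this]; ring
  | succ j ih =>
    push_cast
    rw [pos_succ, mul_add, ih (by omega)]
    have e : ((j : ℤ) + 1) % 100 = j + 1 := Int.emod_eq_of_lt (by omega) (by omega)
    simp only [wB, wZ, wE, e, if_neg (show ¬ ((j : ℤ) + 1 = 0) by omega), List.length_append,
      List.length_replicate, wX_length]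
    rw [show ((j : ℤ) + 1).toNat = j + 1 by omega]
    push_cast
    ring

theorem wPos : pos (wB as) 100 = wN as := by
  have := wPos_nat (as := as) 99 le_rfl
  unfold wN
  push_cast at this ⊢
  linarith

theorem wL_per (t : ℤ) : wL as (wN as + t) = wL as t := by
  rw [← wPos]
  exact lab_per wB_ne wB_per t

theorem wPos_mul (q k : ℤ) : pos (wB as) (q * 100 + k) = q * wN as + pos (wB as) k := by
  rw [← wPos]
  exact pos_per_mul wB_per q k

theorem wL_cases (t : ℤ) : wL as t = (.b, true) ∨ ∃ a e, wL as t = (.elt a, e) := by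
  obtain ⟨k, -, -, h | h⟩ := (wTail (as := as)).cases t
  · exact .inl h.1
  · exact .inr (mem_wZ h.2.1)

theorem wL_neg (hm : 1 ≤ m) {t : ℤ} (h : (wL as t).2 = false) : (wN as : ℤ) ∣ t ∧ ∃ a, wL as t = (.elt a, false) ∧
    wL as (t + 1) ≠ (.elt a, true) ∧ wL as (t - 1) = (.b, true) := by
  have T := wTail (as := as)
  obtain ⟨k, h1, h2, h3 | ⟨-, h4, h5, i, hi, h6, h7⟩⟩ := T.cases t
  · rw [h3.1] at h; simp at h
  have hX : ∀ c ∈ wX as, c.2 = false → False := fun c hc h => by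
    obtain ⟨a, rfl⟩ := mem_wX hc; simp at h
  by_cases hk : k % 100 = 0
  swap
  · unfold wZ at h4; rw [if_neg hk] at h4; exact (hX _ h4 h).elim
  have hZ : wZ as k = wY as := by unfold wZ; rw [if_pos hk]
  rcases wY_cases as with h' | h' | ⟨h', hh⟩
  · rw [hZ, h'] at h4; exact (hX _ h4 h).elim
  · rw [hZ, h'] at h4; exact (hX _ (List.mem_of_mem_tail h4) h).elim
  · rw [h'] at hZ
    have hi0 : i = 0 := by
      by_contra hc
      obtain ⟨j, rfl⟩ := Nat.exists_eq_succ_of_ne_zero hc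
      simp only [hZ, List.getElem_cons_succ] at h7
      exact hX _ (List.getElem_mem _) (h7 ▸ h)
    subst hi0
    simp at h6
    subst h6
    obtain ⟨q, rfl⟩ : ∃ q, k = q * 100 + 0 := ⟨k / 100, by omega⟩
    refine ⟨⟨q, by rw [wPos_mul, pos_zero]; ring⟩, S.funcInterp m as, ?_, ?_, T.prev _⟩
    · rw [h7]; simp only [hZ, List.getElem_cons_zero]
    · have := T.z (q * 100 + 0) 1 (by rw [hZ]; have := List.length_pos_iff.2 (wX_ne (as := as) hm); simp; omega)
      simp only [Nat.cast_one] at this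
      rw [this]
      simp only [hZ, List.getElem_cons_succ]
      intro he
      apply hh
      rw [List.head?_eq_getElem?, ← he]
      simp

/-- a good full block in a window -/
theorem wWin (s : ℤ) : ∃ k, s < pos (wB as) k ∧ 1 ≤ k % 100 ∧ k % 100 ≤ 98 ∧
    pos (wB as) k + S.arity m + wE m k ≤ s + 4 * S.arity m + 400 * m + 203 := by
  have T := wTail (as := as)
  obtain ⟨k, h1, h2⟩ := cover T.lt s
  have hY := (wY_length (as := as)).1
  have st : ∀ k, pos (wB as) (k + 1) = pos (wB as) k + (if k % 100 = 0 then ((wY as).length : ℤ) else S.arity m) + (100 * m + 1 + k % 100) := by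
    intro k
    rw [T.step k]
    simp only [wZ, wE]
    split_ifs <;> simp [wX_length] <;> omega
  have hE : ∀ k, (wE m k : ℤ) = 100 * m + 1 + k % 100 := fun k => by simp only [wE]; push_cast; omega
  have s0 := st k
  have s1 := st (k + 1)
  have s2 := st (k + 1 + 1)
  by_cases c1 : k % 100 ≤ 97
  · refine ⟨k + 1, by omega, by omega, by omega, ?_⟩
    rw [hE]
    split_ifs at s0 <;> omega
  by_cases c2 : k % 100 = 98
  · refine ⟨k + 1 + 1 + 1, by omega, by omega, by omega, ?_⟩
    rw [hE]
    rw [if_neg (by omega)] at s0 s1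
    rw [if_pos (by omega)] at s2
    omega
  · refine ⟨k + 1 + 1, by omega, by omega, by omega, ?_⟩
    rw [hE]
    rw [if_neg (by omega)] at s0
    rw [if_pos (by omega)] at s1
    omega

theorem wWin_le {l : ℕ} (hl : wN as ≤ 20 * l) : 4 * S.arity m + 400 * m + 205 ≤ l := by
  have := (wY_length (as := as)).2
  unfold wN at hl
  omega

/-- any long window contains both letters -/
theorem wMem (hm : 1 ≤ m) (s : ℤ) {l : ℕ} (hl : wN as ≤ 20 * l) : (∃ i : ℕ, i < l ∧ wL as (s + i) = (.b, true)) ∧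
    (∃ i : ℕ, i < l ∧ ∃ a, wL as (s + i) = (.elt a, true)) := by
  have T := wTail (as := as)
  obtain ⟨k, h1, h3, h4, h2⟩ := wWin (as := as) s
  have hl' := wWin_le hl
  have hZ : wZ as k = wX as := by unfold wZ; rw [if_neg (by omega)]
  have hX := List.length_pos_iff.2 (wX_ne (as := as) hm)
  constructor
  · refine ⟨(pos (wB as) k - 1 - s).toNat, by omega, ?_⟩
    have := T.prev k
    rw [← this]; congr 1; omega
  · refine ⟨(pos (wB as) k - s).toNat, by omega, ?_⟩
    have := T.z k 0 (by rw [hZ]; exact hX)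
    simp only [hZ] at this
    obtain ⟨a, ha⟩ := mem_wX (List.getElem_mem hX)
    refine ⟨a, ?_⟩
    rw [← ha, ← this]; congr 1; simp; omega

theorem w_small {m' : ℕ} {as' : Fin (S.arity m') → S.A} (hm : 1 ≤ m) (hm' : 1 ≤ m') {s s' : ℤ} {l : ℕ}
    (hl : wN as ≤ 20 * l) (hw : ∀ i : ℕ, i < l → wL as (s + i) = wL as' (s' + i)) :
    wN as = wN as' ∧ ∀ i, wL as (s + i) = wL as' (s' + i) := by
  have T := wTail (as := as)
  have T' := wTail (as := as')
  have hl' := wWin_le hl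
  obtain ⟨k, h1, h3, h4, h2⟩ := wWin (as := as) s
  have hZ : wZ as k = wX as := by unfold wZ; rw [if_neg (by omega)]
  have hZ1 : wZ as (k + 1) = wX as := by unfold wZ; rw [if_neg (by omega)]
  obtain ⟨k', e1, e0, e2⟩ := align T T' (k := k) (t' := s' + (pos (wB as) k - s)) (fun i h1 h2 => by
    rw [hZ, wX_length] at h2
    have := hw (pos (wB as) k + i - s).toNat (by omega)
    rw [show s + ((pos (wB as) k + i - s).toNat : ℤ) = pos (wB as) k + i by omega] at this
    rw [this]; congr 1; omega) (by rw [hZ]; exact wX_ne hm) (by rw [hZ1]; exact wX_ne hm)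
  rw [hZ] at e0
  have e3 : wE m k = wE m' k' := by
    rcases e2 with e2 | ⟨e2, e4⟩
    · exact e2
    · exfalso
      have c : (k' + 1) % 100 = 0 := by
        by_contra c
        unfold wZ at e2
        rw [if_neg c] at e2
        exact wX_ne hm' e2
      have := e4 (by unfold wZ; rw [if_neg (by omega)]; exact wX_ne hm')
      unfold wE at this
      omega
  have e4 : m = m' ∧ k % 100 = k' % 100 := by unfold wE at e3; omega
  obtain ⟨rfl, e5⟩ := e4
  have hZ' : wZ as' k' = wX as' := by unfold wZ; rw [if_neg (by omega)]
  have e6 : as = as' := by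
    rw [hZ'] at e0
    have := List.ofFn_injective e0
    funext i
    have := congrFun this i
    simp at this
    exact this.symm
  subst e6
  refine ⟨rfl, ?_⟩
  obtain ⟨q, hq⟩ : ∃ q, k' = q * 100 + k := ⟨(k' - k) / 100, by omega⟩
  rw [hq, wPos_mul] at e1
  intro i
  have hs : s' + i = q * wN as + (s + i) := by linarith
  rw [hs]
  rw [per_int wL_per]

end wlines
end SC

namespace SC
open FreeGroup
set_option linter.unusedSectionVars false

/-- torsion letters -/
inductive Fl {A : Type} (p₁ p₂ : ℕ) : GenSym A → ℕ → Prop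
  | f1 : Fl p₁ p₂ .f1 p₁
  | f2 : Fl p₁ p₂ .f2 p₂

/-- base lines of type torsion or chain -/
inductive FC {A : Type} (p₁ p₂ : ℕ) : (ℤ → GenSym A × Bool) → ℕ → Prop
  | F {f : GenSym A} {p : ℕ} (h : Fl p₁ p₂ f p) : FC p₁ p₂ (fun _ => (f, true)) p
  | C {x y : GenSym A} {lo : ℕ} (h : Chn x y lo) : FC p₁ p₂ (chL x y lo) (chN lo)

/-- base lines -/
inductive Base (S : IndexedStructure) (p₁ p₂ : ℕ) : (ℤ → GenSym S.A × Bool) → ℕ → Prop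
  | FC {σ : ℤ → GenSym S.A × Bool} {n : ℕ} (h : FC p₁ p₂ σ n) : Base S p₁ p₂ σ n
  | W (m : ℕ) (hm : 1 ≤ m) (as : Fin (S.arity m) → S.A) (h : S.isFunc m ∨ S.relInterp m as) :
      Base S p₁ p₂ (wL as) (wN as)

section
variable {S : IndexedStructure} {p₁ p₂ : ℕ} {σ σ' : ℤ → GenSym S.A × Bool} {n n' : ℕ}

theorem Fl.big (h1 : 10 ^ 10 < p₁) (h2 : 10 ^ 10 < p₂) {A : Type} {f : GenSym A} {p : ℕ} (h : Fl p₁ p₂ f p) :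
    10 ^ 10 < p := by
  cases h <;> assumption

theorem Fl.fn {A : Type} {f : GenSym A} {p p' : ℕ} (h : Fl p₁ p₂ f p) (h' : Fl p₁ p₂ f p') : p = p' := by
  cases h <;> cases h' <;> rfl

theorem chN_ge (lo : ℕ) : 100 ≤ chN lo := by unfold chN; nlinarith

theorem Base.npos (h1 : 10 ^ 10 < p₁) (h2 : 10 ^ 10 < p₂) (h : Base S p₁ p₂ σ n) : 100 ≤ n := by
  rcases h with ⟨h | h⟩ | ⟨m, hm, as, h⟩
  · have := h.big h1 h2; omega
  · exact chN_ge _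
  · unfold wN; omega

theorem Base.per (h : Base S p₁ p₂ σ n) (t : ℤ) : σ (n + t) = σ t := by
  rcases h with ⟨h | h⟩ | ⟨m, hm, as, h⟩
  · rfl
  · exact chL_per t
  · exact wL_per t

theorem FC.true {A : Type} {σ : ℤ → GenSym A × Bool} (h : FC p₁ p₂ σ n) (t : ℤ) : (σ t).2 = true := by
  rcases h with h | h
  · rfl
  · rcases chL_cases h.ne t with e | e <;> rw [e]

theorem Base.neg (h : Base S p₁ p₂ σ n) {t : ℤ} (ht : (σ t).2 = false) : (n : ℤ) ∣ t := by
  rcases h with h | ⟨m, hm, as, h⟩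
  · rw [h.true] at ht; simp at ht
  · exact (wL_neg hm ht).1

theorem Base.red (h : Base S p₁ p₂ σ n) : Red σ := by
  intro t he
  rcases h with h | ⟨m, hm, as, h⟩
  · have := congrArg Prod.snd he
    rw [ibar, h.true, h.true] at this
    simp at this
  · by_cases h0 : (wL as t).2 = false
    · obtain ⟨-, a, e1, e2, -⟩ := wL_neg hm h0
      rw [e1] at he
      exact e2 he
    · by_cases h1 : (wL as (t + 1)).2 = false
      · obtain ⟨-, a, e1, e2, e3⟩ := wL_neg hm h1
        rw [add_sub_cancel_right] at e3
        rw [e1, e3] at he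
        simp [ibar] at he
      · have := congrArg Prod.snd he
        simp at h0 h1
        rw [ibar, h0, h1] at this
        simp at this

theorem Chn.W_y {A : Type} {x y : GenSym A} {lo : ℕ} (h : Chn x y lo) : y ≠ .b ∧ ∀ a, y ≠ .elt a := by
  cases h <;> simp

theorem FC.small (h1 : 10 ^ 10 < p₁) (h2 : 10 ^ 10 < p₂) (h : FC p₁ p₂ σ n) (h' : Base S p₁ p₂ σ' n') {s s' : ℤ}
    {l : ℕ} (hl : n ≤ 100 * l) (hw : ∀ i : ℕ, i < l → σ (s + i) = σ' (s' + i)) :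
    n = n' ∧ ∀ i, σ (s + i) = σ' (s' + i) := by
  have big : ∀ {x y : GenSym S.A} {lo}, Chn x y lo → 2 * ((lo : ℤ) + 1000) ^ 2 + 2 < 10 ^ 8 := fun h => by
    have := h.lo_le
    zify at this
    nlinarith
  cases h with
  | @F f _ h =>
    have hp := h.big h1 h2
    have hl' : 10 ^ 8 < l := by omega
    rcases h' with ⟨h' | @⟨x, y, lo, h'⟩⟩ | ⟨m, hm, as, h'⟩
    · have e := hw 0 (by omega)
      simp only [Prod.mk.injEq, and_true] at e
      subst e
      exact ⟨h.fn h', fun _ => rfl⟩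
    · exfalso
      have := big h'
      obtain ⟨⟨i, hi, hx⟩, ⟨j, hj, hy⟩⟩ := chMem (lo := lo) h'.ne s'
      rw [← hw _ (by omega)] at hx hy
      have := hx.symm.trans hy
      simp at this
      exact h'.ne this
    · exfalso
      have e := hw 0 (by omega)
      rcases wL_cases (as := as) (s' + (0 : ℕ)) with c | ⟨a, c', c⟩ <;> rw [c] at e <;> cases h <;> simp at e
  | @C x y lo h =>
    have hl' := chWin_le hl
    obtain ⟨⟨i, hi, hx⟩, ⟨j, hj, hy⟩⟩ := chMem (lo := lo) h.ne s
    rw [hw _ (by omega)] at hx hy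
    rcases h' with ⟨h' | @⟨x', y', lo', h'⟩⟩ | ⟨m, hm, as, h'⟩
    · exfalso
      have := hx.symm.trans hy
      simp at this
      exact h.ne this
    · obtain ⟨rfl, rfl, rfl, q, hq⟩ := ch_small h h' hl hw
      refine ⟨rfl, fun i => ?_⟩
      rw [show s' + i = q * chN lo + (s + i) by linarith, per_int chL_per]
    · exfalso
      rcases wL_cases (as := as) (s' + j) with c | ⟨a, c', c⟩ <;> rw [c] at hy <;> simp at hy
      · exact h.W_y.1 hy.symm
      · exact h.W_y.2 _ hy.1.symm

theorem Base.small (h1 : 10 ^ 10 < p₁) (h2 : 10 ^ 10 < p₂) (h : Base S p₁ p₂ σ n) (h' : Base S p₁ p₂ σ' n') {s s' : ℤ}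
    {l : ℕ} (hl : n ≤ 20 * l) (hw : ∀ i : ℕ, i < l → σ (s + i) = σ' (s' + i)) :
    n = n' ∧ ∀ i, σ (s + i) = σ' (s' + i) := by
  rcases h with h | ⟨m, hm, as, h⟩
  · exact h.small h1 h2 h' (by omega) hw
  · obtain ⟨⟨i, hi, hx⟩, ⟨j, hj, a, hy⟩⟩ := wMem (as := as) hm s hl
    rw [hw _ (by omega)] at hx hy
    rcases h' with ⟨h' | @⟨x, y, lo, h'⟩⟩ | ⟨m, hm', as', h'⟩
    · have := hx.symm.trans hy
      simp at this
    · exfalso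
      rcases chL_cases (lo := lo) h'.ne (s' + i) with e | e <;> rcases chL_cases (lo := lo) h'.ne (s' + j) with e' | e' <;>
        rw [hx] at e <;> rw [hy] at e' <;> simp only [Prod.mk.injEq, and_true] at e e'
      · rw [← e'] at e; simp at e
      · exact h'.W_y.2 _ e'.symm
      · exact h'.W_y.1 e.symm
      · rw [← e'] at e; simp at e
    · exact w_small hm hm' hl hw

/-- all labels: shifts of base lines and of their reversals -/
def RR (S : IndexedStructure) (p₁ p₂ : ℕ) (σ : ℤ → GenSym S.A × Bool) (n : ℕ) : Prop :=
  ∃ σ₀, Base S p₁ p₂ σ₀ n ∧ ∃ s, (∀ i, σ i = σ₀ (s + i)) ∨ (∀ i, σ i = ibar (σ₀ (s - i)))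

theorem Base.mixed (h1 : 10 ^ 10 < p₁) (h2 : 10 ^ 10 < p₂) (h : Base S p₁ p₂ σ n) (h' : Base S p₁ p₂ σ' n') {s s' : ℤ}
    (hw : ∀ i : ℕ, i < 3 → σ (s + i) = ibar (σ' (s' - i))) : False := by
  have hn := h.npos h1 h2
  have hn' := h'.npos h1 h2
  have key : ∀ i j : ℕ, i < j → j < 3 → (σ (s + i)).2 = false → (σ (s + j)).2 = false → False := by
    intro i j hij hj e1 e2
    have := dvd_sub (h.neg e2) (h.neg e1)
    have := Int.le_of_dvd (by omega) this
    omega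
  have key' : ∀ i j : ℕ, i < j → j < 3 → (σ' (s' - i)).2 = false → (σ' (s' - j)).2 = false → False := by
    intro i j hij hj e1 e2
    have := dvd_sub (h'.neg e1) (h'.neg e2)
    have := Int.le_of_dvd (by omega) this
    omega
  have c : ∀ i < 3, (σ (s + (i : ℕ))).2 = !(σ' (s' - (i : ℕ))).2 := fun i hi => by rw [hw i hi]; rfl
  have c0 := c 0 (by omega)
  have c1 := c 1 (by omega)
  have c2 := c 2 (by omega)
  have k1 := key 0 1 (by omega) (by omega)
  have k2 := key 0 2 (by omega) (by omega)
  have k3 := key 1 2 (by omega) (by omega)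
  have k1' := key' 0 1 (by omega) (by omega)
  have k2' := key' 0 2 (by omega) (by omega)
  have k3' := key' 1 2 (by omega) (by omega)
  rw [c0, c1] at k1
  rw [c0, c2] at k2
  rw [c1, c2] at k3
  generalize (σ' (s' - (0 : ℕ))).2 = a at *
  generalize (σ' (s' - (1 : ℕ))).2 = b at *
  generalize (σ' (s' - (2 : ℕ))).2 = d at *
  clear c c0 c1 c2 key key'
  revert k1 k2 k3 k1' k2' k3'
  cases a <;> cases b <;> cases d <;> simp

/-- reduction of the comparison of two labels to base lines -/
theorem RR.small_aux (h1 : 10 ^ 10 < p₁) (h2 : 10 ^ 10 < p₂) (K : ℕ)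
    {σ₀ : ℤ → GenSym S.A × Bool} (h : Base S p₁ p₂ σ₀ n) {s : ℤ}
    (hs : (∀ i, σ i = σ₀ (s + i)) ∨ (∀ i, σ i = ibar (σ₀ (s - i)))) (h' : RR S p₁ p₂ σ' n')
    (hsm : ∀ ⦃σ₀' n'⦄, Base S p₁ p₂ σ₀' n' → ∀ ⦃s s' : ℤ⦄ ⦃l : ℕ⦄, n ≤ K * l → (∀ i : ℕ, i < l → σ₀ (s + i) = σ₀' (s' + i)) →
      n = n' ∧ ∀ i, σ₀ (s + i) = σ₀' (s' + i))
    {l : ℕ} (hl3 : 3 ≤ l) (hl : n ≤ K * l) (hw : ∀ i : ℕ, i < l → σ i = σ' i) : σ = σ' ∧ n = n' := by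
  obtain ⟨σ₀', h', s', hs'⟩ := h'
  rcases hs with hs | hs <;> rcases hs' with hs' | hs'
  · obtain ⟨e1, e2⟩ := hsm h' (s := s) (s' := s') hl (fun i hi => by rw [← hs, ← hs', hw i hi])
    exact ⟨by funext i; rw [hs, hs', e2], e1⟩
  · exact (h.mixed h1 h2 h' (s := s) (s' := s') (fun i hi => by rw [← hs, ← hs', hw i (by omega)])).elim
  · exact (h'.mixed h1 h2 h (s := s') (s' := s) (fun i hi => by rw [← hs, ← hs', hw i (by omega)])).elim
  · obtain ⟨e1, e2⟩ := hsm h' (s := s - (l - 1 : ℕ)) (s' := s' - (l - 1 : ℕ)) hl (fun i hi => by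
      have := hw (l - 1 - i) (by omega)
      rw [hs, hs'] at this
      have := ibar_inj this
      rw [show s - ((l - 1 : ℕ) : ℤ) + i = s - (l - 1 - i : ℕ) by omega, this]
      congr 1; omega)
    refine ⟨?_, e1⟩
    funext i
    rw [hs, hs']
    have := e2 ((l - 1 : ℕ) - i)
    rw [show s - ((l - 1 : ℕ) : ℤ) + ((l - 1 : ℕ) - i) = s - i by ring, show s' - ((l - 1 : ℕ) : ℤ) + ((l - 1 : ℕ) - i) = s' - i by ring] at this
    rw [this]

theorem RR.npos (h1 : 10 ^ 10 < p₁) (h2 : 10 ^ 10 < p₂) (h : RR S p₁ p₂ σ n) : 100 ≤ n := by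
  obtain ⟨_, h, -⟩ := h; exact h.npos h1 h2

theorem RR.occ (S : IndexedStructure) (p₁ p₂ : ℕ) (a : GenSym S.A) : ∃ σ n, RR S p₁ p₂ σ n ∧ σ 0 = (a, true) := by
  have : ∀ {x y : GenSym S.A} {lo}, Chn x y lo → ∃ σ n, RR S p₁ p₂ σ n ∧ σ 0 = (x, true) := fun {x y lo} h => by
    refine ⟨_, _, ⟨_, .FC (.C h), 0, .inl fun i => rfl⟩, ?_⟩
    have := (chTail (lo := lo) h.ne).z 0 0 (by simp)
    rw [pos_zero] at this
    simpa using this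
  cases a with
  | elt a => exact this (.ac a)
  | b => exact this .b1
  | c => exact this .c1
  | d => exact this .d1
  | f1 => exact this .v1
  | f2 => exact this .v2

theorem RR.sys (h1 : 10 ^ 10 < p₁) (h2 : 10 ^ 10 < p₂) : LabSys (RR S p₁ p₂) where
  npos σ n h := by have := h.npos h1 h2; omega
  per := by
    rintro σ n ⟨σ₀, h, s, hs | hs⟩ t
    · rw [hs, hs, ← h.per (s + t)]; congr 1; ring
    · rw [hs, hs, ← h.per (s - (n + t))]; congr 2; ring
  red := by
    rintro σ n ⟨σ₀, h, s, hs | hs⟩ t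
    · rw [hs, hs, ← add_assoc]; exact h.red _
    · rw [hs, hs, ibar_ibar]
      intro he
      have := h.red (s - (t + 1))
      rw [show s - (t + 1) + 1 = s - t by ring] at this
      exact this he.symm
  shift := by
    rintro σ n ⟨σ₀, h, s, hs | hs⟩ t
    · exact ⟨σ₀, h, s + t, .inl fun i => by dsimp only; rw [hs, add_assoc]⟩
    · exact ⟨σ₀, h, s - t, .inr fun i => by dsimp only; rw [hs]; congr 2; ring⟩
  rev := by
    rintro σ n ⟨σ₀, h, s, hs | hs⟩
    · exact ⟨σ₀, h, s - 1, .inr fun i => by dsimp only; rw [hs]; congr 2; ring⟩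
    · exact ⟨σ₀, h, s + 1, .inl fun i => by dsimp only; rw [hs, ibar_ibar]; congr 1; ring⟩
  small := by
    rintro σ n ⟨σ₀, h, s, hs⟩ σ' n' h' l hl hw
    have := h.npos h1 h2
    exact RR.small_aux h1 h2 20 h hs h' (fun _ _ h' _ _ _ => h.small h1 h2 h') (by omega) hl hw
  occ := RR.occ S p₁ p₂

/-- labels of type FC -/
def RF (S : IndexedStructure) (p₁ p₂ : ℕ) (σ : ℤ → GenSym S.A × Bool) (n : ℕ) : Prop :=
  ∃ σ₀, FC p₁ p₂ σ₀ n ∧ ∃ s, (∀ i, σ i = σ₀ (s + i)) ∨ (∀ i, σ i = ibar (σ₀ (s - i)))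

theorem RF.toRR (h : RF S p₁ p₂ σ n) : RR S p₁ p₂ σ n := by
  obtain ⟨σ₀, h, hs⟩ := h; exact ⟨σ₀, .FC h, hs⟩

theorem RR.toRF (h : RR S p₁ p₂ σ n) {t : ℤ} (ht : (σ t).1 = .f1 ∨ (σ t).1 = .f2) : RF S p₁ p₂ σ n := by
  obtain ⟨σ₀, h | ⟨m, hm, as, -⟩, s, hs⟩ := h
  · exact ⟨σ₀, h, s, hs⟩
  · exfalso
    have : ∃ u, (σ t).1 = (wL as u).1 := by
      rcases hs with hs | hs
      · exact ⟨_, by rw [hs]⟩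
      · exact ⟨_, by rw [hs]; rfl⟩
    obtain ⟨u, hu⟩ := this
    rcases wL_cases (as := as) u with c | ⟨a, c', c⟩ <;> rw [hu, c] at ht <;> simp at ht

theorem RF.small (h1 : 10 ^ 10 < p₁) (h2 : 10 ^ 10 < p₂) (h : RF S p₁ p₂ σ n) (h' : RR S p₁ p₂ σ' n') {l : ℕ}
    (hl3 : 3 ≤ l) (hl : n ≤ 100 * l) (hw : ∀ i : ℕ, i < l → σ i = σ' i) : σ = σ' ∧ n = n' := by
  obtain ⟨σ₀, h, s, hs⟩ := h
  exact RR.small_aux h1 h2 100 (.FC h) hs h' (fun _ _ h' _ _ _ => h.small h1 h2 h') hl3 hl hw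

/-- the dichotomy for lines of type FC -/
theorem RF.cases (h : RF S p₁ p₂ σ n) : (∃ f e, Fl p₁ p₂ f n ∧ ∀ t, σ t = (f, e)) ∨
    ((∀ (t : ℤ) (l : ℕ), n ≤ 100 * l → ¬ ∃ c, ∀ i : ℕ, i < l → σ (t + i) = c) ∧
      (∀ τ : ℤ, (∀ t, σ (t + τ) = σ t) → (n : ℤ) ∣ τ)) := by
  obtain ⟨σ₀, h, s, hs⟩ := h
  cases h with
  | @F f _ h =>
    left
    rcases hs with hs | hs
    · exact ⟨f, true, h, hs⟩
    · exact ⟨f, false, h, hs⟩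
  | @C x y lo h =>
    right
    constructor
    · rintro t l hl ⟨c, hc⟩
      have hl' := chWin_le hl
      rcases hs with hs | hs
      · obtain ⟨⟨i, hi, hx⟩, ⟨j, hj, hy⟩⟩ := chMem (lo := lo) h.ne (s + t)
        rw [add_assoc, ← hs, hc _ (by omega)] at hx hy
        have := hx.symm.trans hy
        simp at this
        exact h.ne this
      · obtain ⟨⟨i, hi, hx⟩, ⟨j, hj, hy⟩⟩ := chMem (lo := lo) h.ne (s - t - (l - 1 : ℕ))
        have hc' : ∀ i : ℕ, i < l → chL x y lo (s - t - (l - 1 : ℕ) + i) = ibar c := fun i hi => by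
          have := hc (l - 1 - i) (by omega)
          rw [hs] at this
          rw [← this, ibar_ibar]; congr 1; omega
        rw [hc' _ (by omega)] at hx hy
        have := hx.symm.trans hy
        simp at this
        exact h.ne this
    · intro τ hτ
      rcases hs with hs | hs
      · have := (ch_small h h (s := s) (s' := s + τ) (m := chN lo) (by omega) (fun i _ => by
          have := hτ i
          rw [hs, hs] at this
          rw [← this]; congr 1; ring)).2.2.2
        simpa using this
      · have := (ch_small h h (s := s) (s' := s + τ) (m := chN lo) (by omega) (fun i _ => by
          have := hτ (-i - τ)
          rw [hs, hs] at this
          rw [show s + (i : ℤ) = s - (-i - τ + τ) by ring, ibar_inj this]; congr 1; ring)).2.2.2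
        simpa using this

end
end SC

namespace SC
open FreeGroup
set_option linter.unusedSectionVars false

theorem pre_lab {α : Type*} [DecidableEq α] [Nonempty (α × Bool)] {B : ℤ → List (α × Bool)} (hB : ∀ k, B k ≠ [])
    (k : ℕ) : pre (lab B) (pos B k) = ((List.range k).map fun i : ℕ => mk (B i)).prod := by
  induction k with
  | zero => simp [pos_zero, pre_zero]
  | succ k ih =>
    push_cast
    rw [pos_succ, pre_add_nat, ih, List.range_succ]
    simp only [List.map_append, List.prod_append, List.map_cons, List.map_nil, List.prod_singleton]
    congr 2
    refine List.ext_getElem (by simp [seg_length]) fun i h1 h2 => ?_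
    rw [seg_getElem, lab_spec hB _ _ h2]

theorem mk_replicate {α : Type*} (a : α) (k : ℕ) : (mk (List.replicate k (a, true)) : FreeGroup α) = FreeGroup.of a ^ k := by
  induction k with
  | zero => rfl
  | succ k ih => rw [List.replicate_succ', ← mul_mk, ih, pow_succ]; rfl

section
variable {S : IndexedStructure} {p₁ p₂ : ℕ} {σ σ' : ℤ → GenSym S.A × Bool} {n n' : ℕ}

theorem pre_chL (x y : GenSym S.A) (lo : ℕ) : pre (chL x y lo) (chN lo) = chainProd lo (FreeGroup.of x) (FreeGroup.of y) := by
  rw [← chPos (x := x) (y := y)]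
  have := pre_lab (B := chB x y lo) chB_ne 1000
  rw [Nat.cast_ofNat] at this
  rw [chL, this]
  unfold chainProd
  refine congrArg List.prod (List.map_congr_left fun k hk => ?_)
  rw [List.mem_range] at hk
  have : chE lo k = (lo + k + 1) ^ 2 := by
    unfold chE
    rw [show ((k : ℤ) % 1000).toNat = k by omega]
  rw [chB, this, ← mul_mk, mk_replicate]; rfl

theorem pre_const (f : GenSym S.A) (k : ℕ) : pre (fun _ => (f, true)) k = FreeGroup.of f ^ k := by
  have := pre_add_nat (fun _ => (f, true)) 0 k
  rw [zero_add, pre_zero, one_mul] at this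
  rw [this, ← mk_replicate]
  congr 1
  simp [seg]

theorem mk_ofFn {α : Type*} {k : ℕ} (a : Fin k → α) :
    (mk (List.ofFn fun i => (a i, true)) : FreeGroup α) = (List.ofFn fun i => FreeGroup.of (a i)).prod := by
  induction k with
  | zero => simp; rfl
  | succ k ih =>
    rw [List.ofFn_succ, List.ofFn_succ, List.prod_cons, ← ih, ← List.singleton_append, ← mul_mk]; rfl

/-- correction factor -/
noncomputable def wC {m : ℕ} (as : Fin (S.arity m) → S.A) : FreeGroup (GenSym S.A) :=
  open Classical in if S.isFunc m then (FreeGroup.of (GenSym.elt (S.funcInterp m as)))⁻¹ else 1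

theorem mk_wY {m : ℕ} (as : Fin (S.arity m) → S.A) : mk (wY as) = wC as * mk (wX as) := by
  unfold wY wC
  split_ifs with h1 h2
  · obtain ⟨l, hl⟩ : ∃ l, wX as = (GenSym.elt (S.funcInterp m as), true) :: l := by
      cases hX : wX as with
      | nil => rw [hX] at h2; simp at h2
      | cons a l => rw [hX] at h2; simp at h2; exact ⟨l, by rw [h2]⟩
    rw [hl, List.tail_cons, ← List.singleton_append, ← mul_mk]
    change _ = (mk [_])⁻¹ * _
    rw [inv_mul_cancel_left]
  · rw [← List.singleton_append, ← mul_mk, ← show (mk [(GenSym.elt (S.funcInterp m as), true)])⁻¹ = mk [(GenSym.elt (S.funcInterp m as), false)] from (mk_ibar _).symm]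
    rfl
  · simp

theorem pre_wL {m : ℕ} (as : Fin (S.arity m) → S.A) : pre (wL as) (wN as) =
    wC as * wProd m (fun i => FreeGroup.of (GenSym.elt (as i))) (FreeGroup.of GenSym.b) := by
  rw [← wPos]
  have := pre_lab (B := wB as) wB_ne 100
  rw [Nat.cast_ofNat] at this
  rw [wL, this]
  unfold wProd
  rw [show 100 = 99 + 1 by rfl, List.range_succ_eq_map, List.map_cons, List.map_cons, List.prod_cons, List.prod_cons, ← mul_assoc]
  have hX : mk (wX as) = (List.ofFn fun i => FreeGroup.of (GenSym.elt (as i))).prod := mk_ofFn _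
  refine congrArg₂ _ ?_ ?_
  · simp only [wB, ← mul_mk, mk_replicate, wE]
    simp only [wZ, Nat.cast_zero, Int.zero_emod, if_true, mk_wY, hX, mul_assoc]
    simp
  · rw [List.map_map, List.map_map]
    refine congrArg List.prod (List.map_congr_left fun k hk => ?_)
    rw [List.mem_range] at hk
    simp only [Function.comp]
    have e : ((k.succ : ℕ) : ℤ) % 100 = k.succ := Int.emod_eq_of_lt (by omega) (by push_cast; omega)
    simp only [wB, ← mul_mk, mk_replicate, wE, wZ, e]
    rw [if_neg (by push_cast; omega), hX]
    rw [show 100 * m + 1 + (k.succ : ℤ).toNat = 100 * m + k.succ + 1 by omega]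

theorem Base.mem (h : Base S p₁ p₂ σ n) : pre σ n ∈ Subgroup.normalClosure (grpRels S p₁ p₂) := by
  rcases h with ⟨@⟨f, p, h⟩ | @⟨x, y, lo, h⟩⟩ | ⟨m, hm, as, h⟩
  · rw [pre_const]
    apply Subgroup.subset_normalClosure
    cases h <;> simp [grpRels]
  · rw [pre_chL]
    apply Subgroup.subset_normalClosure
    have key : ∀ a : S.A, ∀ r, (r = chainProd 0 (FreeGroup.of (GenSym.elt a)) (FreeGroup.of GenSym.c) ∨
      r = chainProd 0 (FreeGroup.of (GenSym.elt a)) (FreeGroup.of GenSym.d)) → r ∈ grpRels S p₁ p₂ :=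
      fun a r hr => .inl (.inl (.inr ⟨a, hr⟩))
    cases h with
    | ac a => exact key a _ (.inl rfl)
    | ad a => exact key a _ (.inr rfl)
    | _ => left; left; left; simp only [Set.mem_insert_iff, Set.mem_singleton_iff, true_or, or_true]
  · rw [pre_wL]
    by_cases hf : S.isFunc m
    · have : wProd m (fun i => FreeGroup.of (GenSym.elt (as i))) (FreeGroup.of GenSym.b) * wC as ∈ Subgroup.normalClosure (grpRels S p₁ p₂) := by
        apply Subgroup.subset_normalClosure
        left; right
        exact ⟨m, hm, hf, as, by rw [wC, if_pos hf]⟩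
      have h2 := (Subgroup.normalClosure_normal (s := grpRels S p₁ p₂)).conj_mem _ this (wC as)
      simpa [mul_assoc] using h2
    · apply Subgroup.subset_normalClosure
      right
      exact ⟨m, hm, hf, as, h.resolve_left hf, by rw [wC, if_neg hf, one_mul]⟩

theorem RR.mem (h : RR S p₁ p₂ σ n) : pre σ n ∈ Subgroup.normalClosure (grpRels S p₁ p₂) := by
  obtain ⟨σ₀, h, s, hs | hs⟩ := h
  · have e : σ = fun i => σ₀ (s + i) := funext hs
    rw [e, pre_shift, add_comm, pre_n_add h.per, ← mul_assoc]
    simpa using (Subgroup.normalClosure_normal (s := grpRels S p₁ p₂)).conj_mem _ h.mem (pre σ₀ s)⁻¹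
  · have e : σ = fun i => ibar ((fun j => σ₀ (s + 1 + j)) (-1 - i)) := by
      funext i; rw [hs]; congr 2; ring
    rw [e, pre_rev (fun j => σ₀ (s + 1 + j)), pre_shift]
    have := pre_n_add h.per (s + 1 + -n)
    rw [show (n : ℤ) + (s + 1 + -n) = s + 1 by ring] at this
    rw [this]
    have h2 := (Subgroup.normalClosure_normal (s := grpRels S p₁ p₂)).conj_mem _ (inv_mem h.mem) (pre σ₀ (s + 1 + -n))⁻¹
    convert h2 using 1
    group

theorem le_cl : Subgroup.normalClosure (grpRels S p₁ p₂) ≤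
    Subgroup.closure {x | ∃ g σ n, RR S p₁ p₂ σ n ∧ x = g * pre σ n * g⁻¹} := by
  set K : Set (FreeGroup (GenSym S.A)) := {x | ∃ g σ n, RR S p₁ p₂ σ n ∧ x = g * pre σ n * g⁻¹} with hK
  have hn : (Subgroup.closure K).Normal := by
    have e : K = Group.conjugatesOfSet {x | ∃ σ n, RR S p₁ p₂ σ n ∧ x = pre σ n} := by
      ext x
      rw [Group.mem_conjugatesOfSet_iff]
      constructor
      · rintro ⟨g, σ, n, h, rfl⟩
        exact ⟨_, ⟨σ, n, h, rfl⟩, isConj_iff.2 ⟨g, rfl⟩⟩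
      · rintro ⟨_, ⟨σ, n, h, rfl⟩, hc⟩
        obtain ⟨g, hg⟩ := isConj_iff.1 hc
        exact ⟨g, σ, n, h, hg.symm⟩
    rw [e]
    exact Subgroup.normalClosure_normal
  have base : ∀ {σ n}, Base S p₁ p₂ σ n → pre σ n ∈ Subgroup.closure K := fun {σ n} h =>
    Subgroup.subset_closure ⟨1, σ, n, ⟨σ, h, 0, .inl fun i => by rw [zero_add]⟩, by simp⟩
  have fl : ∀ {f p}, Fl p₁ p₂ f p → FreeGroup.of f ^ p ∈ Subgroup.closure K := fun {f p} h => by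
    rw [← pre_const]; exact base (.FC (.F h))
  have ch : ∀ {x y lo}, Chn x y lo → chainProd lo (FreeGroup.of x) (FreeGroup.of y) ∈ Subgroup.closure K := fun {x y lo} h => by
    have := base (.FC (.C h))
    rwa [pre_chL] at this
  apply Subgroup.normalClosure_le_normal
  intro r hr
  rcases hr with ((hr | ⟨a, hr | hr⟩) | ⟨m, hm, hf, as, hr⟩) | ⟨m, hm, hf, as, hr', hr⟩
  · simp only [Set.mem_insert_iff, Set.mem_singleton_iff] at hr
    rcases hr with hr | hr | hr | hr | hr | hr | hr | hr | hr | hr <;> rw [hr]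
    · exact fl .f1
    · exact fl .f2
    · exact ch .v1
    · exact ch .v2
    · exact ch .b1
    · exact ch .b2
    · exact ch .c1
    · exact ch .c2
    · exact ch .d1
    · exact ch .d2
  · rw [hr]; exact ch (.ac a)
  · rw [hr]; exact ch (.ad a)
  · have := base (.W m hm as (.inl hf))
    rw [pre_wL, wC, if_pos hf] at this
    have h2 := hn.conj_mem _ this (FreeGroup.of (GenSym.elt (S.funcInterp m as)))
    rw [hr]; simpa using h2
  · have := base (.W m hm as (.inr hr'))
    rw [pre_wL, wC, if_neg hf, one_mul] at this
    rw [hr]; exact this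

end
end SC

/-! ## Part V: words occurring in lines -/

namespace SC

open FreeGroup
set_option linter.unusedSectionVars false

section lists
variable {β : Type*}

theorem prefix_append_split {s a b : List β} (h : s <+: a ++ b) : s <+: a ∨ ∃ q, s = a ++ q ∧ q <+: b := by
  obtain ⟨r, hr⟩ := h
  rcases List.append_eq_append_iff.1 hr with ⟨as, h1, h2⟩ | ⟨bs, h1, h2⟩
  · exact .inl ⟨as, h1.symm⟩
  · exact .inr ⟨bs, h1, ⟨r, h2.symm⟩⟩

theorem suffix_append_split {s a b : List β} (h : s <:+ a ++ b) : s <:+ b ∨ ∃ q, s = q ++ b ∧ q <:+ a := by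
  obtain ⟨r, hr⟩ := h
  rcases List.append_eq_append_iff.1 hr with ⟨as, h1, h2⟩ | ⟨bs, h1, h2⟩
  · exact .inr ⟨as, h2, ⟨r, h1.symm⟩⟩
  · exact .inl ⟨bs, h2.symm⟩

/-- parsing a subword of a threefold product -/
theorem parse {s a b c : List β} (h : s <:+: a ++ b ++ c) : s <:+: a ∨ s <:+: c ∨
    ∃ u b' u', s = u ++ b' ++ u' ∧ u <:+ a ∧ u' <+: c ∧ b' <:+: b ∧ (b' = b ∨ u = [] ∨ u' = []) ∧ (b' = [] → b = []) := by
  rw [List.append_assoc] at h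
  rcases List.infix_append_iff.1 h with h | h | ⟨l₁, l₂, rfl, h1, h2⟩
  · exact .inl h
  · rcases List.infix_append_iff.1 h with h | h | ⟨l₁, l₂, rfl, h1, h2⟩
    · by_cases hs : s = []
      · subst hs; exact .inl (List.nil_infix)
      · exact .inr (.inr ⟨[], s, [], by simp, List.nil_suffix, List.nil_prefix, h, by simp, fun h => (hs h).elim⟩)
    · exact .inr (.inl h)
    · by_cases hs : l₁ = []
      · subst hs; exact .inr (.inl (by simpa using h2.isInfix))
      · exact .inr (.inr ⟨[], l₁, l₂, by simp, List.nil_suffix, h2, h1.isInfix, by simp, fun h => (hs h).elim⟩)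
  · rcases prefix_append_split h2 with h2 | ⟨q, rfl, hq⟩
    · by_cases hs : l₂ = []
      · subst hs; exact .inl (by simpa using h1.isInfix)
      · exact .inr (.inr ⟨l₁, l₂, [], by simp, h1, List.nil_prefix, h2.isInfix, by simp, fun h => (hs h).elim⟩)
    · exact .inr (.inr ⟨l₁, b, q, by simp, h1, hq, List.infix_rfl, by simp, id⟩)

end lists

section At
variable {α : Type*} [DecidableEq α] {σ : ℤ → α × Bool} {t : ℤ} {u v w : List (α × Bool)}

/-- the word `w` is read along `σ` from position `t` on -/
def At (σ : ℤ → α × Bool) (t : ℤ) (w : List (α × Bool)) : Prop := seg σ t w.length = w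

theorem at_iff : At σ t w ↔ ∀ i : ℕ, ∀ h : i < w.length, σ (t + i) = w[i] := by
  unfold At
  constructor
  · intro h i hi
    have : (seg σ t w.length)[i]'(by rw [seg_length]; exact hi) = w[i] := by congr 1
    rw [← this, seg_getElem]
  · intro h
    apply List.ext_getElem (by rw [seg_length])
    intro i h1 h2
    rw [seg_getElem, h i h2]

theorem at_seg (m : ℕ) : At σ t (seg σ t m) := by unfold At; rw [seg_length]
theorem at_nil : At σ t [] := by simp [At, seg]

theorem at_append : At σ t (u ++ v) ↔ At σ t u ∧ At σ (t + u.length) v := by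
  unfold At
  rw [List.length_append, seg_add]
  constructor
  · intro h
    exact List.append_inj h (by rw [seg_length])
  · rintro ⟨h1, h2⟩; rw [h1, h2]

theorem At.sub (h : At σ t v) (h' : u <:+: v) : ∃ t', At σ t' u := by
  obtain ⟨a, b, rfl⟩ := h'
  rw [List.append_assoc] at h
  exact ⟨_, (at_append.1 (at_append.1 h).2).1⟩

theorem At.congr {σ' : ℤ → α × Bool} {t' : ℤ} (h : At σ t w) (hs : ∀ i : ℤ, σ (t + i) = σ' (t' + i)) : At σ' t' w := by
  rw [at_iff] at h ⊢
  intro i hi; rw [← h i hi, hs]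

theorem At.shift {σ' : ℤ → α × Bool} {c : ℤ} (h : At σ t w) (hs : ∀ i : ℤ, σ i = σ' (c + i)) : At σ' (c + t) w :=
  h.congr fun i => by rw [hs, add_assoc]

theorem At.eq {w' : List (α × Bool)} (h : At σ t w) (h' : At σ t w') (hl : w.length = w'.length) : w = w' := by
  unfold At at *; rw [← h, ← h', hl]

theorem At.eq_mem (h : At σ t w) {a : α × Bool} (ha : a ∈ w) : ∃ t', σ t' = a := by
  obtain ⟨i, hi, rfl⟩ := List.getElem_of_mem ha
  exact ⟨_, at_iff.1 h i hi⟩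

theorem invRev_getElem (w : List (α × Bool)) (i : ℕ) (h : i < (invRev w).length) :
    (invRev w)[i] = ibar (w[w.length - 1 - i]'(by rw [invRev_length] at h; omega)) := by
  have : ∀ (l : List (α × Bool)) (h : i < (l.map fun g => (g.1, !g.2)).reverse.length), (l.map fun g => (g.1, !g.2)).reverse[i] =
      ibar (l[l.length - 1 - i]'(by simp at h; omega)) := fun l h => by
    rw [List.getElem_reverse, List.getElem_map]
    simp [ibar]
  exact this w h

/-- the reversed line -/
theorem At.rev {σ' : ℤ → α × Bool} {c : ℤ} (h : At σ t w) (hs : ∀ i : ℤ, σ' i = ibar (σ (c - i))) :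
    At σ' (c - t - w.length + 1) (invRev w) := by
  rw [at_iff] at *
  intro i hi
  have hi' := hi
  rw [invRev_length] at hi'
  rw [invRev_getElem, ← h, hs]
  congr 2
  omega

theorem At.singleton (h : At σ t (u ++ [a])) : σ (t + u.length) = a := by
  have := at_iff.1 (at_append.1 h).2 0 (by simp)
  simpa using this

theorem At.cons {a : α × Bool} (h : At σ t (a :: u)) : σ t = a := by
  have := at_iff.1 h 0 (by simp)
  simpa using this

end At

section Fw
variable {α : Type*} [DecidableEq α]

/-- the word `f ^ n` -/
def Fw (f : α) (n : ℤ) : List (α × Bool) := List.replicate n.natAbs (f, decide (0 < n))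

theorem Fw_length (f : α) (n : ℤ) : (Fw f n).length = n.natAbs := by simp [Fw]
theorem Fw_mem {f : α} {n : ℤ} {a : α × Bool} (h : a ∈ Fw f n) : a = (f, decide (0 < n)) := by
  simp [Fw] at h; exact h.2
theorem Fw_ne {f : α} {n : ℤ} (h : n ≠ 0) : Fw f n ≠ [] := by simp [Fw, h]
theorem Fw_zero (f : α) : Fw f 0 = [] := by simp [Fw]
theorem mk_Fw (f : α) (n : ℤ) : (mk (Fw f n) : FreeGroup α) = FreeGroup.of f ^ n := by
  rcases lt_trichotomy n 0 with h | rfl | h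
  · obtain ⟨k, rfl⟩ : ∃ k : ℕ, n = -(k : ℤ) := ⟨n.natAbs, by omega⟩
    rw [zpow_neg, zpow_natCast, ← mk_replicate, inv_mk]
    have : ¬ (0 < -(k : ℤ)) := by omega
    have h4 : decide (0 < -(k : ℤ)) = false := by simpa using this
    simp only [Fw, h4]
    simp [invRev]
  · simp [Fw, one_eq_mk]
  · obtain ⟨k, rfl⟩ : ∃ k : ℕ, n = k := ⟨n.natAbs, by omega⟩
    rw [zpow_natCast, ← mk_replicate]
    simp only [Fw, h, decide_true, Int.natAbs_natCast]
theorem invRev_Fw (f : α) (n : ℤ) : invRev (Fw f n) = Fw f (-n) := by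
  by_cases h0 : n = 0
  · subst h0; simp [Fw, invRev]
  · by_cases h : 0 < n
    · have : ¬ (0 < -n) := by omega
      simp [Fw, invRev, h, h.le]
    · have : (0 < -n) := by omega
      have : n < 0 := by omega
      simp [Fw, invRev, h, this]
theorem Fw_inj {f : α} {n m : ℤ} (h : Fw f n = Fw f m) : n = m := by
  have h1 := congrArg List.length h
  rw [Fw_length, Fw_length] at h1
  by_cases h0 : n = 0
  · omega
  · have h3 : m ≠ 0 := by omega
    obtain ⟨a, ha⟩ := List.exists_mem_of_ne_nil _ (Fw_ne (f := f) h0)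
    have h4 := Fw_mem ha
    rw [h] at ha
    rw [Fw_mem ha] at h4
    simp at h4
    omega
theorem Fw_red (f : α) (n : ℤ) : IsReduced (Fw f n) := by
  unfold Fw FreeGroup.IsReduced
  apply List.isChain_replicate_of_rel
  simp

/-- the word `g⁻¹ f ^ n g` -/
def Jw (f : α) (g : List (α × Bool)) (n : ℤ) : List (α × Bool) := if n = 0 then [] else invRev g ++ Fw f n ++ g

theorem mk_Jw (f : α) (g : List (α × Bool)) (n : ℤ) : (mk (Jw f g n) : FreeGroup α) = (mk g)⁻¹ * FreeGroup.of f ^ n * mk g := by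
  unfold Jw
  split_ifs with h
  · subst h; rw [zpow_zero, mul_one, inv_mul_cancel]; rfl
  · rw [← mul_mk, ← mul_mk, inv_mk, mk_Fw]

theorem Jw_nil (f : α) (n : ℤ) : Jw f [] n = Fw f n := by
  unfold Jw; split_ifs with h <;> simp [h, Fw_zero, invRev]

theorem Jw_inj {f : α} {g : List (α × Bool)} {n m : ℤ} (h : Jw f g n = Jw f g m) : n = m := by
  unfold Jw at h
  split_ifs at h with h1 h2 h2
  · omega
  · have := congrArg List.length h; simp [Fw_length] at this; omega
  · have := congrArg List.length h; simp [Fw_length] at this; omega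
  · exact Fw_inj (List.append_cancel_left (List.append_cancel_right h))

/-- joining with a power of `f` -/
theorem red_join {f : α} {n : ℤ} (hn : n ≠ 0) {u v : List (α × Bool)} (hu : IsReduced u) (hv : IsReduced v)
    (hul : ∀ a ∈ u.getLast?, a.1 ≠ f) (hvh : ∀ a ∈ v.head?, a.1 ≠ f) : IsReduced (u ++ Fw f n ++ v) := by
  have hF := Fw_red f n
  refine IsReduced.append_overlap ?_ ?_ (Fw_ne hn)
  · refine List.isChain_append.2 ⟨hu, hF, fun x hx y hy h => ?_⟩
    exact (hul x hx (h.trans (by rw [Fw_mem (List.mem_of_mem_head? hy)]))).elim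
  · refine List.isChain_append.2 ⟨hF, hv, fun x hx y hy h => ?_⟩
    exact (hvh y hy (h.symm.trans (by rw [Fw_mem (List.mem_of_mem_getLast? hx)]))).elim

end Fw

end SC

namespace SC

open FreeGroup
set_option linter.unusedSectionVars false

section
variable {S : IndexedStructure} {p₁ p₂ : ℕ} {σ σ' : ℤ → GenSym S.A × Bool} {N N' : ℕ}
  {t t' : ℤ} {u v w : List (GenSym S.A × Bool)}

/-- non-constant lines -/
def NC (σ : ℤ → GenSym S.A × Bool) (n : ℕ) : Prop :=
  (∀ (t : ℤ) (l : ℕ), n ≤ 100 * l → ¬ ∃ c, ∀ i : ℕ, i < l → σ (t + i) = c) ∧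
      (∀ τ : ℤ, (∀ t, σ (t + τ) = σ t) → (n : ℤ) ∣ τ)

theorem RF.big (h1 : 10 ^ 10 < p₁) (h2 : 10 ^ 10 < p₂) (h : RF S p₁ p₂ σ N) : 300 ≤ N := by
  obtain ⟨σ₀, h, -⟩ := h
  cases h with
  | F h => have := h.big h1 h2; omega
  | C h => unfold chN; nlinarith

theorem same20 (h1 : 10 ^ 10 < p₁) (h2 : 10 ^ 10 < p₂) (h : RR S p₁ p₂ σ N) (h' : RR S p₁ p₂ σ' N')
    (ha : At σ t w) (hb : At σ' t' w) (hl : N ≤ 20 * w.length) : (∀ i, σ (t + i) = σ' (t' + i)) ∧ N = N' := by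
  have hs := RR.sys (S := S) h1 h2
  obtain ⟨h3, h4⟩ := hs.small _ _ (hs.shift _ _ h t) _ _ (hs.shift _ _ h' t') w.length hl fun i hi => by
    rw [at_iff.1 ha i hi, at_iff.1 hb i hi]
  exact ⟨fun i => congrFun h3 i, h4⟩

theorem RF.shift (h : RF S p₁ p₂ σ N) (c : ℤ) : RF S p₁ p₂ (fun i => σ (c + i)) N := by
  obtain ⟨σ₀, h, s, hs | hs⟩ := h
  · exact ⟨σ₀, h, s + c, .inl fun i => (hs _).trans (by rw [add_assoc])⟩
  · exact ⟨σ₀, h, s - c, .inr fun i => (hs _).trans (by congr 2; ring)⟩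

theorem same100 (h1 : 10 ^ 10 < p₁) (h2 : 10 ^ 10 < p₂) (h : RF S p₁ p₂ σ N) (h' : RR S p₁ p₂ σ' N')
    (ha : At σ t w) (hb : At σ' t' w) (hl : N ≤ 100 * w.length) : (∀ i, σ (t + i) = σ' (t' + i)) ∧ N = N' := by
  have hs := RR.sys (S := S) h1 h2
  have := h.big h1 h2
  obtain ⟨h3, h4⟩ := (h.shift t).small h1 h2 (hs.shift _ _ h' t') (l := w.length) (by omega) hl fun i hi => by
    rw [at_iff.1 ha i hi, at_iff.1 hb i hi]
  exact ⟨fun i => congrFun h3 i, h4⟩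

theorem period (h1 : 10 ^ 10 < p₁) (h2 : 10 ^ 10 < p₂) (h : RF S p₁ p₂ σ N) (hc : NC σ N)
    (ha : At σ t w) (hb : At σ t' w) (hl : N ≤ 100 * w.length) : (N : ℤ) ∣ t' - t := by
  have := (same100 h1 h2 h h.toRR ha hb hl).1
  refine hc.2 _ fun i => ?_
  have := this (i - t)
  rw [add_sub_cancel] at this
  rw [this]; congr 1; ring

/-- no period shorter than `N` -/
theorem period_lt (h1 : 10 ^ 10 < p₁) (h2 : 10 ^ 10 < p₂) (h : RF S p₁ p₂ σ N) (hc : NC σ N)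
    (ha : At σ t w) (hb : At σ t' w) (hl : N ≤ 100 * w.length) (hlt : t < t') (hN : t' - t < N) : False := by
  have := Int.le_of_dvd (by omega) (period h1 h2 h hc ha hb hl)
  omega

theorem NC.run (hc : NC σ N) (ha : At σ t w) {c : GenSym S.A × Bool} (hw : ∀ a ∈ w, a = c) : 100 * w.length < N := by
  by_contra h
  refine hc.1 t w.length (by omega) ⟨c, fun i hi => ?_⟩
  rw [at_iff.1 ha i hi]
  exact hw _ (List.getElem_mem hi)

theorem NC.F (hc : NC σ N) (ha : At σ t w) {f : GenSym S.A} {n : ℤ} (hw : w <:+: Fw f n) : 100 * w.length < N :=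
  hc.run ha (c := (f, decide (0 < n))) fun _ h => Fw_mem (hw.subset h)

theorem NC.J (hc : NC σ N) (ha : At σ t w) {f : GenSym S.A} {g : List (GenSym S.A × Bool)} {n : ℤ} (hw : w <:+: Jw f g n)
    (hg : 100 * g.length < N) : 100 * w.length < 3 * N := by
  unfold Jw at hw
  split_ifs at hw with h0
  · rw [List.infix_nil.1 hw]; simp; omega
  · rcases parse hw with h | h | ⟨u, b, u', rfl, hu, hu', hb, -⟩
    · have := h.length_le; rw [invRev_length] at this; omega
    · have := h.length_le; omega
    · have h4 := hu.length_le
      have h5 := hu'.length_le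
      rw [invRev_length] at h4
      obtain ⟨t', h6⟩ := ha.sub (u := b) ⟨u, u', rfl⟩
      have := hc.F h6 hb
      simp only [List.length_append]; omega

/-- properties of a shortest representative -/
structure ZW (S : IndexedStructure) (p₁ p₂ : ℕ) (f : GenSym S.A) (Z : List (GenSym S.A × Bool)) : Prop where
  red : IsReduced Z
  ne : Z ≠ []
  short : ∀ σ n, RR S p₁ p₂ σ n → ∀ t w, At σ t w → w <:+: Z → 2 * w.length ≤ n
  head : ∀ a ∈ Z.head?, a.1 ≠ f
  last : ∀ a ∈ Z.getLast?, a.1 ≠ f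

theorem Fl.or {A : Type} {f : GenSym A} {p : ℕ} (h : Fl p₁ p₂ f p) : f = .f1 ∨ f = .f2 := by cases h <;> simp

/-- a line with a letter `f` -/
theorem RR.ofF {f : GenSym S.A} {p : ℕ} (hf : Fl p₁ p₂ f p) (h : RR S p₁ p₂ σ N) (ha : At σ t w) {a : GenSym S.A × Bool}
    (ham : a ∈ w) (haf : a.1 = f) : RF S p₁ p₂ σ N ∧ ((N = p ∧ ∀ t, (σ t).1 = f) ∨ NC σ N) := by
  obtain ⟨t', ht'⟩ := ha.eq_mem ham
  have hr : RF S p₁ p₂ σ N := h.toRF (t := t') (by rw [ht', haf]; exact hf.or)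
  refine ⟨hr, ?_⟩
  rcases hr.cases with ⟨f', e, hf', hc⟩ | hc
  · left
    have : f' = f := by rw [← haf, ← ht', hc]
    subst this
    exact ⟨hf'.fn hf, fun t => by rw [hc]⟩
  · exact .inr hc

theorem suffix_last {Z u : List (GenSym S.A × Bool)} (h : u <:+ Z) (hu : u ≠ []) : u.getLast? = Z.getLast? := by
  obtain ⟨r, rfl⟩ := h
  rw [List.getLast?_append_of_ne_nil _ hu]
theorem prefix_head {Z u : List (GenSym S.A × Bool)} (h : u <+: Z) (hu : u ≠ []) : u.head? = Z.head? := by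
  obtain ⟨r, rfl⟩ := h
  rw [List.head?_append_of_ne_nil _ hu]

/-- the bad lemma -/
theorem bad (h1 : 10 ^ 10 < p₁) (h2 : 10 ^ 10 < p₂) {f : GenSym S.A} {p : ℕ} (hf : Fl p₁ p₂ f p)
    {Z a c : List (GenSym S.A × Bool)} (hZ : ZW S p₁ p₂ f Z) (ha : a <:+ Z) (hc : c <+: Z) {n : ℤ} (hn : n ≠ 0)
    (hnp : 2 * n.natAbs ≤ p) (hR : RR S p₁ p₂ σ N) (hs : At σ t w) (hw : w <:+: a ++ Fw f n ++ c)
    (hl : 85 * N ≤ 100 * w.length) : RF S p₁ p₂ σ N ∧ NC σ N ∧ (∃ u u', w = u ++ Fw f n ++ u' ∧ u <:+ a ∧ u' <+: c ∧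
      34 * N ≤ 100 * u.length ∧ 34 * N ≤ 100 * u'.length) ∧
      ∀ g, g <+: Z → invRev g <:+ Z → 100 * g.length < N := by
  have hN := hR.npos h1 h2
  have hp := hf.big h1 h2
  rcases parse hw with h | h | ⟨u, b, u', rfl, hu, hu', hb, hor, hne⟩
  · have := hZ.short _ _ hR _ _ hs (h.trans ha.isInfix); omega
  · have := hZ.short _ _ hR _ _ hs (h.trans hc.isInfix); omega
  · have hbne : b ≠ [] := fun h => Fw_ne hn (hne h)
    obtain ⟨x, hx⟩ := List.exists_mem_of_ne_nil _ hbne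
    have hx' := Fw_mem (hb.subset hx)
    obtain ⟨hF, ⟨hNp, hcon⟩ | hnc⟩ := hR.ofF hf hs (a := x) (by simp [hx]) (by rw [hx'])
    · exfalso
      have hmem : ∀ y ∈ u ++ b ++ u', y.1 = f := fun y hy => by
        obtain ⟨t', ht'⟩ := hs.eq_mem hy; rw [← ht', hcon]
      have hu0 : u = [] := by
        by_contra hne
        obtain ⟨y, hy⟩ := Option.ne_none_iff_exists'.1 (mt List.getLast?_eq_none_iff.1 hne)
        have hy' := List.mem_of_mem_getLast? hy
        rw [suffix_last (hu.trans ha) hne] at hy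
        exact hZ.last y hy (hmem y (by simp [hy']))
      have hu0' : u' = [] := by
        by_contra hne
        obtain ⟨y, hy⟩ := Option.ne_none_iff_exists'.1 (mt List.head?_eq_none_iff.1 hne)
        have hy' := List.mem_of_mem_head? hy
        rw [prefix_head (hu'.trans hc) hne] at hy
        exact hZ.head y hy (hmem y (by simp [hy']))
      subst hu0 hu0'
      have := hb.length_le
      rw [Fw_length] at this
      simp at hl
      omega
    · have hb1 : 100 * b.length < N := by
        obtain ⟨t', h6⟩ := hs.sub (u := b) ⟨u, u', rfl⟩
        exact hnc.F h6 hb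
      have hu1 : 2 * u.length ≤ N := by
        obtain ⟨t', h6⟩ := hs.sub (u := u) ⟨[], b ++ u', by simp⟩
        exact hZ.short _ _ hR _ _ h6 (hu.trans ha).isInfix
      have hu1' : 2 * u'.length ≤ N := by
        obtain ⟨t', h6⟩ := hs.sub (u := u') ⟨u ++ b, [], by simp⟩
        exact hZ.short _ _ hR _ _ h6 (hu'.trans hc).isInfix
      simp only [List.length_append] at hl
      have hb2 : b = Fw f n := by
        rcases hor with h | h | h
        · exact h
        · rw [h] at hl; simp at hl; omega
        · rw [h] at hl; simp at hl; omega
      subst hb2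
      refine ⟨hF, hnc, ⟨u, u', rfl, hu, hu', by omega, by omega⟩, fun g hg hg' => ?_⟩
      by_contra hgl
      -- reflection
      set l := min g.length (min u.length u'.length) with hldef
      have hlN : N ≤ 100 * l := by omega
      set q := g.take l with hq
      have hql : q.length = l := by rw [hq, List.length_take]; omega
      have hqu' : q <+: u' := by
        refine List.prefix_of_prefix_length_le ((List.take_prefix _ _).trans hg) (hu'.trans hc) ?_
        rw [hql]; omega
      have hqu : invRev q <:+ u := by
        have : invRev q <:+ invRev g := by
          refine ⟨invRev (g.drop l), ?_⟩
          rw [← invRev_append, List.take_append_drop]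
        refine List.suffix_of_suffix_length_le (this.trans hg') (hu.trans ha) ?_
        rw [invRev_length, hql]; omega
      obtain ⟨r', hr'⟩ := hqu'
      obtain ⟨r, hr⟩ := hqu
      obtain ⟨t0, h0⟩ := hs.sub (u := invRev q ++ Fw f n ++ q) ⟨r, r', by rw [← hr, ← hr']; simp⟩
      have hrev := h0.rev (σ' := fun i => ibar (σ (-1 - i))) (c := -1) fun i => rfl
      rw [invRev_append, invRev_append, invRev_invRev, invRev_Fw, at_append] at hrev
      have hRr := (RR.sys (S := S) h1 h2).rev _ _ hR
      rw [List.append_assoc, at_append] at h0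
      have hsm := (same100 h1 h2 hF hRr h0.1 hrev.1 (by rw [invRev_length, hql]; exact hlN)).1
      have hA := at_iff.1 h0.2 0 (by simp [Fw, hn])
      have hB := at_iff.1 hrev.2 0 (by simp [Fw, hn])
      simp only [Nat.cast_zero, add_zero] at hA hB
      rw [← hsm, hA] at hB
      have e1 : ∀ {m : ℤ} (hm : m ≠ 0) (r : List (GenSym S.A × Bool)) (hh), (Fw f m ++ r)[0]'hh = (f, decide (0 < m)) := fun {m} hm r hh => by
        have : 0 < (Fw f m).length := by rw [Fw_length]; omega
        rw [List.getElem_append_left this]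
        exact Fw_mem (List.getElem_mem this)
      rw [e1 hn, e1 (by omega : -n ≠ 0)] at hB
      simp at hB
      omega

end
end SC

namespace SC

open FreeGroup
set_option linter.unusedSectionVars false

section
variable {β : Type*}

/-- the product of the words `ζ J_k` -/
def Wd (ζ : List β) (J : ℕ → List β) (ks : List ℕ) : List β := ks.flatMap fun k => ζ ++ J k
/-- the product of the words `J_k ζ` -/
def Md (ζ : List β) (J : ℕ → List β) (ks : List ℕ) : List β := ks.flatMap fun k => J k ++ ζ

variable {ζ s : List β} {J : ℕ → List β} {ks : List ℕ} {kl : ℕ}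

theorem Md_cons (k : ℕ) : Md ζ J (k :: ks) = J k ++ ζ ++ Md ζ J ks := by simp [Md]
theorem Md_append (l l' : List ℕ) : Md ζ J (l ++ l') = Md ζ J l ++ Md ζ J l' := by simp [Md]
theorem Wd_cons (k : ℕ) : Wd ζ J (k :: ks) = ζ ++ J k ++ Wd ζ J ks := by simp [Wd]

theorem struct_pre (h : s <+: Wd ζ J (ks ++ [kl])) : s <+: ζ ∨ ∃ mids s2, s = ζ ++ Md ζ J mids ++ s2 ∧ mids <+: ks ∧
    ((∃ k ∈ ks, s2 <+: J k ++ ζ) ∨ s2 <+: J kl) := by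
  induction ks generalizing s with
  | nil =>
    rw [List.nil_append, Wd_cons] at h
    simp only [Wd, List.flatMap_nil, List.append_nil] at h
    rcases prefix_append_split h with h | ⟨q, rfl, hq⟩
    · exact .inl h
    · exact .inr ⟨[], q, by simp [Md], List.prefix_rfl, .inr hq⟩
  | cons k ks ih =>
    rw [List.cons_append, Wd_cons, List.append_assoc] at h
    rcases prefix_append_split h with h | ⟨q, rfl, hq⟩
    · exact .inl h
    right
    rcases prefix_append_split hq with h | ⟨q', rfl, hq'⟩
    · exact ⟨[], q, by simp [Md], List.nil_prefix, .inl ⟨k, by simp, h.trans (List.prefix_append _ _)⟩⟩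
    · rcases ih hq' with h | ⟨mids, s2, rfl, h3, h4⟩
      · exact ⟨[], J k ++ q', by simp [Md], List.nil_prefix, .inl ⟨k, by simp, (List.prefix_append_right_inj _).2 h⟩⟩
      · refine ⟨k :: mids, s2, by simp [Md_cons], by simpa using h3, ?_⟩
        rcases h4 with ⟨k', h5, h6⟩ | h4
        · exact .inl ⟨k', by simp [h5], h6⟩
        · exact .inr h4

theorem struct (h : s <:+: Wd ζ J (ks ++ [kl])) : (∃ k ∈ ks, s <:+: ζ ++ J k ++ ζ) ∨ s <:+: ζ ++ J kl ∨
    ∃ s1 mids s2, s = s1 ++ ζ ++ Md ζ J mids ++ s2 ∧ mids <:+: ks ∧ (∃ k ∈ ks, s1 <:+ ζ ++ J k) ∧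
    ((∃ k ∈ ks, s2 <+: J k ++ ζ) ∨ s2 <+: J kl) := by
  induction ks generalizing s with
  | nil =>
    rw [List.nil_append, Wd_cons] at h
    simp only [Wd, List.flatMap_nil, List.append_nil] at h
    exact .inr (.inl h)
  | cons k ks ih =>
    rw [List.cons_append, Wd_cons] at h
    rcases List.infix_append_iff.1 h with h | h | ⟨l₁, l₂, rfl, h1, h2⟩
    · exact .inl ⟨k, by simp, h.trans (List.prefix_append _ _).isInfix⟩
    · rcases ih h with ⟨k', h3, h4⟩ | h | ⟨s1, mids, s2, rfl, h3, ⟨k', h4, h5⟩, h6⟩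
      · exact .inl ⟨k', by simp [h3], h4⟩
      · exact .inr (.inl h)
      · refine .inr (.inr ⟨s1, mids, s2, rfl, h3.trans (List.suffix_cons _ _).isInfix, ⟨k', by simp [h4], h5⟩, ?_⟩)
        rcases h6 with ⟨k', h5, h6⟩ | h4
        · exact .inl ⟨k', by simp [h5], h6⟩
        · exact .inr h4
    · rcases struct_pre h2 with h3 | ⟨mids, s2, rfl, h3, h4⟩
      · left
        refine ⟨k, by simp, ?_⟩
        obtain ⟨r, hr⟩ := h1
        obtain ⟨r', hr'⟩ := h3
        refine ⟨r, r', ?_⟩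
        rw [← hr]
        conv_rhs => rw [← hr']
        simp
      · refine .inr (.inr ⟨l₁, mids, s2, by simp, (h3.isInfix).trans (List.suffix_cons _ _).isInfix, ⟨k, by simp, h1⟩, ?_⟩)
        rcases h4 with ⟨k', h5, h6⟩ | h4
        · exact .inl ⟨k', by simp [h5], h6⟩
        · exact .inr h4

end

theorem Wd_red {α : Type*} [DecidableEq α] {ζ : List (α × Bool)} {J : ℕ → List (α × Bool)} {ks : List ℕ} {kl : ℕ} (h0 : ζ ≠ [])
    (h : ∀ k ∈ ks, IsReduced (ζ ++ J k ++ ζ)) (hl : IsReduced (ζ ++ J kl)) : IsReduced (Wd ζ J (ks ++ [kl])) := by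
  induction ks with
  | nil => simpa [Wd] using hl
  | cons k ks ih =>
    have ih := ih fun k hk => h k (by simp [hk])
    have h3 := h k (by simp)
    obtain ⟨r, hr⟩ : ∃ r, Wd ζ J (ks ++ [kl]) = ζ ++ r := by
      cases ks with
      | nil => exact ⟨J kl, by simp [Wd]⟩
      | cons k' ks => exact ⟨J k' ++ Wd ζ J (ks ++ [kl]), by rw [List.cons_append, Wd_cons, List.append_assoc]⟩
    rw [List.cons_append, Wd_cons, hr]
    rw [hr] at ih
    rw [← List.append_assoc]
    exact h3.append_overlap ih h0

section
variable {S : IndexedStructure} {p₁ p₂ : ℕ} {σ σ' : ℤ → GenSym S.A × Bool} {N N' : ℕ}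
  {t t' : ℤ} {u v w : List (GenSym S.A × Bool)}

theorem caseC (h1 : 10 ^ 10 < p₁) (h2 : 10 ^ 10 < p₂) (h : RF S p₁ p₂ σ N) (hc : NC σ N) {f : GenSym S.A}
    {ζ g s1 s2 : List (GenSym S.A × Bool)} {n : ℕ → ℤ} {mids : List ℕ} (hg : 100 * g.length < N) (hζ : 2 * ζ.length ≤ N)
    (hs : At σ t (s1 ++ ζ ++ Md ζ (fun k => Jw f g (n k)) mids ++ s2)) {k k' : ℕ}
    (hs1 : s1 <:+ ζ ++ Jw f g (n k)) (hs2 : s2 <+: Jw f g (n k') ++ ζ)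
    (hl : 85 * N ≤ 100 * (s1 ++ ζ ++ Md ζ (fun k => Jw f g (n k)) mids ++ s2).length) : 100 * ζ.length < N := by
  have hN := h.big h1 h2
  by_contra hζ'
  have hJ : ∀ {t w n}, At σ t w → w <:+: Jw f g n → 100 * w.length < 3 * N := fun h4 h5 => hc.J h4 h5 hg
  cases mids with
  | cons k mids =>
    obtain ⟨t', hs'⟩ := hs.sub (u := ζ ++ Jw f g (n k) ++ ζ) ⟨s1, Md ζ (fun k => Jw f g (n k)) mids ++ s2, by
      rw [Md_cons]; simp⟩
    obtain ⟨ha, hb⟩ := at_append.1 hs'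
    have := hJ (at_append.1 ha).2 List.infix_rfl
    rw [List.length_append] at hb
    exact period_lt h1 h2 h hc (at_append.1 ha).1 hb (by omega) (by push_cast; omega) (by push_cast; omega)
  | nil =>
    simp only [Md, List.flatMap_nil, List.append_nil] at hs hl
    simp only [List.length_append] at hl
    obtain ⟨hs3, hs4⟩ := at_append.1 hs
    have e2 : 100 * s2.length < 17 * N := by
      rcases prefix_append_split hs2 with hs2 | ⟨q, rfl, hq⟩
      · have := hJ hs4 hs2.isInfix; omega
      · by_contra hq'
        obtain ⟨ha, hb⟩ := at_append.1 hs4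
        have := hJ ha List.infix_rfl
        rw [List.length_append] at hq' hb
        obtain ⟨r, hr⟩ := hq
        have hs5 := (at_append.1 hs3).2
        have hrl := congrArg List.length hr
        rw [List.length_append] at hrl
        rw [← hr] at hs5
        exact period_lt h1 h2 h hc (at_append.1 hs5).1 hb (by omega) (by push_cast; omega) (by push_cast; omega)
    have e1 : 100 * s1.length < 17 * N := by
      rcases suffix_append_split hs1 with hs1 | ⟨q, rfl, hq⟩
      · have := hJ (at_append.1 hs3).1 hs1.isInfix; omega
      · by_contra hq'
        obtain ⟨ha, hb⟩ := at_append.1 hs3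
        obtain ⟨ha, ha'⟩ := at_append.1 ha
        have := hJ ha' List.infix_rfl
        rw [List.length_append] at hq' hb
        obtain ⟨r, hr⟩ := hq
        have hrl := congrArg List.length hr
        rw [List.length_append] at hrl
        rw [← hr] at hb
        exact period_lt h1 h2 h hc ha (at_append.1 hb).2 (by omega) (by push_cast; omega) (by push_cast; omega)
    omega

/-- two occurrences of `v J v'` in lines -/
theorem conflict (h1 : 10 ^ 10 < p₁) (h2 : 10 ^ 10 < p₂) (h : RF S p₁ p₂ σ N) (hc : NC σ N) (h' : RR S p₁ p₂ σ' N')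
    {ζ v1 v1' v2 v2' J1 J2 : List (GenSym S.A × Bool)} (ha : At σ t (v1 ++ J1 ++ v1')) (hb : At σ' t' (v2 ++ J2 ++ v2'))
    (hv1 : v1 <:+ ζ) (hv2 : v2 <:+ ζ) (hv1' : v1' <+: ζ) (hv2' : v2' <+: ζ)
    (l1 : 32 * N ≤ 100 * v1.length) (l2 : 32 * N' ≤ 100 * v2.length)
    (l1' : 32 * N ≤ 100 * v1'.length) (l2' : 32 * N' ≤ 100 * v2'.length)
    (hJ1 : 100 * J1.length < 10 * N) (hJ2 : 100 * J2.length < 10 * N') : J1 = J2 := by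
  have hN := h.big h1 h2
  obtain ⟨v, hv, hv', hN1⟩ : ∃ v, v <:+ v1 ∧ v <:+ v2 ∧ (N ≤ 20 * v.length ∨ N' ≤ 20 * v.length) := by
    rcases le_total v1.length v2.length with hh | hh
    · exact ⟨v1, List.suffix_rfl, List.suffix_of_suffix_length_le hv1 hv2 hh, by omega⟩
    · exact ⟨v2, List.suffix_of_suffix_length_le hv2 hv1 hh, List.suffix_rfl, by omega⟩
  obtain ⟨w, hw, hw', hN2⟩ : ∃ v, v <+: v1' ∧ v <+: v2' ∧ (N ≤ 20 * v.length ∨ N' ≤ 20 * v.length) := by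
    rcases le_total v1'.length v2'.length with hh | hh
    · exact ⟨v1', List.prefix_rfl, List.prefix_of_prefix_length_le hv1' hv2' hh, by omega⟩
    · exact ⟨v2', List.prefix_of_prefix_length_le hv2' hv1' hh, List.prefix_rfl, by omega⟩
  obtain ⟨r1, rfl⟩ := hv
  obtain ⟨r2, rfl⟩ := hv'
  obtain ⟨q1, rfl⟩ := hw
  obtain ⟨q2, rfl⟩ := hw'
  obtain ⟨t1, ha⟩ := ha.sub (u := v ++ J1 ++ w) ⟨r1, q1, by simp⟩
  obtain ⟨t2, hb⟩ := hb.sub (u := v ++ J2 ++ w) ⟨r2, q2, by simp⟩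
  obtain ⟨ha, haw⟩ := at_append.1 ha
  obtain ⟨hav, haJ⟩ := at_append.1 ha
  obtain ⟨hs, hNN⟩ : (∀ i, σ (t1 + i) = σ' (t2 + i)) ∧ N = N' := by
    have hbv := (at_append.1 (at_append.1 hb).1).1
    rcases hN1 with hN1 | hN1
    · exact same20 h1 h2 h.toRR h' hav hbv hN1
    · obtain ⟨h5, h6⟩ := same20 h1 h2 h' h.toRR hbv hav hN1
      exact ⟨fun i => (h5 i).symm, h6.symm⟩
  subst hNN
  have hb := hb.congr fun i => (hs i).symm
  obtain ⟨hb, hbw⟩ := at_append.1 hb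
  obtain ⟨hbv, hbJ⟩ := at_append.1 hb
  have hd := period h1 h2 h hc haw hbw (by omega)
  have h0 := Int.eq_zero_of_abs_lt_dvd hd (by
    rw [List.length_append, List.length_append]; push_cast; rw [abs_lt]; constructor <;> omega)
  rw [List.length_append, List.length_append] at h0
  push_cast at h0
  exact haJ.eq hbJ (by omega)

end
end SC

namespace SC

open FreeGroup
set_option linter.unusedSectionVars false

/-- the cyclic list of indices ending just before `kl` -/
def rot (M kl : ℕ) : List ℕ := (List.range M).map fun i => (kl + 1 + i) % (M + 1)

theorem rot_eq {M kl : ℕ} (h : kl ≤ M) : rot M kl ++ [kl] = (List.range (M + 1)).rotate (kl + 1) := by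
  apply List.ext_getElem (by simp [rot])
  intro i h3 h4
  rw [List.getElem_rotate, List.getElem_range, List.length_range]
  simp only [rot, List.length_append, List.length_map, List.length_range, List.length_singleton] at h3
  rcases Nat.lt_succ_iff_lt_or_eq.1 h3 with h5 | rfl
  · rw [List.getElem_append_left (by simpa [rot] using h5)]
    simp only [rot, List.getElem_map, List.getElem_range]
    congr 1; ring
  · rw [List.getElem_append_right (by simp [rot])]
    simp only [rot, List.getElem_singleton]
    rw [show i + (kl + 1) = kl + (i + 1) by ring, Nat.add_mod_right, Nat.mod_eq_of_lt (by omega)]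

theorem rot_mem {M kl k : ℕ} (h : k ∈ rot M kl) : k ≤ M := by
  simp only [rot, List.mem_map] at h
  obtain ⟨i, -, rfl⟩ := h
  have := Nat.mod_lt (kl + 1 + i) (show 0 < M + 1 by omega)
  omega

theorem rot_ne {M kl k : ℕ} (h : k ∈ rot M kl) (hk : kl ≤ M) : k ≠ kl := by
  simp only [rot, List.mem_map, List.mem_range] at h
  obtain ⟨i, hi, rfl⟩ := h
  intro he
  have h3 := Nat.div_add_mod (kl + 1 + i) (M + 1)
  rw [he] at h3
  rcases Nat.eq_zero_or_pos ((kl + 1 + i) / (M + 1)) with h4 | h4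
  · rw [h4] at h3; omega
  · have := Nat.mul_le_mul_left (M + 1) h4
    omega

theorem rot_sublist {M kl : ℕ} {mids : List ℕ} (h : mids <:+: rot M kl) : ∃ c, ∀ i (hi : i < mids.length), mids[i] = (c + i) % (M + 1) := by
  obtain ⟨a, b, hab⟩ := h
  refine ⟨kl + 1 + a.length, fun i hi => ?_⟩
  have h3 : (a ++ mids ++ b)[a.length + i]'(by simp; omega) = mids[i] := by
    rw [List.getElem_append_left (by simp; omega), List.getElem_append_right (by omega)]
    simp
  rw [← h3]
  simp only [hab, rot, List.getElem_map, List.getElem_range]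
  congr 1; ring

section
variable {S : IndexedStructure} {p₁ p₂ : ℕ}

theorem Wd_append {β : Type*} (ζ : List β) (J : ℕ → List β) (l l' : List ℕ) : Wd ζ J (l ++ l') = Wd ζ J l ++ Wd ζ J l' := by simp [Wd]

theorem rot_prod {α : Type*} {H : Subgroup (FreeGroup α)} [H.Normal] {ζ : List (α × Bool)} {J : ℕ → List (α × Bool)} {M kl : ℕ}
    (hk : kl ≤ M) (h : mk (Wd ζ J (List.range (M + 1))) ∈ H) : mk (Wd ζ J (rot M kl ++ [kl])) ∈ H := by
  rw [rot_eq hk, List.rotate_eq_drop_append_take (by simpa using hk), Wd_append, ← mul_mk]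
  apply Subgroup.Normal.mem_comm inferInstance
  rw [mul_mk, ← Wd_append, List.take_append_drop]
  exact h

theorem Wd_conj {α : Type*} [DecidableEq α] {g ζ : List (α × Bool)} {f : α} (n : ℕ → ℤ) (ks : List ℕ) :
    (mk (Wd ζ (fun k => Jw f g (n k)) ks) : FreeGroup α) =
      (mk g)⁻¹ * mk (Wd (g ++ ζ ++ invRev g) (fun k => Fw f (n k)) ks) * mk g := by
  induction ks with
  | nil => simp only [Wd, List.flatMap_nil]; rw [← one_eq_mk]; group
  | cons k ks ih =>
    rw [Wd_cons, Wd_cons]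
    simp only [← mul_mk]
    rw [ih, mk_Jw, mk_Fw, ← inv_mk]
    group

theorem green' (h1 : 10 ^ 10 < p₁) (h2 : 10 ^ 10 < p₂) {w : List (GenSym S.A × Bool)} (hw : IsReduced w) (hne : w ≠ [])
    (hm : mk w ∈ Subgroup.normalClosure (grpRels S p₁ p₂)) :
    ∃ σ N t s, RR S p₁ p₂ σ N ∧ At σ t s ∧ s <:+: w ∧ 85 * N ≤ 100 * s.length := by
  have h3 : (mk w).toWord = w := by rw [toWord_mk, hw.reduce_eq]
  obtain ⟨σ, n, hR, m, hm, hs⟩ := green (RR.sys h1 h2) (le_cl hm) fun h => hne (by rw [← h3, h, toWord_one])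
  rw [h3] at hs
  exact ⟨σ, n, 0, _, hR, at_seg m, hs, by rw [seg_length]; omega⟩

/-- the situation of the bad lemma -/
def Bad (S : IndexedStructure) (p₁ p₂ : ℕ) (f : GenSym S.A) (Z : List (GenSym S.A × Bool)) (n : ℤ) : Prop :=
  ∃ σ N t u u', RF S p₁ p₂ σ N ∧ NC σ N ∧ At σ t (u ++ Fw f n ++ u') ∧ u <:+ Z ∧ u' <+: Z ∧
    34 * N ≤ 100 * u.length ∧ 34 * N ≤ 100 * u'.length ∧ ∀ g, g <+: Z → invRev g <:+ Z → 100 * g.length < N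

/-- many consecutive copies of `Z` in a line -/
def Many (S : IndexedStructure) (p₁ p₂ : ℕ) (f : GenSym S.A) (Z : List (GenSym S.A × Bool)) (n : ℕ → ℤ) : Prop :=
  ∃ σ N t mids c, RF S p₁ p₂ σ N ∧ NC σ N ∧ 100 * Z.length < N ∧ At σ t (Z ++ Md Z (fun k => Fw f (n k)) mids) ∧
    9 ≤ mids.length ∧ (∀ k ∈ mids, n k ≠ 0) ∧ ∀ i (hi : i < mids.length), mids[i] = (c + i) % 1000

theorem ZW.join {f : GenSym S.A} {Z : List (GenSym S.A × Bool)} (hZ : ZW S p₁ p₂ f Z) {n : ℤ} (hn : n ≠ 0) :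
    IsReduced (Z ++ Fw f n ++ Z) := red_join hn hZ.red hZ.red hZ.last hZ.head

theorem Md_length {σ : ℤ → GenSym S.A × Bool} {N : ℕ} (hc : NC σ N) {f : GenSym S.A} {Z : List (GenSym S.A × Bool)} {n : ℕ → ℤ}
    (hZ : 100 * Z.length < N) {mids : List ℕ} {t : ℤ} (h : At σ t (Md Z (fun k => Fw f (n k)) mids)) :
    100 * (Md Z (fun k => Fw f (n k)) mids).length ≤ 2 * N * mids.length := by
  induction mids generalizing t with
  | nil => simp [Md]
  | cons k mids ih =>
    rw [Md_cons] at h ⊢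
    obtain ⟨ha, hb⟩ := at_append.1 h
    have h3 := ih hb
    have h4 := hc.F (at_append.1 ha).1 List.infix_rfl
    simp only [List.length_append, List.length_cons]
    nlinarith

theorem V1 (h1 : 10 ^ 10 < p₁) (h2 : 10 ^ 10 < p₂) {f : GenSym S.A} {p : ℕ} (hf : Fl p₁ p₂ f p)
    {Z : List (GenSym S.A × Bool)} (hZ : ZW S p₁ p₂ f Z) {n : ℕ → ℤ} (hn : ∀ k ≤ 999, 2 * (n k).natAbs ≤ p)
    (hinj : ∀ k ≤ 999, ∀ k' ≤ 999, n k = n k' → k = k')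
    (hm : mk (Wd Z (fun k => Fw f (n k)) (List.range 1000)) ∈ Subgroup.normalClosure (grpRels S p₁ p₂)) :
    Many S p₁ p₂ f Z n ∨ ∃ j ≤ 999, n j ≠ 0 ∧ Bad S p₁ p₂ f Z (n j) := by
  obtain ⟨kl, hkl, hkn⟩ : ∃ kl ≤ 999, ∀ k ≤ 999, k ≠ kl → n k ≠ 0 := by
    by_cases hh : ∃ kl ≤ 999, n kl = 0
    · obtain ⟨kl, h3, h4⟩ := hh
      exact ⟨kl, h3, fun k hk hne h0 => hne (hinj k hk kl h3 (h0.trans h4.symm))⟩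
    · push Not at hh
      exact ⟨0, by omega, fun k hk _ => hh k hk⟩
  have hks : ∀ k ∈ rot 999 kl, k ≤ 999 ∧ n k ≠ 0 := fun k hk => ⟨rot_mem hk, hkn k (rot_mem hk) (rot_ne hk hkl)⟩
  have hred : IsReduced (Wd Z (fun k => Fw f (n k)) (rot 999 kl ++ [kl])) := by
    refine Wd_red hZ.ne (fun k hk => hZ.join (hks k hk).2) ?_
    by_cases h0 : n kl = 0
    · rw [h0, Fw_zero, List.append_nil]; exact hZ.red
    · exact (hZ.join h0).infix (List.prefix_append _ _).isInfix
  obtain ⟨σ, N, t, s, hR, hs, hsW, hl⟩ := green' h1 h2 hred (by rw [Wd_append]; simp [Wd, hZ.ne]) (rot_prod hkl hm)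
  have hN := hR.npos h1 h2
  rcases struct hsW with ⟨k, hk, hsk⟩ | hb | ⟨s1, mids, s2, rfl, hmi, ⟨k, hk, hs1⟩, hs2⟩
  · right
    obtain ⟨h3, h4, ⟨u, u', rfl, hu, hu', h5, h6⟩, h7⟩ := bad h1 h2 hf hZ List.suffix_rfl List.prefix_rfl (hks k hk).2 (hn k (hks k hk).1) hR hs hsk hl
    exact ⟨k, (hks k hk).1, (hks k hk).2, σ, N, t, u, u', h3, h4, hs, hu, hu', h5, h6, h7⟩
  · exfalso
    by_cases h0 : n kl = 0
    · rw [h0, Fw_zero, List.append_nil] at hb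
      have := hZ.short _ _ hR _ _ hs hb; omega
    · obtain ⟨h3, h4, ⟨u, u', rfl, hu, hu', h5, h6⟩, h7⟩ := bad (c := []) h1 h2 hf hZ List.suffix_rfl List.nil_prefix h0 (hn kl hkl) hR hs
        (by simpa using hb) hl
      have := hu'.length_le
      simp at this
      subst this
      simp at h6; omega
  · left
    -- a letter `f`
    have hmids : ∀ k ∈ mids, k ≤ 999 ∧ n k ≠ 0 := fun k hk => hks k (hmi.subset hk)
    have hmem : ∃ a ∈ s1 ++ Z ++ Md Z (fun k => Fw f (n k)) mids ++ s2, a.1 = f := by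
      have hF : ∀ {m : ℤ}, m ≠ 0 → ∃ a ∈ Fw f m, a.1 = f := fun {m} hm => by
        obtain ⟨a, ha⟩ := List.exists_mem_of_ne_nil _ (Fw_ne (f := f) hm)
        exact ⟨a, ha, by rw [Fw_mem ha]⟩
      cases mids with
      | cons k' mids =>
        obtain ⟨a, ha, haf⟩ := hF (hmids k' (by simp)).2
        exact ⟨a, by rw [Md_cons]; simp [ha], haf⟩
      | nil =>
        by_cases e1 : s1 = []
        · by_cases e2 : s2 = []
          · exfalso
            subst e1 e2
            simp only [Md, List.flatMap_nil, List.append_nil, List.nil_append] at hs hl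
            have := hZ.short _ _ hR _ _ hs List.infix_rfl
            omega
          · obtain ⟨a, r, rfl⟩ := List.exists_cons_of_ne_nil e2
            have key : ∀ k', n k' ≠ 0 → (a :: r) <+: Fw f (n k') ++ Z → a.1 = f := fun k' h3 h4 => by
              have h5 := prefix_head h4 (by simp)
              rw [List.head?_append_of_ne_nil _ (Fw_ne h3)] at h5
              rw [Fw_mem (List.mem_of_mem_head? h5.symm)]
            refine ⟨a, by simp, ?_⟩
            rcases hs2 with ⟨k', hk', h3⟩ | h3
            · exact key k' (hks k' hk').2 h3
            · refine key kl (fun h0 => ?_) (h3.trans (List.prefix_append _ _))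
              rw [h0, Fw_zero] at h3
              simp at h3
        · obtain ⟨a, ha⟩ := Option.ne_none_iff_exists'.1 (mt List.getLast?_eq_none_iff.1 e1)
          refine ⟨a, by simp [List.mem_of_mem_getLast? ha], ?_⟩
          rw [suffix_last hs1 e1, List.getLast?_append_of_ne_nil _ (Fw_ne (hks k hk).2)] at ha
          rw [Fw_mem (List.mem_of_mem_getLast? ha)]
    obtain ⟨a, ham, haf⟩ := hmem
    obtain ⟨hF, ⟨hNp, hcon⟩ | hnc⟩ := hR.ofF hf hs ham haf
    · exfalso
      obtain ⟨a, ha⟩ := Option.ne_none_iff_exists'.1 (mt List.head?_eq_none_iff.1 hZ.ne)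
      obtain ⟨t', ht'⟩ := hs.eq_mem (a := a) (by simp [List.mem_of_mem_head? ha])
      exact hZ.head a ha (by rw [← ht', hcon])
    obtain ⟨tz, hAz⟩ := hs.sub (u := Z) ⟨s1, Md Z (fun k => Fw f (n k)) mids ++ s2, by simp⟩
    have hZ2 := hZ.short _ _ hR _ _ hAz List.infix_rfl
    have hs2' : ∃ k', s2 <+: Fw f (n k') ++ Z := by
      rcases hs2 with ⟨k', -, h3⟩ | h3
      · exact ⟨k', h3⟩
      · exact ⟨kl, h3.trans (List.prefix_append _ _)⟩
    obtain ⟨k', hs2'⟩ := hs2'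
    have hZ3 : 100 * Z.length < N := by
      refine caseC (f := f) (g := []) (n := n) h1 h2 hF hnc (by simp; omega) hZ2 (s1 := s1) (s2 := s2) (t := t) (mids := mids) (k := k) (k' := k') ?_ ?_ ?_ ?_
      all_goals simp only [Jw_nil]
      exacts [hs, hs1, hs2', hl]
    obtain ⟨hA, hA2⟩ := at_append.1 hs
    obtain ⟨hA, hAM⟩ := at_append.1 hA
    have l1 : 100 * s1.length < 2 * N := by
      have hA1 := (at_append.1 hA).1
      rcases suffix_append_split hs1 with h | ⟨q, rfl, hq⟩
      · have := hnc.F hA1 h.isInfix; omega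
      · have := hnc.F (at_append.1 hA1).2 List.infix_rfl
        have := hq.length_le
        rw [List.length_append]; omega
    have l2 : 100 * s2.length < 2 * N := by
      rcases prefix_append_split hs2' with h | ⟨q, rfl, hq⟩
      · have := hnc.F hA2 h.isInfix; omega
      · have := hnc.F (at_append.1 hA2).1 List.infix_rfl
        have := hq.length_le
        rw [List.length_append]; omega
    have l3 := Md_length hnc hZ3 hAM
    simp only [List.length_append] at hl
    obtain ⟨c, hcm⟩ := rot_sublist hmi
    obtain ⟨t0, hA0⟩ := hs.sub (u := Z ++ Md Z (fun k => Fw f (n k)) mids) ⟨s1, s2, by simp⟩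
    refine ⟨σ, N, t0, mids, c, hF, hnc, hZ3, hA0, ?_, fun k hk => (hmids k hk).2, hcm⟩
    by_contra h9
    have : 2 * N * mids.length ≤ 2 * N * 8 := Nat.mul_le_mul_left _ (by omega)
    omega

end
end SC

namespace SC

open FreeGroup
set_option linter.unusedSectionVars false

section
variable {S : IndexedStructure} {p₁ p₂ : ℕ}

theorem trim {N : ℕ} {σ : ℤ → GenSym S.A × Bool} {t : ℤ} {g ζ u u' : List (GenSym S.A × Bool)} {f : GenSym S.A} {n : ℤ} (hn : n ≠ 0)
    (h : At σ t (u ++ Fw f n ++ u')) (hu : u <:+ g ++ ζ ++ invRev g) (hu' : u' <+: g ++ ζ ++ invRev g)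
    (l1 : 34 * N ≤ 100 * u.length) (l2 : 34 * N ≤ 100 * u'.length) (hg : 100 * g.length < N) :
    ∃ t' v v', At σ t' (v ++ Jw f g n ++ v') ∧ v <:+ ζ ∧ v' <+: ζ ∧ 32 * N ≤ 100 * v.length ∧ 32 * N ≤ 100 * v'.length := by
  obtain ⟨v, hv, hv2, hv3⟩ : ∃ v, v <:+ ζ ∧ 32 * N ≤ 100 * v.length ∧ v ++ invRev g <:+ u := by
    rcases suffix_append_split hu with h | ⟨q, rfl, hq⟩
    · have := h.length_le; rw [invRev_length] at this; omega
    · rw [List.length_append, invRev_length] at l1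
      rcases suffix_append_split hq with h | ⟨q', rfl, hq'⟩
      · exact ⟨q, h, by omega, List.suffix_rfl⟩
      · have := hq'.length_le
        rw [List.length_append] at l1
        exact ⟨ζ, List.suffix_rfl, by omega, ⟨q', by simp⟩⟩
  obtain ⟨v', hv', hv2', hv3'⟩ : ∃ v, v <+: ζ ∧ 32 * N ≤ 100 * v.length ∧ g ++ v <+: u' := by
    rw [List.append_assoc] at hu'
    rcases prefix_append_split hu' with h | ⟨q, rfl, hq⟩
    · have := h.length_le; omega
    · rw [List.length_append] at l2
      rcases prefix_append_split hq with h | ⟨q', rfl, hq'⟩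
      · exact ⟨q, h, by omega, List.prefix_rfl⟩
      · have := hq'.length_le
        rw [invRev_length] at this
        rw [List.length_append] at l2
        exact ⟨ζ, List.prefix_rfl, by omega, ⟨q', by simp⟩⟩
  obtain ⟨r, hr⟩ := hv3
  obtain ⟨r', hr'⟩ := hv3'
  obtain ⟨t', ht'⟩ := h.sub (u := v ++ Jw f g n ++ v') ⟨r, r', by rw [← hr, ← hr', Jw, if_neg hn]; simp⟩
  exact ⟨t', v, v', ht', hv, hv', hv2, hv2'⟩

theorem V2 (h1 : 10 ^ 10 < p₁) (h2 : 10 ^ 10 < p₂) {f : GenSym S.A} {p : ℕ} (hf : Fl p₁ p₂ f p)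
    {Z : List (GenSym S.A × Bool)} (hZ : ZW S p₁ p₂ f Z) {n : ℕ → ℤ} (hn : ∀ k ≤ 999, 2 * (n k).natAbs ≤ p)
    (hinj : ∀ k ≤ 999, ∀ k' ≤ 999, n k = n k' → k = k')
    (hm : mk (Wd Z (fun k => Fw f (n k)) (List.range 1000)) ∈ Subgroup.normalClosure (grpRels S p₁ p₂))
    {j : ℕ} (hj : j ≤ 999) (hnj : n j ≠ 0) (hB : Bad S p₁ p₂ f Z (n j)) : False := by
  obtain ⟨σ₁, N₁, t₁, u, u', hF₁, hc₁, hA₁, hu, hu', l1, l1', hg⟩ := hB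
  have hN₁ := hF₁.big h1 h2
  obtain ⟨g, ζ, hdec, hcyc⟩ : ∃ g ζ, g ++ ζ ++ invRev g = Z ∧ IsCyclicallyReduced ζ :=
    ⟨_, _, reduceCyclically.conj_conjugator_reduceCyclically Z, reduceCyclically.isCyclicallyReduced hZ.red⟩
  have hζ : ζ ≠ [] := by
    rintro rfl
    have h3 : (mk Z).toWord = Z := by rw [toWord_mk, hZ.red.reduce_eq]
    apply hZ.ne
    rw [← h3, ← hdec, List.append_nil, ← mul_mk, ← inv_mk, mul_inv_cancel, toWord_one]
  have hgl := hg g ⟨ζ ++ invRev g, by rw [← hdec]; simp⟩ ⟨g ++ ζ, hdec⟩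
  have sufZ : ζ ++ invRev g <:+ Z := ⟨g, by rw [← hdec]; simp⟩
  have preZ : g ++ ζ <+: Z := ⟨invRev g, hdec⟩
  have ζZ : ζ <:+: Z := ⟨g, invRev g, hdec⟩
  obtain ⟨t₂, v, v', hA₂, hv, hv', lv, lv'⟩ := trim hnj hA₁ (hdec ▸ hu) (hdec ▸ hu') l1 l1' hgl
  have hJ : ∀ {m : ℤ}, m ≠ 0 → ζ ++ Jw f g m ++ ζ = (ζ ++ invRev g) ++ Fw f m ++ (g ++ ζ) := fun hm => by
    rw [Jw, if_neg hm]; simp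
  have hred1 : ∀ m : ℤ, IsReduced (ζ ++ Jw f g m ++ ζ) := fun m => by
    by_cases hm : m = 0
    · subst hm
      have := (hcyc.flatten_replicate 2).isReduced
      simpa [Jw, List.replicate] using this
    · rw [hJ hm]
      refine (hZ.join hm).infix ⟨g, invRev g, ?_⟩
      conv_rhs => rw [← hdec]
      simp
  have hred : IsReduced (Wd ζ (fun k => Jw f g (n k)) (rot 999 j ++ [j])) :=
    Wd_red hζ (fun k _ => hred1 (n k)) ((hred1 (n j)).infix (List.prefix_append _ _).isInfix)
  have hmem : mk (Wd ζ (fun k => Jw f g (n k)) (List.range 1000)) ∈ Subgroup.normalClosure (grpRels S p₁ p₂) := by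
    rw [Wd_conj, hdec]
    have := Subgroup.Normal.conj_mem inferInstance _ hm (mk g)⁻¹
    rwa [inv_inv] at this
  obtain ⟨σ, N, t, s, hR, hs, hsW, hl⟩ := green' h1 h2 hred (by rw [Wd_append]; simp [Wd, hζ]) (rot_prod hj hmem)
  have hN := hR.npos h1 h2
  have lζ : 32 * N₁ ≤ 100 * ζ.length := by have := hv.length_le; omega
  rcases struct hsW with ⟨k, hk, hsk⟩ | hb | ⟨s1, mids, s2, rfl, hmi, ⟨k, hk, hs1⟩, hs2⟩
  · have hkj := rot_ne hk hj
    have hk9 := rot_mem hk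
    have hJ1 : 100 * (Jw f g (n j)).length < 10 * N₁ := by
      have := hc₁.J (at_append.1 (at_append.1 hA₂).1).2 List.infix_rfl hgl; omega
    suffices hh : Jw f g (n j) = Jw f g (n k) from hkj (hinj k hk9 j hj (Jw_inj hh).symm)
    by_cases h0 : n k = 0
    · have e0 : Jw f g (n k) = [] := by rw [Jw, if_pos h0]
      rw [e0] at hsk ⊢
      rw [List.append_nil] at hsk
      rcases List.infix_append_iff.1 hsk with h | h | ⟨v2, v2', rfl, h3, h4⟩
      · have := hZ.short _ _ hR _ _ hs (h.trans ζZ); omega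
      · have := hZ.short _ _ hR _ _ hs (h.trans ζZ); omega
      · obtain ⟨ha, hb⟩ := at_append.1 hs
        have e1 := hZ.short _ _ hR _ _ ha (h3.isInfix.trans ζZ)
        have e2 := hZ.short _ _ hR _ _ hb (h4.isInfix.trans ζZ)
        rw [List.length_append] at hl
        exact conflict h1 h2 hF₁ hc₁ hR hA₂ (J2 := []) (v2 := v2) (v2' := v2') (by simpa using hs) hv h3 hv' h4 lv (by omega) lv' (by omega) hJ1
          (by simp; omega)
    · rw [hJ h0] at hsk
      obtain ⟨h3, h4, ⟨w, w', rfl, hw, hw', h5, h6⟩, h7⟩ := bad h1 h2 hf hZ sufZ preZ h0 (hn k hk9) hR hs hsk hl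
      have hgl2 := h7 g ⟨ζ ++ invRev g, by rw [← hdec]; simp⟩ ⟨g ++ ζ, hdec⟩
      obtain ⟨t₃, x, x', hA₃, hx, hx', lx, lx'⟩ := trim h0 hs (hdec ▸ hw.trans sufZ) (hdec ▸ hw'.trans preZ) h5 h6 hgl2
      have hJ2 : 100 * (Jw f g (n k)).length < 10 * N := by
        have := h4.J (at_append.1 (at_append.1 hA₃).1).2 List.infix_rfl hgl2; omega
      exact conflict h1 h2 hF₁ hc₁ hR hA₂ hA₃ hv hx hv' hx' lv lx lv' lx' hJ1 hJ2
  · rw [Jw, if_neg hnj, ← List.append_assoc, ← List.append_assoc] at hb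
    obtain ⟨h3, h4, ⟨w, w', rfl, hw, hw', h5, h6⟩, h7⟩ := bad h1 h2 hf hZ sufZ (c := g) ⟨ζ ++ invRev g, by rw [← hdec]; simp⟩ hnj (hn j hj) hR hs hb hl
    have hgl2 := h7 g ⟨ζ ++ invRev g, by rw [← hdec]; simp⟩ ⟨g ++ ζ, hdec⟩
    have := hw'.length_le
    omega
  · obtain ⟨r, hr⟩ := hv
    obtain ⟨t₃, hvs⟩ := hs.sub (u := v) ⟨s1 ++ r, Md ζ (fun k => Jw f g (n k)) mids ++ s2, by
      conv_rhs => rw [← hr]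
      simp [Md, hr]⟩
    obtain ⟨hsame, hNN⟩ := same100 h1 h2 hF₁ hR (at_append.1 (at_append.1 hA₂).1).1 hvs (by omega)
    subst hNN
    have hs' : At σ₁ (t₂ - t₃ + t) _ := hs.shift (c := t₂ - t₃) fun i => by
      have := hsame (i - t₃)
      rw [add_sub_cancel] at this
      rw [← this]; congr 1; ring
    have hs2' : ∃ k', s2 <+: Jw f g (n k') ++ ζ := by
      rcases hs2 with ⟨k', -, h3⟩ | h3
      · exact ⟨k', h3⟩
      · exact ⟨j, h3.trans (List.prefix_append _ _)⟩
    obtain ⟨k', hs2'⟩ := hs2'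
    obtain ⟨t₄, hζA⟩ := hs.sub (u := ζ) ⟨s1, Md ζ (fun k => Jw f g (n k)) mids ++ s2, by simp⟩
    have hζ2 := hZ.short _ _ hR _ _ hζA ζZ
    have := caseC h1 h2 hF₁ hc₁ hgl hζ2 hs' hs1 hs2' hl
    omega

end
end SC

namespace SC

open FreeGroup
set_option linter.unusedSectionVars false

section
variable {A : Type} {x y : GenSym A} {lo : ℕ} {K k : ℤ} {n : ℕ → ℤ}

theorem chL_S (h : x ≠ y) (k : ℤ) : chL x y lo (pos (chB x y lo) k) = (x, true) := by
  have := (chTail (lo := lo) h).z k 0 (by simp)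
  simpa using this

theorem chL_x (h : x ≠ y) {t : ℤ} (ht : (chL x y lo t).1 ≠ y) : ∃ k, t = pos (chB x y lo) k := by
  obtain ⟨k, -, -, h1 | ⟨-, -, h2, i, hi, h3, -⟩⟩ := (chTail (lo := lo) h).cases t
  · rw [h1.1] at ht; exact absurd rfl ht
  · simp at hi; subst hi; exact ⟨k, by simpa using h3⟩

theorem chS_lt (h : x ≠ y) {k k' : ℤ} : pos (chB x y lo) k < pos (chB x y lo) k' ↔ k < k' := by
  have T := chTail (lo := lo) h
  have : StrictMono (pos (chB x y lo)) := strictMono_int_of_lt_succ T.lt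
  exact this.lt_iff_lt

theorem chNxt (h : x ≠ y) {d : ℤ} (hd : 0 < d) (h1 : (chL x y lo (pos (chB x y lo) k + d)).1 ≠ y)
    (h2 : ∀ i, 0 < i → i < d → (chL x y lo (pos (chB x y lo) k + i)).1 = y) : d = 1 + chE lo k ∧
    pos (chB x y lo) k + d = pos (chB x y lo) (k + 1) := by
  have T := chTail (lo := lo) h
  obtain ⟨m, hm⟩ := chL_x h h1
  have h3 := T.step k
  simp at h3
  have h4 : k < m := (chS_lt (lo := lo) h).1 (by omega)
  rcases eq_or_lt_of_le (show k + 1 ≤ m from h4) with h5 | h5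
  · subst h5; omega
  · exfalso
    have h6 := (chS_lt (lo := lo) h).2 h5
    have h7 := h2 (1 + chE lo k) (by omega) (by omega)
    rw [show pos (chB x y lo) k + (1 + chE lo k) = pos (chB x y lo) (k + 1) by omega, chL_S h] at h7
    exact h h7

theorem At.Fw {σ : ℤ → GenSym A × Bool} {t n : ℤ} {f : GenSym A} (h : At σ t (Fw f n)) (i : ℕ) (hi : i < n.natAbs) :
    σ (t + i) = (f, decide (0 < n)) := by
  rw [at_iff.1 h i (by rwa [Fw_length])]
  exact Fw_mem (List.getElem_mem _)

theorem run_step (h : x ≠ y) {n : ℤ} (hn : n ≠ 0) {t : ℤ} {v : List (GenSym A × Bool)} (hv : v ≠ []) (hvh : ∀ a ∈ v.head?, a.1 ≠ y)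
    (hS : t = pos (chB x y lo) k + 1) (ha : At (chL x y lo) t (Fw y n ++ v)) : n = chE lo k ∧
      t + (Fw y n).length = pos (chB x y lo) (k + 1) := by
  rw [at_append, Fw_length] at ha
  obtain ⟨h1, h2⟩ := ha
  replace h1 := h1.Fw
  obtain ⟨a, v, rfl⟩ := List.exists_cons_of_ne_nil hv
  have h3 := h2.cons
  have h4 : a.1 ≠ y := hvh a (by simp)
  subst hS
  have h5 := chNxt (k := k) (lo := lo) h (d := 1 + n.natAbs) (by omega) (by rw [← add_assoc, h3]; exact h4) fun i hi hi' => by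
    have := h1 (i - 1).toNat (by omega)
    rw [show pos (chB x y lo) k + 1 + ((i - 1).toNat : ℤ) = pos (chB x y lo) k + i by omega] at this
    rw [this]
  have h6 := h1 0 (by omega)
  have h7 : 0 < n := by
    have h8 : (chL x y lo (pos (chB x y lo) k + 1 + (0 : ℕ))).2 = true := by
      rcases chL_cases (lo := lo) h (pos (chB x y lo) k + 1 + (0 : ℕ)) with h | h <;> rw [h]
    rw [h6] at h8
    simpa using h8
  rw [Fw_length]
  exact ⟨by omega, by omega⟩

theorem single_run (h : x ≠ y) {Y : List (GenSym A × Bool)} (hY : Y = [(x, true)]) {mids : List ℕ} (hm : ∀ k ∈ mids, n k ≠ 0)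
    (ha : At (chL x y lo) (pos (chB x y lo) K) (Y ++ Md Y (fun k => Fw y (n k)) mids)) :
    ∀ i (hi : i < mids.length), n mids[i] = chE lo (K + i) := by
  induction mids generalizing K with
  | nil => intro i hi; simp at hi
  | cons m mids ih =>
    rw [Md_cons, List.append_assoc, at_append] at ha
    have h1 := run_step h (hm m (by simp)) (v := Y ++ Md Y (fun k => Fw y (n k)) mids) (by simp [hY]) (by simp [hY, h]) (k := K)
      (by simp [hY]) ha.2
    have h2 := (at_append.1 ha.2).2
    rw [h1.2] at h2
    have h3 := ih (fun k hk => hm k (by simp [hk])) h2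
    intro i hi
    cases i with
    | zero => simpa using h1.1
    | succ i =>
      have := h3 i (by simpa using hi)
      simp only [List.getElem_cons_succ]
      rw [this, show K + 1 + (i : ℤ) = K + ((i + 1 : ℕ) : ℤ) by push_cast; ring]

theorem Y_single (h : x ≠ y) {Y : List (GenSym A × Bool)} (hY : Y ≠ []) (hh : ∀ a ∈ Y.head?, a.1 ≠ y) (hl : ∀ a ∈ Y.getLast?, a.1 ≠ y)
    (hs : 100 * Y.length < chN lo) {n : ℤ} (hn : n ≠ 0) {t : ℤ} (ha : At (chL x y lo) t (Y ++ (Fw y n ++ Y))) : Y = [(x, true)] ∧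
    ∃ K, t = pos (chB x y lo) K := by
  have hlen : 0 < Y.length := List.length_pos_iff.2 hY
  have T := chTail (lo := lo) h
  obtain ⟨a1, a2⟩ := at_append.1 ha
  have a3 := (at_append.1 a2).2
  have b1 := at_iff.1 a1
  have c1 : (chL x y lo t).1 ≠ y := by
    have := b1 0 hlen
    simp at this
    rw [this]
    exact hh _ (by rw [List.head?_eq_getElem?]; simp [hlen])
  have c2 : (chL x y lo (t + (Y.length - 1 : ℕ))).1 ≠ y := by
    rw [b1 (Y.length - 1) (by omega)]
    exact hl _ (by rw [List.getLast?_eq_getElem?]; simp [hlen])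
  obtain ⟨K, rfl⟩ := chL_x h c1
  obtain ⟨K', hK'⟩ := chL_x h c2
  refine ⟨?_, K, rfl⟩
  by_cases hL : Y.length = 1
  · obtain ⟨a, rfl⟩ := List.length_eq_one_iff.1 hL
    rw [← a1.cons, chL_S h]
  exfalso
  have h1 : K < K' := (chS_lt (lo := lo) h).1 (by omega)
  have h2 := (run_step h hn (k := K') (v := Y) hY hh (by omega) a2).2
  rw [h2] at a3
  have b3 := at_iff.1 a3
  have st := T.step K
  simp at st
  have h3 : pos (chB x y lo) (K + 1) ≤ pos (chB x y lo) K' := by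
    rcases eq_or_lt_of_le (show K + 1 ≤ K' from h1) with h5 | h5
    · rw [h5]
    · exact ((chS_lt (lo := lo) h).2 h5).le
  have key : ∀ i : ℤ, 0 ≤ i → i < Y.length → chL x y lo (pos (chB x y lo) (K' + 1) + i) = chL x y lo (pos (chB x y lo) K + i) := by
    intro i h0 hi
    have u := b1 i.toNat (by omega)
    have v := b3 i.toNat (by omega)
    rw [Int.toNat_of_nonneg h0] at u v
    rw [u, v]
  have h4 := chNxt (k := K' + 1) (lo := lo) h (d := 1 + chE lo K) (by omega) (by
      rw [key _ (by omega) (by omega), show pos (chB x y lo) K + (1 + chE lo K) = pos (chB x y lo) (K + 1) by omega, chL_S h]; exact h)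
    fun i hi hi' => by
      rw [key _ (by omega) (by omega)]
      by_contra hc
      obtain ⟨m, hm⟩ := chL_x h hc
      have u1 := (chS_lt (lo := lo) h).1 (show pos (chB x y lo) K < pos (chB x y lo) m by omega)
      have u2 := (chS_lt (lo := lo) h).1 (show pos (chB x y lo) m < pos (chB x y lo) (K + 1) by omega)
      omega
  have h5 : chE lo K = chE lo (K' + 1) := by omega
  have h6 := chE_inj h5
  obtain ⟨q, hq⟩ : ∃ q, K' + 1 = q * 1000 + K := ⟨(K' + 1 - K) / 1000, by omega⟩
  have h7 : 1 ≤ q := by omega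
  have h8 := chPos_mul (x := x) (y := y) (lo := lo) q K
  rw [← hq] at h8
  have h9 : (chN lo : ℤ) ≤ q * chN lo := by nlinarith [Int.natCast_nonneg (chN lo)]
  have st' := T.step K'
  simp at st'
  have e1 := chE_le lo K'
  have e2 : 2 * (lo + 1000) ^ 2 ≤ chN lo := by unfold chN; nlinarith
  omega

theorem x_isol (h : x ≠ y) {n : ℤ} {t : ℤ} (ha : At (chL x y lo) t (Fw x n)) (hn : n ≠ 0) : n = 1 := by
  have T := chTail (lo := lo) h
  have b := ha.Fw
  have b0 := b 0 (by omega)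
  have h1 : (chL x y lo (t + (0 : ℕ))).2 = true := by
    rcases chL_cases (lo := lo) h (t + (0 : ℕ)) with h | h <;> rw [h]
  have h0 : 0 < n := by rw [b0] at h1; simpa using h1
  by_contra hc
  obtain ⟨k, hk⟩ := chL_x (lo := lo) h (t := t) (by simp at b0; rw [b0]; exact h)
  have b1 := b 1 (by omega)
  obtain ⟨k', hk'⟩ := chL_x (lo := lo) h (t := t + (1 : ℕ)) (by rw [b1]; exact h)
  have h2 := (chS_lt (lo := lo) h).1 (show pos (chB x y lo) k < pos (chB x y lo) k' by omega)
  have st := T.step k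
  simp at st
  have := chE_pos lo k
  rcases eq_or_lt_of_le (show k + 1 ≤ k' from h2) with h5 | h5
  · subst h5; omega
  · have := ((chS_lt (lo := lo) h).2 h5); omega
end
end SC

namespace SC

open FreeGroup
set_option linter.unusedSectionVars false

section
variable {S : IndexedStructure} {p₁ p₂ : ℕ}

theorem V3core {f x y : GenSym S.A} {lo : ℕ} (hc : Chn x y lo) {Y : List (GenSym S.A × Bool)} (hY : Y ≠ [])
    (hh : ∀ a ∈ Y.head?, a.1 ≠ f) (hl : ∀ a ∈ Y.getLast?, a.1 ≠ f)
    (hs : 100 * Y.length < chN lo) {n : ℕ → ℤ} {mids : List ℕ} (hm : ∀ k ∈ mids, n k ≠ 0) (h9 : 9 ≤ mids.length)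
    (hd : n (mids[0]'(by omega)) ≠ n (mids[1]'(by omega))) {t : ℤ}
    (ha : At (chL x y lo) t (Y ++ Md Y (fun k => Fw f (n k)) mids)) :
    f = y ∧ Y = [(x, true)] ∧ ∃ K : ℤ, ∀ i (hi : i < mids.length), n mids[i] = chE lo (K + i) := by
  have h := hc.ne
  match mids, h9 with
  | m0 :: m1 :: mids, h9 =>
    have n0 := hm m0 (by simp)
    have n1 := hm m1 (by simp)
    simp only [List.getElem_cons_zero, List.getElem_cons_succ] at hd
    rw [Md_cons, Md_cons] at ha
    obtain ⟨t0, a0⟩ := ha.sub (u := Fw f (n m0)) (List.infix_iff_prefix_suffix.2 ⟨_, List.prefix_append _ (Y ++ (Fw f (n m1) ++ Y ++ Md Y (fun k => Fw f (n k)) mids)), by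
      simp⟩)
    obtain ⟨t1, a1⟩ := ha.sub (u := Fw f (n m1)) (List.infix_iff_prefix_suffix.2 ⟨_, List.prefix_append _ (Y ++ Md Y (fun k => Fw f (n k)) mids), by
      refine ⟨Y ++ Fw f (n m0) ++ Y, by simp⟩⟩)
    have hfx : f = x ∨ f = y := by
      have := a0.Fw 0 (by omega)
      rcases chL_cases (lo := lo) h (t0 + (0 : ℕ)) with h | h <;> rw [h] at this <;> simp at this
      · exact .inl this.1.symm
      · exact .inr this.1.symm
    rcases hfx with rfl | rfl
    · exact absurd ((x_isol h a0 n0).trans (x_isol h a1 n1).symm) hd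
    · obtain ⟨h1, K, hK⟩ := Y_single h hY hh hl hs n0 (t := t) (by
        refine (at_append (v := Fw f (n m1) ++ Y ++ Md Y (fun k => Fw f (n k)) mids)).1 ?_ |>.1
        simpa using ha)
      refine ⟨rfl, h1, K, single_run h h1 hm ?_⟩
      rw [← hK, Md_cons, Md_cons]; exact ha

theorem invRev_Md {α : Type*} [DecidableEq α] {Z : List (α × Bool)} {f : α} (n : ℕ → ℤ) (mids : List ℕ) :
    invRev (Z ++ Md Z (fun k => Fw f (n k)) mids) = invRev Z ++ Md (invRev Z) (fun k => Fw f (-n k)) mids.reverse := by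
  induction mids with
  | nil => simp [Md]
  | cons m mids ih =>
    rw [Md_cons, List.reverse_cons, Md_append, ← List.append_assoc, ← List.append_assoc, List.append_assoc, invRev_append, ih, invRev_append, invRev_Fw]
    simp [Md]

theorem small0 {p : ℕ} {a : ℤ} (hp : 10 ^ 10 < p) (h : (p : ℤ) ∣ a) (ha : |a| < 10 ^ 10) : a = 0 :=
  Int.eq_zero_of_abs_lt_dvd h (by omega)

theorem chE_val {lo : ℕ} {K : ℤ} {R : ℤ} (h : K % 1000 = R) : (chE lo K : ℤ) = (lo + R + 1) ^ 2 := by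
  unfold chE
  push_cast
  rw [h, Int.toNat_of_nonneg (by omega)]

theorem V3 (h1 : 10 ^ 10 < p₁) (h2 : 10 ^ 10 < p₂) {f : GenSym S.A} {p : ℕ} (hf : Fl p₁ p₂ f p)
    {Z : List (GenSym S.A × Bool)} (hZ : ZW S p₁ p₂ f Z) {n : ℕ → ℤ} {s : ℤ}
    (hn : ∀ k : ℕ, (p : ℤ) ∣ n k - ((1001 + k) ^ 2 + s)) (hinj : ∀ k ≤ 999, ∀ k' ≤ 999, n k = n k' → k = k')
    (hM : Many S p₁ p₂ f Z n) : Z = [(GenSym.b, true)] ∧ (p : ℤ) ∣ s := by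
  obtain ⟨σ, N, t, mids, c, hR, hnc, hZN, ha, h9, hm, hc⟩ := hM
  have hp := hf.big h1 h2
  obtain ⟨σ₀, hσ, s₀, hs | hs⟩ := hR
  · cases hσ with
    | F h => exact absurd ⟨_, fun i _ => hs _⟩ (hnc.1 0 N (by omega))
    | @C x y lo h =>
      obtain ⟨rfl, hY, K, hK⟩ := V3core h hZ.ne hZ.head hZ.last hZN hm h9 (fun h => by
        have := hinj _ (by rw [hc]; omega) _ (by rw [hc]; omega) h
        rw [hc, hc] at this; omega) (ha.shift hs)
      obtain ⟨i, hi, q1, q2⟩ : ∃ i : ℕ, i ≤ 4 ∧ (c + i) % 1000 ≤ 998 ∧ (K + i) % 1000 ≤ 998 := by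
        by_contra hcon
        push Not at hcon
        have u0 := hcon 0 (by omega)
        have u1 := hcon 2 (by omega)
        have u2 := hcon 4 (by omega)
        push_cast at u0 u1 u2
        omega
      have e0 := hn (mids[i]'(by omega))
      have e1 := hn (mids[i + 1]'(by omega))
      rw [hK, hc] at e0 e1
      obtain ⟨a, hA⟩ : ∃ a, (c + i) % 1000 = a := ⟨_, rfl⟩
      obtain ⟨r, hr⟩ : ∃ r, (K + i) % 1000 = r := ⟨_, rfl⟩
      rw [hA, chE_val hr] at e0
      rw [show (c + (i + 1)) % 1000 = a + 1 by omega, chE_val (show (K + (i + 1 : ℕ)) % 1000 = r + 1 by push_cast; omega)] at e1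
      have e2 := dvd_sub e1 e0
      push_cast at e0 e2
      rw [show ((lo : ℤ) + (r + 1) + 1) ^ 2 - ((1001 + (a + 1)) ^ 2 + s) - ((lo + r + 1) ^ 2 - ((1001 + a) ^ 2 + s)) = 2 * (lo + r - 1000 - a) by ring] at e2
      have hlo := h.lo_le
      have e3 := small0 hp e2 (by rw [abs_lt]; omega)
      have hlo' : lo = 1000 := by
        have : 1000 ∣ lo := by cases h <;> norm_num
        omega
      subst hlo'
      have hra : (r : ℤ) = a := by push_cast at e3; omega
      refine ⟨?_, ?_⟩
      · rw [hY]; cases h <;> rfl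
      · rw [hra] at e0
        rw [← dvd_neg]; rw [show ((1000 : ℕ) + (a : ℤ) + 1) ^ 2 - ((1001 + a) ^ 2 + s) = - s by push_cast; ring] at e0; exact e0
  · cases hσ with
    | F h => exact absurd ⟨_, fun i _ => hs _⟩ (hnc.1 0 N (by omega))
    | @C x y lo h =>
      exfalso
      have hs' : ∀ i, chL x y lo i = ibar (σ (s₀ - i)) := fun i => by rw [hs, ibar_ibar, sub_sub_cancel]
      have hr := ha.rev hs'
      rw [invRev_Md] at hr
      have hrev : ∀ i (hi : i < mids.reverse.length), mids.reverse[i] = (c + (mids.length - 1 - i)) % 1000 := fun i hi => by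
        rw [List.getElem_reverse, hc]
      have hL : mids.reverse.length = mids.length := List.length_reverse
      obtain ⟨rfl, hY, K, hK⟩ := V3core (n := fun k => - n k) h (by simpa [invRev] using hZ.ne) (fun a haa => by
          rw [invRev, List.head?_reverse, List.getLast?_map] at haa
          simp only [Option.mem_def, Option.map_eq_some_iff] at haa
          obtain ⟨b, hb, rfl⟩ := haa
          exact hZ.last b hb) (fun a haa => by
          rw [invRev, List.getLast?_reverse, List.head?_map] at haa
          simp only [Option.mem_def, Option.map_eq_some_iff] at haa
          obtain ⟨b, hb, rfl⟩ := haa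
          exact hZ.head b hb) (by rwa [invRev_length]) (mids := mids.reverse) (fun k hk => by
            have := hm k (by simpa using hk); omega) (by omega) (fun h => by
        have := hinj _ (by rw [hrev]; omega) _ (by rw [hrev]; omega) (neg_inj.1 h)
        rw [hrev, hrev] at this; omega) hr
      obtain ⟨i, hi, q1, q2⟩ : ∃ i : ℕ, i ≤ 6 ∧ 2 ≤ (c + (mids.length - 1 - i)) % 1000 ∧ (K + i) % 1000 ≤ 997 := by
        by_contra hcon
        push Not at hcon
        have u0 := hcon 0 (by omega)
        have u1 := hcon 3 (by omega)
        have u2 := hcon 6 (by omega)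
        push_cast at u0 u1 u2
        omega
      have e0 := hn (mids.reverse[i]'(by omega))
      have e1 := hn (mids.reverse[i + 1]'(by omega))
      have e2 := hn (mids.reverse[i + 2]'(by omega))
      have hK' : ∀ i (hi : i < mids.reverse.length), n mids.reverse[i] = - chE lo (K + i) := fun i hi => by
        have := hK i hi; omega
      rw [hK', hrev] at e0 e1 e2
      obtain ⟨a, hA⟩ : ∃ a, (c + (mids.length - 1 - i)) % 1000 = a + 2 := ⟨_, (Nat.sub_add_cancel q1).symm⟩
      obtain ⟨r, hr⟩ : ∃ r, (K + i) % 1000 = r := ⟨_, rfl⟩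
      rw [hA, chE_val hr] at e0
      rw [show (c + (mids.length - 1 - (i + 1))) % 1000 = a + 1 by omega, chE_val (show (K + (i + 1 : ℕ)) % 1000 = r + 1 by push_cast; omega)] at e1
      rw [show (c + (mids.length - 1 - (i + 2))) % 1000 = a by omega, chE_val (show (K + (i + 2 : ℕ)) % 1000 = r + 2 by push_cast; omega)] at e2
      have e3 := dvd_sub (dvd_sub e2 e1) (dvd_sub e1 e0)
      push_cast at e3
      have e4 := small0 (a := 4) hp (by rw [← dvd_neg]; convert e3 using 1; ring) (by norm_num)
      omega
end
end SC

namespace SC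

open FreeGroup
set_option linter.unusedSectionVars false

section
variable {S : IndexedStructure} {p₁ p₂ : ℕ}

/-- the projection -/
def pj (S : IndexedStructure) (p₁ p₂ : ℕ) : FreeGroup (GenSym S.A) →* GA S p₁ p₂ := PresentedGroup.mk (grpRels S p₁ p₂)

theorem pj_of (g : GenSym S.A) : pj S p₁ p₂ (FreeGroup.of g) = gen S p₁ p₂ g := rfl

theorem pj_one {w : FreeGroup (GenSym S.A)} : pj S p₁ p₂ w = 1 ↔ w ∈ Subgroup.normalClosure (grpRels S p₁ p₂) :=
  QuotientGroup.eq_one_iff (N := Subgroup.normalClosure (grpRels S p₁ p₂)) w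

theorem Fl.pow {f : GenSym S.A} {p : ℕ} (hf : Fl p₁ p₂ f p) : gen S p₁ p₂ f ^ p = 1 := by
  rw [← pj_of, ← _root_.map_pow, pj_one]
  apply Subgroup.subset_normalClosure
  cases hf <;> simp [grpRels]

theorem Fl.zpow {f : GenSym S.A} {p : ℕ} (hf : Fl p₁ p₂ f p) {a b : ℤ} (h : (p : ℤ) ∣ a - b) :
    gen S p₁ p₂ f ^ a = gen S p₁ p₂ f ^ b := by
  obtain ⟨c, hc⟩ := h
  rw [show a = b + p * c by omega, zpow_add, zpow_mul, zpow_natCast, hf.pow]; simp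

theorem bmod_small {p : ℕ} (hp : 0 < p) (x : ℤ) : 2 * (x.bmod p).natAbs ≤ p := by
  have := Int.le_bmod (x := x) hp
  have := Int.bmod_le (x := x) hp
  omega

theorem shorten (h1 : 10 ^ 10 < p₁) (h2 : 10 ^ 10 < p₂) {σ : ℤ → GenSym S.A × Bool} {n : ℕ} (hR : RR S p₁ p₂ σ n) {t : ℤ}
    {w : List (GenSym S.A × Bool)} (ha : At σ t w) (hw : w.length ≤ n) :
    ∃ w' : List (GenSym S.A × Bool), w'.length = n - w.length ∧ pj S p₁ p₂ (mk w) = pj S p₁ p₂ (mk w') := by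
  refine ⟨invRev (seg σ (t + w.length) (n - w.length)), by rw [invRev_length, seg_length], ?_⟩
  have h3 := ((RR.sys (S := S) h1 h2).shift _ _ hR t).mem
  have h4 := pre_add_nat (fun i => σ (t + i)) 0 n
  have h5 : seg (fun i => σ (t + i)) 0 n = seg σ t n := by simp [seg]
  rw [zero_add, pre_zero, one_mul, h5] at h4
  rw [h4, ← pj_one, show n = w.length + (n - w.length) by omega, seg_add, show seg σ t w.length = w from ha, ← mul_mk, _root_.map_mul] at h3
  rw [← inv_mk, _root_.map_inv]
  exact eq_inv_of_mul_eq_one_left h3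

theorem setup (h1 : 10 ^ 10 < p₁) (h2 : 10 ^ 10 < p₂) {f : GenSym S.A} {p : ℕ} (hf : Fl p₁ p₂ f p) {x : GA S p₁ p₂}
    (hx : x ^ p ≠ 1) : ∃ Z, ZW S p₁ p₂ f Z ∧ ∃ i j : ℤ, x = gen S p₁ p₂ f ^ i * pj S p₁ p₂ (mk Z) * gen S p₁ p₂ f ^ j := by
  set φ := gen S p₁ p₂ f with hφ
  let P : List (GenSym S.A × Bool) → Prop := fun w => ∃ i j : ℤ, x = φ ^ i * pj S p₁ p₂ (mk w) * φ ^ j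
  obtain ⟨w, hw, hmin⟩ : ∃ w, P w ∧ ∀ w', P w' → w.length ≤ w'.length := by
    have hex : ∃ l, ∃ w, P w ∧ w.length = l := by
      obtain ⟨z, hz⟩ := PresentedGroup.mk_surjective (grpRels S p₁ p₂) x
      refine ⟨_, z.toWord, ⟨0, 0, ?_⟩, rfl⟩
      rw [mk_toWord, zpow_zero, one_mul, mul_one]; exact hz.symm
    classical
    obtain ⟨w, hw, hl⟩ := Nat.find_spec hex
    exact ⟨w, hw, fun w' hw' => hl ▸ Nat.find_min' hex ⟨w', hw', rfl⟩⟩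
  obtain ⟨Z, hZred, hZ, hZmin⟩ : ∃ Z, IsReduced Z ∧ P Z ∧ ∀ w', P w' → Z.length ≤ w'.length := by
    refine ⟨(mk w).toWord, isReduced_toWord, ?_, fun w' hw' => ?_⟩
    · obtain ⟨i, j, h⟩ := hw
      exact ⟨i, j, by rw [mk_toWord]; exact h⟩
    · exact le_trans (norm_mk_le (L₁ := w)) (hmin w' hw')
  refine ⟨Z, ⟨hZred, ?_, ?_, ?_, ?_⟩, hZ⟩
  · rintro rfl
    obtain ⟨i, j, h⟩ := hZ
    rw [← one_eq_mk, _root_.map_one, mul_one, ← zpow_add] at h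
    apply hx
    rw [h, ← zpow_natCast, ← zpow_mul, mul_comm, zpow_mul, zpow_natCast, hf.pow, one_zpow]
  · intro σ n hR t w ha hwZ
    by_contra hcon
    have hn := hR.npos h1 h2
    set q := w.take n with hq
    have hql : q.length = min n w.length := by rw [hq, List.length_take]
    obtain ⟨t', ha'⟩ := ha.sub (List.take_prefix n w).isInfix
    obtain ⟨q', hq', he⟩ := shorten h1 h2 hR ha' (by rw [← hq, hql]; omega)
    obtain ⟨a, b, hab⟩ := (List.take_prefix n w).isInfix.trans hwZ
    obtain ⟨i, j, h⟩ := hZ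
    rw [← hq] at hq' he hab
    have := hZmin (a ++ q' ++ b) ⟨i, j, by
      rw [h, ← hab]
      simp only [← mul_mk, _root_.map_mul, he]⟩
    have h5 := congrArg List.length hab
    simp only [List.length_append] at this h5
    omega
  · intro a ha haf
    match Z, ha with
    | b :: Z', ha =>
      simp at ha
      subst ha
      obtain ⟨i, j, h⟩ := hZ
      have h6 : ∃ k : ℤ, pj S p₁ p₂ (mk [b]) = φ ^ k := by
        obtain ⟨g, e⟩ := b
        simp at haf; subst haf
        cases e
        · refine ⟨-1, ?_⟩
          rw [show (mk [(g, false)] : FreeGroup (GenSym S.A)) = (FreeGroup.of g)⁻¹ from rfl, _root_.map_inv, zpow_neg_one, pj_of]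
        · exact ⟨1, by rw [zpow_one]; rfl⟩
      obtain ⟨k, hk⟩ := h6
      have := hZmin Z' ⟨i + k, j, by
        rw [h, show b :: Z' = [b] ++ Z' from rfl, ← mul_mk, _root_.map_mul, hk, zpow_add]; group⟩
      simp at this
  · intro a ha haf
    rcases List.eq_nil_or_concat Z with h0 | ⟨Z', b, hb⟩
    · simp [h0] at ha
    · rw [List.concat_eq_append] at hb
      subst hb
      simp at ha
      subst ha
      obtain ⟨i, j, h⟩ := hZ
      have h6 : ∃ k : ℤ, pj S p₁ p₂ (mk [b]) = φ ^ k := by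
        obtain ⟨g, e⟩ := b
        simp at haf; subst haf
        cases e
        · refine ⟨-1, ?_⟩
          rw [show (mk [(g, false)] : FreeGroup (GenSym S.A)) = (FreeGroup.of g)⁻¹ from rfl, _root_.map_inv, zpow_neg_one, pj_of]
        · exact ⟨1, by rw [zpow_one]; rfl⟩
      obtain ⟨k, hk⟩ := h6
      have := hZmin Z' ⟨i, k + j, by
        rw [h, ← mul_mk, _root_.map_mul, hk, zpow_add]; group⟩
      simp at this

theorem pj_Wd {f : GenSym S.A} (Z : List (GenSym S.A × Bool)) (n : ℕ → ℤ) (ks : List ℕ) :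
    pj S p₁ p₂ (mk (Wd Z (fun k => Fw f (n k)) ks)) = (ks.map fun k => pj S p₁ p₂ (mk Z) * gen S p₁ p₂ f ^ n k).prod := by
  induction ks with
  | nil => simp [Wd, ← one_eq_mk]
  | cons k ks ih => rw [Wd_cons, ← mul_mk, ← mul_mk, _root_.map_mul, _root_.map_mul, ih, mk_Fw, map_zpow, pj_of]; simp

theorem conj_prod {G : Type*} [Group G] (g : G) (u v : ℕ → G) (h : ∀ k, u k = g * v k * g⁻¹) (ks : List ℕ) :
    (ks.map u).prod = g * (ks.map v).prod * g⁻¹ := by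
  induction ks with
  | nil => simp
  | cons k ks ih => rw [List.map_cons, List.prod_cons, ih, h, List.map_cons, List.prod_cons]; group

theorem main1 (h1 : 10 ^ 10 < p₁) (h2 : 10 ^ 10 < p₂) {f : GenSym S.A} {p : ℕ} (hf : Fl p₁ p₂ f p) {x : GA S p₁ p₂}
    (hx : x ^ p ≠ 1) (hc : chainProd 1000 x (gen S p₁ p₂ f) = 1) :
    ∃ i : ℤ, x = gen S p₁ p₂ f ^ i * gen S p₁ p₂ GenSym.b * gen S p₁ p₂ f ^ (-i) := by
  obtain ⟨Z, hZ, i, j, hij⟩ := setup h1 h2 hf hx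
  have hp := hf.big h1 h2
  let n : ℕ → ℤ := fun k => (((1001 + k : ℤ)) ^ 2 + (j + i)).bmod p
  have hn : ∀ k ≤ 999, 2 * (n k).natAbs ≤ p := fun k _ => bmod_small (by omega) _
  have hd : ∀ k : ℕ, (p : ℤ) ∣ n k - ((1001 + k) ^ 2 + (j + i)) := fun k => Int.dvd_bmod_sub_self
  have hinj : ∀ k ≤ 999, ∀ k' ≤ 999, n k = n k' → k = k' := by
    intro k hk k' hk' h
    have e := dvd_sub (hd k) (hd k')
    rw [h, sub_sub_sub_cancel_left] at e
    have := small0 hp e (by rw [abs_lt]; constructor <;> nlinarith)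
    have h5 : ((1001 + k : ℤ) - (1001 + k')) * (2002 + k + k') = 0 := by linarith
    rcases mul_eq_zero.1 h5 with h | h <;> omega
  have hm : mk (Wd Z (fun k => Fw f (n k)) (List.range 1000)) ∈ Subgroup.normalClosure (grpRels S p₁ p₂) := by
    rw [← pj_one, pj_Wd]
    unfold chainProd at hc
    generalize List.range 1000 = L at hc ⊢
    rw [conj_prod (gen S p₁ p₂ f ^ i) _ (fun k => pj S p₁ p₂ (mk Z) * gen S p₁ p₂ f ^ n k) (fun k => ?_)] at hc
    · have := mul_inv_eq_one.1 hc
      exact (mul_eq_left (a := gen S p₁ p₂ f ^ i)).1 this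
    · rw [hf.zpow (hd k), hij, ← zpow_natCast, zpow_add, zpow_add, show ((((1000 + k + 1) ^ 2 : ℕ)) : ℤ) = (1001 + k) ^ 2 by push_cast; ring]
      rw [← zpow_add, ← zpow_add, ← zpow_neg]
      simp only [mul_assoc, ← zpow_add]
      congr 3; ring
  have hM : Many S p₁ p₂ f Z n := by
    rcases V1 h1 h2 hf hZ hn hinj hm with h | ⟨k, hk, hk0, hB⟩
    · exact h
    · exact (V2 h1 h2 hf hZ hn hinj hm hk hk0 hB).elim
  obtain ⟨hb, hs⟩ := V3 h1 h2 hf hZ hd hinj hM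
  refine ⟨i, ?_⟩
  rw [hij, hb, hf.zpow (a := j) (b := -i) (by simpa using hs)]
  rfl
end
end SC

namespace SC

open FreeGroup
set_option linter.unusedSectionVars false

section
variable {S : IndexedStructure} {p₁ p₂ : ℕ}

theorem infix_split {β : Type*} {s a b : List β} (h : s <:+: a ++ b) : ∃ s1 s2, s = s1 ++ s2 ∧ s1 <:+: a ∧ s2 <:+: b := by
  rcases List.infix_append_iff.1 h with h | h | ⟨l₁, l₂, rfl, h1, h2⟩
  · exact ⟨s, [], by simp, h, List.nil_infix⟩
  · exact ⟨[], s, by simp, List.nil_infix, h⟩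
  · exact ⟨l₁, l₂, rfl, h1.isInfix, h2.isInfix⟩

theorem piece {f g : GenSym S.A} {e : Bool} {n : ℤ} {w : List (GenSym S.A × Bool)} (hw : w <:+: Fw g n)
    (h : ∀ a ∈ w, a = (f, e)) : w = [] ∨ (g = f ∧ decide (0 < n) = e) := by
  by_cases h0 : w = []
  · exact .inl h0
  · obtain ⟨a, ha⟩ := List.exists_mem_of_ne_nil _ h0
    have h1 := h a ha
    have h2 := Fw_mem (hw.subset ha)
    rw [h1] at h2
    simp at h2
    exact .inr ⟨h2.1.symm, h2.2.symm⟩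

theorem V4 (h1 : 10 ^ 10 < p₁) (h2 : 10 ^ 10 < p₂) {i j : ℤ} (hi : i ≠ 0) (hj : j ≠ 0) (hi2 : 2 * i.natAbs ≤ p₁)
    (hj2 : 2 * j.natAbs ≤ p₂)
    (hm : mk (Fw GenSym.f2 (-j) ++ (Fw GenSym.f1 i ++ (Fw GenSym.b 1 ++ (Fw GenSym.f1 (-i) ++ (Fw GenSym.f2 j ++ Fw GenSym.b (-1))))))
      ∈ Subgroup.normalClosure (grpRels S p₁ p₂)) : False := by
  have hFh : ∀ (g : GenSym S.A) (n : ℤ) (v : List (GenSym S.A × Bool)), n ≠ 0 → ∀ a ∈ (Fw g n ++ v).head?, a.1 = g := fun g n v hn a ha => by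
    rw [List.head?_append_of_ne_nil _ (Fw_ne hn)] at ha
    rw [Fw_mem (List.mem_of_mem_head? ha)]
  have hFl : ∀ (g : GenSym S.A) (n : ℤ), ∀ a ∈ (Fw g n).getLast?, a.1 = g := fun g n a ha => by
    rw [Fw_mem (List.mem_of_mem_getLast? ha)]
  have r5 : IsReduced (Fw (GenSym.f2 : GenSym S.A) j ++ Fw GenSym.b (-1)) := by
    have := red_join (f := (GenSym.f2 : GenSym S.A)) hj (u := []) (v := Fw GenSym.b (-1)) (by simp) (Fw_red _ _) (by simp) (fun a ha => by
      rw [Fw_mem (List.mem_of_mem_head? ha)]; simp)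
    simpa using this
  have r3 := red_join (f := (GenSym.f1 : GenSym S.A)) (n := -i) (by omega) (Fw_red GenSym.b 1) r5 (fun a ha => by
    rw [hFl _ _ a ha]; simp) (fun a ha => by rw [hFh _ _ _ hj a ha]; simp)
  have r1 := red_join (f := (GenSym.f1 : GenSym S.A)) hi (Fw_red GenSym.f2 (-j)) r3 (fun a ha => by
    rw [hFl _ _ a ha]; simp) (fun a ha => by rw [List.append_assoc] at ha; rw [hFh _ _ _ one_ne_zero a ha]; simp)
  simp only [List.append_assoc] at r1
  obtain ⟨σ, N, t, s, hR, hs, hsw, hl⟩ := green' h1 h2 r1 (fun h => Fw_ne (f := (GenSym.f2 : GenSym S.A)) (n := -j) (by omega) (List.append_eq_nil_iff.1 h).1) hm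
  have hN := hR.npos h1 h2
  obtain ⟨s1, q, rfl, c1, hq⟩ := infix_split hsw
  obtain ⟨s2, q, rfl, c2, hq⟩ := infix_split hq
  obtain ⟨s3, q, rfl, c3, hq⟩ := infix_split hq
  obtain ⟨s4, q, rfl, c4, hq⟩ := infix_split hq
  obtain ⟨s5, s6, rfl, c5, c6⟩ := infix_split hq
  have l1 := c1.length_le
  have l2 := c2.length_le
  have l3 := c3.length_le
  have l4 := c4.length_le
  have l5 := c5.length_le
  have l6 := c6.length_le
  simp only [Fw_length] at l1 l2 l3 l4 l5 l6
  simp only [List.length_append] at hl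
  by_cases hex : ∃ a ∈ s1 ++ (s2 ++ (s3 ++ (s4 ++ (s5 ++ s6)))), a.1 = GenSym.f1 ∨ a.1 = GenSym.f2
  · obtain ⟨a, ha, haf⟩ := hex
    obtain ⟨t', ht'⟩ := hs.eq_mem ha
    have hF : RF S p₁ p₂ σ N := hR.toRF (t := t') (by rw [ht']; exact haf)
    have hcs : (∃ f e, Fl p₁ p₂ f N ∧ ∀ t, σ t = (f, e)) ∨ NC σ N := hF.cases
    rcases hcs with ⟨f, e, hf, hc⟩ | hc
    · have hall : ∀ b ∈ s1 ++ (s2 ++ (s3 ++ (s4 ++ (s5 ++ s6)))), b = (f, e) := fun b hb => by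
        obtain ⟨t, ht⟩ := hs.eq_mem hb
        rw [← ht, hc]
      have d1 := piece c1 fun b hb => hall b (by simp [hb])
      have d2 := piece c2 fun b hb => hall b (by simp [hb])
      have d3 := piece c3 fun b hb => hall b (by simp [hb])
      have d4 := piece c4 fun b hb => hall b (by simp [hb])
      have d5 := piece c5 fun b hb => hall b (by simp [hb])
      have d6 := piece c6 fun b hb => hall b (by simp [hb])
      have key : ∀ n : ℤ, n ≠ 0 → decide (0 < n) = e → decide (0 < -n) = e → False := fun n hn u v => by
        rw [← u] at v
        simp at v
        omega
      cases hf with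
      | f1 =>
        simp at d1 d3 d5 d6
        simp only [d1, d3, d5, d6, List.length_nil] at hl
        rcases d2 with d2 | d2 <;> rcases d4 with d4 | d4
        · rw [d2, d4] at hl; simp at hl; omega
        · rw [d2] at hl; simp at hl; omega
        · rw [d4] at hl; simp at hl; omega
        · exact key i hi d2.2 d4.2
      | f2 =>
        simp at d2 d3 d4 d6
        simp only [d2, d3, d4, d6, List.length_nil] at hl
        rcases d1 with d1 | d1 <;> rcases d5 with d5 | d5
        · rw [d1, d5] at hl; simp at hl; omega
        · rw [d1] at hl; simp at hl; omega
        · rw [d5] at hl; simp at hl; omega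
        · exact key j hj d5.2 d1.2
    · obtain ⟨_, e1⟩ := hs.sub (u := s1) ⟨[], s2 ++ (s3 ++ (s4 ++ (s5 ++ s6))), by simp⟩
      obtain ⟨_, e2⟩ := hs.sub (u := s2) ⟨s1, s3 ++ (s4 ++ (s5 ++ s6)), by simp⟩
      obtain ⟨_, e4⟩ := hs.sub (u := s4) ⟨s1 ++ s2 ++ s3, s5 ++ s6, by simp⟩
      obtain ⟨_, e5⟩ := hs.sub (u := s5) ⟨s1 ++ s2 ++ s3 ++ s4, s6, by simp⟩
      have := hc.F e1 c1
      have := hc.F e2 c2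
      have := hc.F e4 c4
      have := hc.F e5 c5
      omega
  · push Not at hex
    have z : ∀ {w : List (GenSym S.A × Bool)} {g : GenSym S.A} {n : ℤ}, w <:+: Fw g n → (g = GenSym.f1 ∨ g = GenSym.f2) →
        (∀ a ∈ w, a.1 ≠ GenSym.f1 ∧ a.1 ≠ GenSym.f2) → w = [] := fun {w g n} hw hg h => by
      by_contra h0
      obtain ⟨a, ha⟩ := List.exists_mem_of_ne_nil _ h0
      have h3 := h a ha
      rw [Fw_mem (hw.subset ha)] at h3
      rcases hg with rfl | rfl <;> simp at h3
    have d1 := z c1 (by simp) fun b hb => hex b (by simp [hb])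
    have d2 := z c2 (by simp) fun b hb => hex b (by simp [hb])
    have d4 := z c4 (by simp) fun b hb => hex b (by simp [hb])
    have d5 := z c5 (by simp) fun b hb => hex b (by simp [hb])
    simp only [d1, d2, d4, d5, List.length_nil] at hl
    omega

theorem main2 (h1 : 10 ^ 10 < p₁) (h2 : 10 ^ 10 < p₂) {x : GA S p₁ p₂}
    (hc1 : chainProd 1000 x (gen S p₁ p₂ GenSym.f1) = 1) (hc2 : chainProd 1000 x (gen S p₁ p₂ GenSym.f2) = 1)
    (hx1 : x ^ p₁ ≠ 1) (hx2 : x ^ p₂ ≠ 1) : x = gen S p₁ p₂ GenSym.b := by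
  obtain ⟨i, hi⟩ := main1 h1 h2 Fl.f1 hx1 hc1
  obtain ⟨j, hj⟩ := main1 h1 h2 Fl.f2 hx2 hc2
  have red : ∀ {f : GenSym S.A} {p : ℕ} (hf : Fl p₁ p₂ f p) (i : ℤ), gen S p₁ p₂ f ^ i = gen S p₁ p₂ f ^ (i.bmod p) := fun hf i =>
    hf.zpow Int.dvd_self_sub_bmod
  rw [zpow_neg, red Fl.f1, ← zpow_neg] at hi
  rw [zpow_neg, red Fl.f2, ← zpow_neg] at hj
  have hi2 := bmod_small (p := p₁) (by omega) i
  have hj2 := bmod_small (p := p₂) (by omega) j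
  generalize i.bmod p₁ = i at hi hi2
  generalize j.bmod p₂ = j at hj hj2
  by_cases i0 : i = 0
  · rw [hi, i0]; simp
  by_cases j0 : j = 0
  · rw [hj, j0]; simp
  refine (V4 (S := S) h1 h2 i0 j0 hi2 hj2 ?_).elim
  rw [← pj_one]
  simp only [← mul_mk, _root_.map_mul, mk_Fw, _root_.map_zpow, pj_of]
  rw [hi] at hj
  rw [zpow_one, zpow_neg_one, ← mul_assoc (gen S p₁ p₂ GenSym.b),
    ← mul_assoc (gen S p₁ p₂ GenSym.f1 ^ i), ← mul_assoc (gen S p₁ p₂ GenSym.f1 ^ i), hj]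
  group
end
end SC

/-- Lemma `lem:uu`(2): in `G(𝒜)`, if `u_b(x,f₁) = e` and `u_b(x,f₂) = e`,
but `x^{p₁} ≠ e` and `x^{p₂} ≠ e`, then `x = b`. -/
theorem stmt_1 (S : IndexedStructure) (p₁ p₂ : ℕ)
    (hp₁ : p₁.Prime) (hp₂ : p₂.Prime) (hne : p₁ ≠ p₂)
    (hbig₁ : 10 ^ 10 < p₁) (hbig₂ : 10 ^ 10 < p₂)
    (x : GA S p₁ p₂)
    (h1 : chainProd 1000 x (gen S p₁ p₂ GenSym.f1) = 1)
    (h2 : chainProd 1000 x (gen S p₁ p₂ GenSym.f2) = 1)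
    (hx1 : x ^ p₁ ≠ 1) (hx2 : x ^ p₂ ≠ 1) :
    x = gen S p₁ p₂ GenSym.b := by
  exact SC.main2 hbig₁ hbig₂ h1 h2 hx1 hx2
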